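/- Under Assumptions A1, A2 and A3, for every compact set A ⊂ ℝ^d, almost surely liminf_{n→∞} inf_{x∈A} (g_n(x) − f(x)) ≥ 0. -/

import Mathlib

open MeasureTheory Filter Metric
open scoped Topology ENNReal NNReal

noncomputable def kb {d : ℕ} (K : EuclideanSpace ℝ (Fin d) → ℝ) (b : ℝ)
    (x : EuclideanSpace ℝ (Fin d)) : ℝ :=
  (b ^ d)⁻¹ * K (b⁻¹ • x)

def natFilt {Ω : Type*} {d : ℕ} (X : ℕ → Ω → EuclideanSpace ℝ (Fin d)) (n : ℕ) :
    MeasurableSpace Ω :=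
  ⨆ i ∈ Finset.Icc 1 n, MeasurableSpace.comap (X i) inferInstance

/-!
Truncate the importance weights so that they are bounded, and replace each kernel contribution to
`g n` by its conditional mean. Chernoff bounds, made uniform over a ball by a fine grid, show that
almost surely this changes `g n` by a factor close to `1` and an error of smaller order than
`λ n ^ (1 - η)`; this is where the rate condition enters. The rest of the argument is pathwise.

A mean contribution is a smoothing of `f ^ η * q ^ (1 - η)` by the kernel. Hence, if
`s * tent ≤ g n` for a small tent on which `f ≥ F`, and `u n` is the total mass of `g n`, the next
mean contribution is at least about `F ^ η * (s / u n) ^ (1 - η) * tent`. The exploration density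
gets this induction started, and writing `s = F * t` it yields
`t (n + 1) ≥ (1 - γ) * t n + γ * (t n / u n) ^ (1 - η)` up to constants close to `1`. The total mass
is asymptotically at most `1` because `∫ f ^ η * q ^ (1 - η) ≤ 1`, so `t` is driven up to the fixed
point `1` of the recursion: `g n` eventually exceeds `f - ε` on compact sets.
-/

namespace Midas

/-! ### Tent functions and rescaled kernels -/

/-- The tent of height `1` at `x`, decreasing linearly to `0` at distance `r`. It is the test
function whose smoothing `tent ^ (1 - η) * K_b` dominates `(1 - ε) • tent` for small `b`. -/
noncomputable def tent {α : Type*} [PseudoMetricSpace α] (x : α) (r : ℝ) (y : α) : ℝ :=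
  max (1 - dist y x / r) 0

section Tent

variable {α : Type*} [PseudoMetricSpace α] {x y : α} {r : ℝ}

lemma tent_nonneg (x : α) (r : ℝ) (y : α) : 0 ≤ tent x r y := le_max_right _ _

lemma tent_le_one (x : α) (hr : 0 ≤ r) (y : α) : tent x r y ≤ 1 :=
  max_le (sub_le_self _ (by positivity)) zero_le_one

lemma tent_self (x : α) (r : ℝ) : tent x r x = 1 := by simp [tent]

lemma tent_eq_zero_of_le_dist (hr : 0 < r) (h : r ≤ dist y x) : tent x r y = 0 :=
  max_eq_right (sub_nonpos.2 ((one_le_div hr).2 h))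

lemma tent_eq_zero_of_notMem_closedBall (hr : 0 < r) (h : y ∉ closedBall x r) :
    tent x r y = 0 :=
  tent_eq_zero_of_le_dist hr (not_le.1 h).le

lemma half_le_tent_two_mul (hr : 0 < r) (h : y ∈ closedBall x r) : 1 / 2 ≤ tent x (2 * r) y := by
  have hdist : dist y x / (2 * r) ≤ 1 / 2 := by
    rw [div_le_iff₀ (by positivity)]
    linarith [mem_closedBall.1 h]
  exact le_max_of_le_left (by linarith)

lemma continuous_tent (x : α) (r : ℝ) : Continuous (tent x r) := by
  unfold tent
  fun_prop

lemma tent_sub_dist_div_le (x : α) (hr : 0 ≤ r) (y z : α) :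
    tent x r y - dist z y / r ≤ tent x r z := by
  have hdist : dist z x / r ≤ dist z y / r + dist y x / r := by
    rw [← add_div]
    gcongr
    exact dist_triangle z y x
  rw [sub_le_iff_le_add]
  refine max_le ?_ (add_nonneg (tent_nonneg x r z) (by positivity))
  linarith [le_max_left (1 - dist z x / r) 0, show tent x r z = max (1 - dist z x / r) 0 from rfl]

lemma tent_rpow_le_one (x : α) (hr : 0 ≤ r) (y : α) {p : ℝ} (hp : 0 ≤ p) :
    tent x r y ^ p ≤ 1 :=
  Real.rpow_le_one (tent_nonneg _ _ _) (tent_le_one _ hr _) hp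

lemma tent_rpow_nonneg (x : α) (r : ℝ) (y : α) (p : ℝ) : 0 ≤ tent x r y ^ p :=
  Real.rpow_nonneg (tent_nonneg _ _ _) _

lemma hasCompactSupport_tent [ProperSpace α] (x : α) (hr : 0 < r) :
    HasCompactSupport (tent x r) :=
  .intro (isCompact_closedBall x r) fun _ ↦ tent_eq_zero_of_notMem_closedBall hr

section Integral

variable [ProperSpace α] [MeasurableSpace α] [OpensMeasurableSpace α] (μ : Measure α)
  [IsFiniteMeasureOnCompacts μ]

lemma integrable_tent (x : α) (hr : 0 < r) : Integrable (tent x r) μ :=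
  (continuous_tent x r).integrable_of_hasCompactSupport (hasCompactSupport_tent x hr)

lemma integral_tent_pos [μ.IsOpenPosMeasure] (x : α) (hr : 0 < r) : 0 < ∫ y, tent x r y ∂μ :=
  (continuous_tent x r).integral_pos_of_hasCompactSupport_nonneg_nonzero
    (hasCompactSupport_tent x hr) (tent_nonneg x r) ((tent_self x r).trans_ne one_ne_zero)

end Integral

end Tent

section TentSmoothing

variable {E : Type*} [NormedAddCommGroup E]

lemma exists_lt_setIntegral_closedBall [MeasurableSpace E] [OpensMeasurableSpace E]
    {μ : Measure E} {K : E → ℝ} (hK : Integrable K μ) {c : ℝ} (hc : c < ∫ v, K v ∂μ) :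
    ∃ R > 0, c < ∫ v in closedBall 0 R, K v ∂μ := by
  have hlim : Tendsto (fun n : ℕ ↦ ∫ v in closedBall (0 : E) n, K v ∂μ) atTop
      (𝓝 (∫ v in ⋃ n : ℕ, closedBall (0 : E) n, K v ∂μ)) :=
    tendsto_setIntegral_of_monotone (fun _ ↦ measurableSet_closedBall)
      (fun _ _ hmn ↦ closedBall_subset_closedBall (by exact_mod_cast hmn)) hK.integrableOn
  rw [iUnion_closedBall_nat, setIntegral_univ] at hlim
  obtain ⟨n, hn, hn0⟩ := ((hlim.eventually (lt_mem_nhds hc)).and (eventually_gt_atTop 0)).exists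
  exact ⟨n, by exact_mod_cast hn0, hn⟩

variable [NormedSpace ℝ E]

lemma exists_ball_tent_shift_ge {x y : E} {r ρ b : ℝ} (hr : 0 < r) (hb : 0 ≤ b) (hρ : 0 ≤ ρ)
    (hxy : 0 < ‖y - x‖) (hyr : ‖y - x‖ ≤ r) (hbρ : b * (ρ / 2) ≤ ‖y - x‖) :
    ∃ v₀ : E, ‖v₀‖ = ρ / 2 ∧
      ∀ v ∈ closedBall v₀ (ρ / 4), b * (ρ / (4 * r)) ≤ tent x r (y - b • v) := by
  set v₀ : E := (ρ / 2 / ‖y - x‖) • (y - x) with hv₀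
  refine ⟨v₀, ?_, fun v hv ↦ le_max_of_le_left ?_⟩
  · rw [hv₀, norm_smul, Real.norm_of_nonneg (by positivity), div_mul_cancel₀ _ hxy.ne']
  have hdecomp : y - b • v - x = (1 - b * (ρ / 2 / ‖y - x‖)) • (y - x) - b • (v - v₀) := by
    rw [hv₀]
    module
  have hcoef : b * (ρ / 2 / ‖y - x‖) ≤ 1 := by
    rwa [← mul_div_assoc, div_le_one hxy]
  have hnorm : ‖y - b • v - x‖ ≤ r - b * ρ / 4 := by
    calc ‖y - b • v - x‖
        ≤ (1 - b * (ρ / 2 / ‖y - x‖)) * ‖y - x‖ + b * ‖v - v₀‖ := by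
          rw [hdecomp]
          refine (norm_sub_le _ _).trans_eq ?_
          rw [norm_smul, norm_smul, Real.norm_of_nonneg hb, Real.norm_of_nonneg (by linarith)]
      _ = ‖y - x‖ - b * (ρ / 2) + b * ‖v - v₀‖ := by field_simp
      _ ≤ r - b * (ρ / 2) + b * (ρ / 4) := by
          gcongr
          exact mem_closedBall_iff_norm.1 hv
      _ = r - b * ρ / 4 := by ring
  rw [dist_eq_norm, le_sub_comm, div_le_iff₀ hr]
  calc ‖y - b • v - x‖ ≤ r - b * ρ / 4 := hnorm
    _ = (1 - b * (ρ / (4 * r))) * r := by field_simp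

variable [MeasurableSpace E] [BorelSpace E] {μ : Measure E}
  {K : E → ℝ} {p r b : ℝ}

lemma integrable_tent_rpow_mul (hK : Integrable K μ) (hp : 0 ≤ p) (hr : 0 ≤ r) (b : ℝ) (x y : E) :
    Integrable (fun v ↦ tent x r (y - b • v) ^ p * K v) μ := by
  have hmeas : Measurable fun v : E ↦ tent x r (y - b • v) ^ p :=
    (((continuous_tent x r).comp (by fun_prop)).rpow_const fun _ ↦ Or.inr hp).measurable
  refine hK.bdd_mul hmeas.aestronglyMeasurable (.of_forall fun v ↦ ?_) (c := 1)
  rw [Real.norm_of_nonneg (tent_rpow_nonneg _ _ _ _)]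
  exact tent_rpow_le_one x hr _ hp

lemma one_sub_mul_tent_le_integral_of_large_tent (hK0 : ∀ v, 0 ≤ K v) (hK : Integrable K μ)
    (hp : 0 ≤ p) (hp1 : p ≤ 1) (hr : 0 < r) (hb : 0 ≤ b) {R ε : ℝ} (hε1 : ε ≤ 1)
    (hR : 1 - ε / 2 ≤ ∫ v in closedBall 0 R, K v ∂μ) {x y : E}
    (hbR : b * R / r ≤ ε / 2 * tent x r y) :
    (1 - ε) * tent x r y ≤ ∫ v, tent x r (y - b • v) ^ p * K v ∂μ := by
  have hInt := integrable_tent_rpow_mul hK hp hr.le b x y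
  have htent := tent_nonneg x r y
  have hshift : ∀ v ∈ closedBall (0 : E) R,
      (1 - ε / 2) * tent x r y ≤ tent x r (y - b • v) ^ p := fun v hv ↦ by
    have hdist : dist (y - b • v) y / r ≤ b * R / r := by
      rw [dist_eq_norm, sub_sub_cancel_left, norm_neg, norm_smul, Real.norm_of_nonneg hb]
      gcongr
      exact mem_closedBall_zero_iff.1 hv
    calc (1 - ε / 2) * tent x r y ≤ tent x r y - dist (y - b • v) y / r := by linarith
      _ ≤ tent x r (y - b • v) := tent_sub_dist_div_le x hr.le _ _
      _ ≤ tent x r (y - b • v) ^ p :=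
        Real.self_le_rpow_of_le_one (tent_nonneg _ _ _) (tent_le_one x hr.le _) hp1
  calc (1 - ε) * tent x r y ≤ (1 - ε / 2) * tent x r y * (1 - ε / 2) := by
        nlinarith [mul_nonneg htent (sq_nonneg ε)]
    _ ≤ (1 - ε / 2) * tent x r y * ∫ v in closedBall 0 R, K v ∂μ := by
        gcongr
        exact mul_nonneg (by linarith) htent
    _ = ∫ v in closedBall 0 R, (1 - ε / 2) * tent x r y * K v ∂μ :=
        (integral_const_mul _ _).symm
    _ ≤ ∫ v in closedBall 0 R, tent x r (y - b • v) ^ p * K v ∂μ :=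
        setIntegral_mono_on (hK.integrableOn.const_mul _) hInt.integrableOn
          measurableSet_closedBall
          fun v hv ↦ mul_le_mul_of_nonneg_right (hshift v hv) (hK0 v)
    _ ≤ ∫ v, tent x r (y - b • v) ^ p * K v ∂μ :=
        setIntegral_le_integral hInt
          (.of_forall fun v ↦ mul_nonneg (tent_rpow_nonneg _ _ _ _) (hK0 v))

variable [FiniteDimensional ℝ E] [μ.IsAddHaarMeasure]

lemma le_integral_tent_rpow_mul_of_kernel_ge (hK0 : ∀ v, 0 ≤ K v) (hK : Integrable K μ)
    (hp : 0 ≤ p) (hr : 0 < r) (hb : 0 ≤ b) {ρ κ : ℝ} (hρ : 0 ≤ ρ) (hκ : 0 ≤ κ)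
    (hκK : ∀ v ∈ closedBall (0 : E) ρ, κ ≤ K v) {x y : E}
    (hxy : 0 < ‖y - x‖) (hyr : ‖y - x‖ ≤ r) (hbρ : b * (ρ / 2) ≤ ‖y - x‖) :
    μ.real (closedBall 0 (ρ / 4)) * ((b * (ρ / (4 * r))) ^ p * κ) ≤
      ∫ v, tent x r (y - b • v) ^ p * K v ∂μ := by
  obtain ⟨v₀, hv₀, htent⟩ := exists_ball_tent_shift_ge hr hb hρ hxy hyr hbρ
  have hInt := integrable_tent_rpow_mul hK hp hr.le b x y
  have hsub : closedBall v₀ (ρ / 4) ⊆ closedBall (0 : E) ρ :=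
    closedBall_subset_closedBall' (by rw [dist_zero_right]; linarith)
  calc μ.real (closedBall 0 (ρ / 4)) * ((b * (ρ / (4 * r))) ^ p * κ)
      = μ.real (closedBall v₀ (ρ / 4)) • ((b * (ρ / (4 * r))) ^ p * κ) := by
        rw [Measure.real, Measure.real, Measure.addHaar_closedBall_center μ v₀, smul_eq_mul]
    _ ≤ ∫ v in closedBall v₀ (ρ / 4), tent x r (y - b • v) ^ p * K v ∂μ := by
        refine setIntegral_ge_of_const_le measurableSet_closedBall measure_closedBall_lt_top.ne
          (fun v hv ↦ ?_) hInt.integrableOn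
        have := htent v hv
        exact mul_le_mul (by gcongr) (hκK v (hsub hv)) hκ (tent_rpow_nonneg _ _ _ _)
    _ ≤ ∫ v, tent x r (y - b • v) ^ p * K v ∂μ :=
        setIntegral_le_integral hInt
          (.of_forall fun v ↦ mul_nonneg (tent_rpow_nonneg _ _ _ _) (hK0 v))

lemma tent_le_integral_of_small_tent (hK0 : ∀ v, 0 ≤ K v) (hK : Integrable K μ) (hp : 0 ≤ p)
    (hr : 0 < r) (hb : 0 ≤ b) {ρ κ : ℝ} (hρ : 0 ≤ ρ) (hbρ : b * ρ ≤ r) (hκ : 0 ≤ κ)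
    (hκK : ∀ v ∈ closedBall (0 : E) ρ, κ ≤ K v) {x y : E} (hhalf : tent x r y ≤ 1 / 2)
    (hle : tent x r y ≤ μ.real (closedBall 0 (ρ / 4)) * ((b * (ρ / (4 * r))) ^ p * κ)) :
    tent x r y ≤ ∫ v, tent x r (y - b • v) ^ p * K v ∂μ := by
  rcases le_or_gt r ‖y - x‖ with hout | hin
  · rw [tent_eq_zero_of_le_dist hr (by rwa [dist_eq_norm])]
    exact integral_nonneg fun v ↦ mul_nonneg (tent_rpow_nonneg _ _ _ _) (hK0 v)
  have hdist : r / 2 ≤ ‖y - x‖ := by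
    have htent : 1 - ‖y - x‖ / r ≤ 1 / 2 := by
      rw [← dist_eq_norm]
      exact (le_max_left _ _).trans hhalf
    rw [sub_le_comm, le_div_iff₀ hr] at htent
    linarith
  exact hle.trans (le_integral_tent_rpow_mul_of_kernel_ge hK0 hK hp hr hb hρ hκ hκK
    (by linarith) hin.le (by linarith))

-- Where the tent is at least of order `b`, the shift by `b • v` costs little. Near the boundary
-- the tent is of order `b`, whereas the right-hand side is of the larger order `b ^ (1 - η)`.
lemma eventually_one_sub_mul_tent_le_integral {η : ℝ} (hη : 0 < η) (hη1 : η ≤ 1)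
    (hK0 : ∀ v, 0 ≤ K v) (hK1 : ∫ v, K v ∂μ = 1) (hKcont : ContinuousAt K 0) (hKpos : 0 < K 0)
    (hr : 0 < r) {ε : ℝ} (hε : 0 < ε) (hε1 : ε ≤ 1) :
    ∀ᶠ b in 𝓝[>] (0 : ℝ), ∀ x y : E,
      (1 - ε) * tent x r y ≤ ∫ v, tent x r (y - b • v) ^ (1 - η) * K v ∂μ := by
  have hK : Integrable K μ := .of_integral_ne_zero (by simp [hK1])
  obtain ⟨R, hR, hKR⟩ := exists_lt_setIntegral_closedBall hK (c := 1 - ε / 2) (by linarith)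
  obtain ⟨ρ, hρ, hκ⟩ := nhds_basis_closedBall.eventually_iff.1
    (hKcont.eventually (lt_mem_nhds (half_lt_self hKpos)))
  set C : ℝ := μ.real (closedBall 0 (ρ / 4)) * (ρ / (4 * r)) ^ (1 - η) * (K 0 / 2) with hC
  have hCpos : 0 < C := by
    have hvol : 0 < μ.real (closedBall 0 (ρ / 4)) :=
      ENNReal.toReal_pos (measure_closedBall_pos μ _ (by positivity)).ne'
        measure_closedBall_lt_top.ne
    positivity
  have hrpow : Tendsto (fun b : ℝ ↦ b ^ η) (𝓝[>] 0) (𝓝 0) := by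
    simpa [Real.zero_rpow hη.ne'] using
      ((Real.continuousAt_rpow_const 0 η (.inr hη.le)).tendsto.mono_left
        (nhdsWithin_le_nhds (s := Set.Ioi 0)))
  have hbR : ∀ᶠ b in 𝓝[>] (0 : ℝ), b < r * ε / (4 * R) :=
    nhdsWithin_le_nhds (gt_mem_nhds (by positivity))
  have hbρ : ∀ᶠ b in 𝓝[>] (0 : ℝ), b < r / ρ := nhdsWithin_le_nhds (gt_mem_nhds (by positivity))
  filter_upwards [self_mem_nhdsWithin,
    hrpow.eventually (gt_mem_nhds (show 0 < C * (r * ε) / (2 * R) by positivity)),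
    hbR, hbρ] with b (hb : 0 < b) hbη hbR hbρ x y
  rcases le_or_gt (2 * b * R / (r * ε)) (tent x r y) with hlarge | hsmall
  · refine one_sub_mul_tent_le_integral_of_large_tent hK0 hK (by linarith) (by linarith) hr hb.le
      hε1 hKR.le ?_
    calc b * R / r = ε / 2 * (2 * b * R / (r * ε)) := by field_simp
      _ ≤ ε / 2 * tent x r y := by gcongr
  have hhalf : 2 * b * R / (r * ε) ≤ 1 / 2 := by
    rw [lt_div_iff₀ (by positivity)] at hbR
    rw [div_le_iff₀ (by positivity)]
    linarith
  refine (mul_le_of_le_one_left (tent_nonneg _ _ _) (by linarith)).trans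
    (tent_le_integral_of_small_tent hK0 hK (by linarith) hr hb.le hρ.le
      ((lt_div_iff₀ hρ).1 hbρ).le (by positivity) (fun v hv ↦ (hκ hv).le)
      (hsmall.le.trans hhalf) ?_)
  calc tent x r y ≤ 2 * b * R / (r * ε) := hsmall.le
    _ = b ^ η * b ^ (1 - η) * (2 * R / (r * ε)) := by
        rw [← Real.rpow_add hb, add_sub_cancel, Real.rpow_one]
        ring
    _ ≤ C * (r * ε) / (2 * R) * b ^ (1 - η) * (2 * R / (r * ε)) := by gcongr
    _ = C * b ^ (1 - η) := by field_simp
    _ = μ.real (closedBall 0 (ρ / 4)) * ((b * (ρ / (4 * r))) ^ (1 - η) * (K 0 / 2)) := by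
        rw [hC, Real.mul_rpow hb.le (by positivity)]
        ring

end TentSmoothing

section RescaledKernel

variable {d : ℕ} {K : EuclideanSpace ℝ (Fin d) → ℝ} {b : ℝ}

lemma kb_nonneg (hK0 : ∀ x, 0 ≤ K x) (hb : 0 ≤ b) (x : EuclideanSpace ℝ (Fin d)) :
    0 ≤ kb K b x :=
  mul_nonneg (by positivity) (hK0 _)

lemma kb_le {C : ℝ} (hK : ∀ x, K x ≤ C) (hb : 0 ≤ b) (x : EuclideanSpace ℝ (Fin d)) :
    kb K b x ≤ (b ^ d)⁻¹ * C :=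
  mul_le_mul_of_nonneg_left (hK _) (by positivity)

lemma continuous_kb (hK : Continuous K) : Continuous (kb K b) := by
  unfold kb
  fun_prop

lemma abs_kb_sub_kb_le {L : ℝ≥0} (hL : LipschitzWith L K) (hb : 0 ≤ b)
    (x y : EuclideanSpace ℝ (Fin d)) :
    |kb K b x - kb K b y| ≤ (b ^ d)⁻¹ * (L * (b⁻¹ * ‖x - y‖)) := by
  have hdist := hL.dist_le_mul (b⁻¹ • x) (b⁻¹ • y)
  rw [Real.dist_eq, dist_eq_norm, ← smul_sub, norm_smul,
    Real.norm_of_nonneg (inv_nonneg.2 hb)] at hdist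
  rw [kb, kb, ← mul_sub, abs_mul, abs_of_nonneg (by positivity : 0 ≤ (b ^ d)⁻¹)]
  gcongr

lemma integral_mul_kb_sub (hb : 0 < b) (h : EuclideanSpace ℝ (Fin d) → ℝ)
    (y : EuclideanSpace ℝ (Fin d)) :
    ∫ z, h z * kb K b (y - z) = ∫ v, h (y - b • v) * K v := by
  have hscale := Measure.integral_comp_inv_smul_of_nonneg volume
    (fun v ↦ h (y - b • v) * K v) hb.le
  simp only [smul_inv_smul₀ hb.ne', finrank_euclideanSpace, Fintype.card_fin,
    smul_eq_mul] at hscale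
  calc ∫ z, h z * kb K b (y - z) = ∫ z, h (y - z) * kb K b z := by
        rw [← integral_sub_left_eq_self (fun z ↦ h z * kb K b (y - z)) volume y]
        simp only [sub_sub_cancel]
    _ = (b ^ d)⁻¹ * ∫ z, h (y - z) * K (b⁻¹ • z) := by
        rw [← integral_const_mul]
        exact integral_congr_ae (.of_forall fun z ↦ mul_left_comm _ _ _)
    _ = ∫ v, h (y - b • v) * K v := by
        rw [hscale, inv_mul_cancel_left₀ (by positivity)]

lemma integral_kb (hK1 : ∫ x, K x = 1) (hb : 0 < b) : ∫ x, kb K b x = 1 := by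
  have h := integral_mul_kb_sub (K := K) hb (fun _ ↦ 1) 0
  simp only [one_mul, hK1] at h
  rwa [integral_sub_left_eq_self (kb K b)] at h

lemma integrable_kb (hK1 : ∫ x, K x = 1) (hb : 0 < b) : Integrable (kb K b) :=
  .of_integral_ne_zero (by simp [integral_kb hK1 hb])

lemma integral_kb_sub (hK1 : ∫ x, K x = 1) (hb : 0 < b) (a : EuclideanSpace ℝ (Fin d)) :
    ∫ x, kb K b (x - a) = 1 := by
  rw [integral_sub_right_eq_self (kb K b) a, integral_kb hK1 hb]

end RescaledKernel

/-! ### Step sizes and the averages they generate -/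

/-- A step size sequence `γ` that behaves well from index `N` on. The inequality `sub_le` says that
`(γ n)⁻¹` grows by at most `1` per step. -/
structure IsStepSize (γ : ℕ → ℝ) (N : ℕ) : Prop where
  pos : ∀ n, 0 < γ n
  le_half : ∀ n, N ≤ n → γ n ≤ 1 / 2
  sub_le : ∀ n, N ≤ n → γ n - γ (n + 1) ≤ γ n * γ (n + 1)
  tendsto_zero : Tendsto γ atTop (𝓝 0)
  not_summable : ¬ Summable γ

/-- The factor by which `u (n + 1) = (1 - γ (n + 1)) * u n` contracts between times `N` and `n`. -/
noncomputable def decay (γ : ℕ → ℝ) (N n : ℕ) : ℝ := ∏ j ∈ Finset.Ico N n, (1 - γ (j + 1))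

/-- The weight, up to the common factor `decay γ N n`, of the `k`-th input in the average of inputs
generated by the step sizes. -/
noncomputable def inputWeight (γ : ℕ → ℝ) (N k : ℕ) : ℝ := γ (k + 1) / decay γ N (k + 1)

/-- The solution of `u (n + 1) = (1 - γ (n + 1)) * u n + γ (n + 1) * v n` with `u N = 0`. -/
noncomputable def stepAvg (γ : ℕ → ℝ) (N : ℕ) (v : ℕ → ℝ) (n : ℕ) : ℝ :=
  decay γ N n * ∑ k ∈ Finset.Ico N n, inputWeight γ N k * v k

lemma decay_self (γ : ℕ → ℝ) (N : ℕ) : decay γ N N = 1 := by simp [decay]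

lemma stepAvg_self (γ : ℕ → ℝ) (N : ℕ) (v : ℕ → ℝ) : stepAvg γ N v N = 0 := by simp [stepAvg]

lemma decay_succ (γ : ℕ → ℝ) {N n : ℕ} (hn : N ≤ n) :
    decay γ N (n + 1) = (1 - γ (n + 1)) * decay γ N n := by
  rw [decay, Finset.prod_Ico_succ_top hn, mul_comm, decay]

namespace IsStepSize

variable {γ : ℕ → ℝ} {N k n : ℕ}

lemma half_le_one_sub (h : IsStepSize γ N) (hn : N ≤ n) : 1 / 2 ≤ 1 - γ (n + 1) := by
  linarith [h.le_half (n + 1) (by omega)]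

lemma decay_pos (h : IsStepSize γ N) (n : ℕ) : 0 < decay γ N n :=
  Finset.prod_pos fun _ hj ↦ by linarith [h.half_le_one_sub (Finset.mem_Ico.1 hj).1]

lemma inputWeight_pos (h : IsStepSize γ N) (k : ℕ) : 0 < inputWeight γ N k :=
  div_pos (h.pos _) (h.decay_pos _)

lemma decay_mul_inputWeight (h : IsStepSize γ N) (n : ℕ) :
    decay γ N (n + 1) * inputWeight γ N n = γ (n + 1) :=
  mul_div_cancel₀ _ (h.decay_pos _).ne'

lemma inputWeight_le_succ (h : IsStepSize γ N) (hk : N ≤ k) :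
    inputWeight γ N k ≤ inputWeight γ N (k + 1) := by
  have hdecay := h.decay_pos (k + 1)
  have hhalf := h.half_le_one_sub (n := k + 1) (by omega)
  rw [inputWeight, inputWeight, decay_succ γ (n := k + 1) (by omega),
    div_le_div_iff₀ hdecay (mul_pos (by linarith) hdecay)]
  nlinarith [h.sub_le (k + 1) (by omega)]

lemma inputWeight_mono (h : IsStepSize γ N) (hk : N ≤ k) (hkn : k ≤ n) :
    inputWeight γ N k ≤ inputWeight γ N n := by
  induction n, hkn using Nat.le_induction with
  | base => exact le_rfl
  | succ n hn ih => exact ih.trans (h.inputWeight_le_succ (by omega))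

lemma decay_mul_inputWeight_le (h : IsStepSize γ N) (hk : N ≤ k) (hkn : k < n) :
    decay γ N n * inputWeight γ N k ≤ γ n := by
  obtain ⟨m, rfl⟩ : ∃ m, n = m + 1 := ⟨n - 1, by omega⟩
  rw [← h.decay_mul_inputWeight m]
  exact mul_le_mul_of_nonneg_left (h.inputWeight_mono hk (by omega)) (h.decay_pos _).le

lemma decay_mul_le_of_recursion (h : IsStepSize γ N) {u : ℕ → ℝ} (hkN : N ≤ k) (hkn : k ≤ n)
    (hu : ∀ j, k ≤ j → j < n → (1 - γ (j + 1)) * u j ≤ u (j + 1)) :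
    decay γ N n * u k ≤ decay γ N k * u n := by
  induction n, hkn using Nat.le_induction with
  | base => exact le_rfl
  | succ n hn ih =>
    have hone := h.half_le_one_sub (hkN.trans hn)
    calc decay γ N (n + 1) * u k = (1 - γ (n + 1)) * (decay γ N n * u k) := by
          rw [decay_succ γ (hkN.trans hn), mul_assoc]
      _ ≤ (1 - γ (n + 1)) * (decay γ N k * u n) :=
          mul_le_mul_of_nonneg_left
            (ih fun j hkj hjn ↦ hu j hkj (hjn.trans n.lt_succ_self)) (by linarith)
      _ = decay γ N k * ((1 - γ (n + 1)) * u n) := mul_left_comm _ _ _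
      _ ≤ decay γ N k * u (n + 1) :=
        mul_le_mul_of_nonneg_left (hu n hn n.lt_succ_self) (h.decay_pos k).le

lemma decay_le (h : IsStepSize γ N) (hn : N ≤ n) : decay γ N n ≤ (γ N)⁻¹ * γ n := by
  have hrec := h.decay_mul_le_of_recursion (u := γ) le_rfl hn
    fun j hj _ ↦ by linarith [h.sub_le j hj]
  rw [decay_self, one_mul] at hrec
  rwa [inv_mul_eq_div, le_div_iff₀ (h.pos N)]

lemma tendsto_decay (h : IsStepSize γ N) : Tendsto (decay γ N) atTop (𝓝 0) := by
  have hlim : Tendsto (fun n ↦ (γ N)⁻¹ * γ n) atTop (𝓝 0) := by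
    simpa using h.tendsto_zero.const_mul (γ N)⁻¹
  refine squeeze_zero' (.of_forall fun n ↦ (h.decay_pos n).le) ?_ hlim
  filter_upwards [eventually_ge_atTop N] with n hn using h.decay_le hn

lemma eventually_mul_decay_le (h : IsStepSize γ N) (C : ℝ) {ε : ℝ} (hε : 0 < ε) :
    ∀ᶠ n in atTop, C * decay γ N n ≤ ε := by
  have hlim : Tendsto (fun n ↦ C * decay γ N n) atTop (𝓝 0) := by
    simpa using h.tendsto_decay.const_mul C
  exact hlim.eventually (ge_mem_nhds hε)

lemma eventually_le_of_recursion (h : IsStepSize γ N) {u : ℕ → ℝ} (hk : N ≤ k)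
    (hu : ∀ n, k ≤ n → u (n + 1) ≤ (1 - γ (n + 1)) * u n) {ε : ℝ} (hε : 0 < ε) :
    ∀ᶠ n in atTop, u n ≤ ε := by
  have hpos := h.decay_pos k
  filter_upwards [h.eventually_mul_decay_le (u k / decay γ N k) hε, eventually_ge_atTop k]
    with n hn hkn
  have hrec := h.decay_mul_le_of_recursion (u := fun n ↦ -u n) hk hkn
    fun j hj _ ↦ by linarith [hu j hj]
  refine le_trans ?_ hn
  rw [div_mul_eq_mul_div, le_div_iff₀ hpos]
  linarith

lemma stepAvg_succ (h : IsStepSize γ N) (v : ℕ → ℝ) (hn : N ≤ n) :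
    stepAvg γ N v (n + 1) = (1 - γ (n + 1)) * stepAvg γ N v n + γ (n + 1) * v n := by
  rw [stepAvg, Finset.sum_Ico_succ_top hn, mul_add, ← mul_assoc (decay γ N (n + 1)) _ (v n),
    h.decay_mul_inputWeight, decay_succ γ hn, mul_assoc, stepAvg]

lemma eq_decay_mul_add_stepAvg (h : IsStepSize γ N) {u v : ℕ → ℝ}
    (hu : ∀ n, N ≤ n → u (n + 1) = (1 - γ (n + 1)) * u n + γ (n + 1) * v n) (hn : N ≤ n) :
    u n = decay γ N n * u N + stepAvg γ N v n := by
  induction n, hn using Nat.le_induction with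
  | base => simp only [decay_self, stepAvg_self, one_mul, add_zero]
  | succ n hn ih =>
    rw [hu n hn, ih, h.stepAvg_succ v hn, decay_succ γ hn]
    ring

lemma stepAvg_const (h : IsStepSize γ N) (c : ℝ) (hn : N ≤ n) :
    stepAvg γ N (fun _ ↦ c) n = c * (1 - decay γ N n) := by
  have := h.eq_decay_mul_add_stepAvg (u := fun _ ↦ c) (v := fun _ ↦ c) (fun n _ ↦ by ring) hn
  linarith

lemma stepAvg_mono (h : IsStepSize γ N) {u v : ℕ → ℝ}
    (huv : ∀ k, N ≤ k → k < n → u k ≤ v k) : stepAvg γ N u n ≤ stepAvg γ N v n := by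
  refine mul_le_mul_of_nonneg_left (Finset.sum_le_sum fun k hk ↦ ?_) (h.decay_pos _).le
  rw [Finset.mem_Ico] at hk
  exact mul_le_mul_of_nonneg_left (huv k hk.1 hk.2) (h.inputWeight_pos _).le

lemma stepAvg_nonneg (h : IsStepSize γ N) {v : ℕ → ℝ} (hv : ∀ k, N ≤ k → 0 ≤ v k) (n : ℕ) :
    0 ≤ stepAvg γ N v n :=
  mul_nonneg (h.decay_pos _).le <| Finset.sum_nonneg fun k hk ↦
    mul_nonneg (h.inputWeight_pos _).le (hv k (Finset.mem_Ico.1 hk).1)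

lemma half_mul_le_stepAvg (h : IsStepSize γ N) {v : ℕ → ℝ} {a : ℝ} (hk : N ≤ k) (hkn : k ≤ n)
    (hdecay : 2 * decay γ N n ≤ decay γ N k) (hv : ∀ j, N ≤ j → 0 ≤ v j) (ha : 0 ≤ a)
    (hav : ∀ j, k ≤ j → j < n → a ≤ v j) : 1 / 2 * a ≤ stepAvg γ N v n := by
  have hrec := h.decay_mul_le_of_recursion (u := fun j ↦ stepAvg γ N v j - a) hk hkn
    fun j hkj hjn ↦ by
      rw [h.stepAvg_succ v (hk.trans hkj)]
      linarith [mul_le_mul_of_nonneg_left (hav j hkj hjn) (h.pos (j + 1)).le]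
  refine le_of_mul_le_mul_left ?_ (h.decay_pos k)
  linarith [mul_nonneg (h.decay_pos n).le (h.stepAvg_nonneg hv k),
    mul_le_mul_of_nonneg_right hdecay ha]

/-! ### Nonlinear recursions -/

lemma exists_lt_sum_Ico (h : IsStepSize γ N) (m : ℕ) (B : ℝ) :
    ∃ n, m ≤ n ∧ B < ∑ k ∈ Finset.Ico m n, γ (k + 1) := by
  have hshift : ¬ Summable fun k ↦ γ (m + k + 1) := by
    simpa only [add_assoc, add_comm m, add_left_comm m] using
      (summable_nat_add_iff (m + 1)).not.2 h.not_summable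
  have hdiv := (not_summable_iff_tendsto_nat_atTop_of_nonneg fun k ↦ (h.pos _).le).1 hshift
  obtain ⟨n, hn⟩ := (hdiv.eventually_gt_atTop B).exists
  refine ⟨m + n, by omega, ?_⟩
  rwa [Finset.sum_Ico_eq_sum_range, Nat.add_sub_cancel_left]

-- As long as `s` stays below `s₀`, it grows by at least `δ * s m * γ (n + 1)` per step.
lemma exists_ge_of_growth (h : IsStepSize γ N) {s : ℕ → ℝ} {m : ℕ} {δ s₀ : ℝ} (hδ : 0 < δ)
    (hs : 0 < s m)
    (hgrowth : ∀ n, m ≤ n → s n < s₀ → s n * (1 + δ * γ (n + 1)) ≤ s (n + 1)) :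
    ∃ n, m ≤ n ∧ s₀ ≤ s n := by
  by_contra! hbelow
  have hlinear : ∀ n, m ≤ n →
      s m ≤ s n ∧ s m + δ * s m * ∑ k ∈ Finset.Ico m n, γ (k + 1) ≤ s n := fun n hn ↦ by
    induction n, hn using Nat.le_induction with
    | base => simp
    | succ n hn ih =>
      rw [Finset.sum_Ico_succ_top hn]
      have hδγ : 0 ≤ δ * γ (n + 1) := mul_nonneg hδ.le (h.pos _).le
      have hstep := hgrowth n hn (hbelow n hn)
      have hinc := mul_le_mul_of_nonneg_right ih.1 hδγ
      have := mul_nonneg hs.le hδγ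
      constructor <;> linarith [ih.1, ih.2]
  obtain ⟨n, hn, hsum⟩ := h.exists_lt_sum_Ico m (s₀ / (δ * s m))
  rw [div_lt_iff₀' (mul_pos hδ hs)] at hsum
  linarith [(hlinear n hn).2, hbelow n hn]

lemma eventually_half_le_of_growth (h : IsStepSize γ N) {p : ℕ → ℝ} {m : ℕ} (hm : N ≤ m)
    {p₀ : ℝ} (hp₀ : 0 < p₀) (hp : 0 < p m)
    (hdecay : ∀ n, m ≤ n → (1 - γ (n + 1)) * p n ≤ p (n + 1))
    (hgrowth : ∀ n, m ≤ n → p n < p₀ → p n * (1 + γ (n + 1)) ≤ p (n + 1)) :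
    ∀ᶠ n in atTop, p₀ / 2 ≤ p n := by
  obtain ⟨n₀, hn₀, hhit⟩ := h.exists_ge_of_growth one_pos hp (s₀ := p₀)
    (by simpa only [one_mul] using hgrowth)
  refine eventually_atTop.2 ⟨n₀, fun n hn ↦ ?_⟩
  induction n, hn using Nat.le_induction with
  | base => linarith
  | succ n hn ih =>
    have hγ := h.pos (n + 1)
    rcases lt_or_ge (p n) p₀ with hlt | hge
    · nlinarith [hgrowth n (by omega) hlt]
    · nlinarith [hdecay n (by omega), h.half_le_one_sub (n := n) (by omega)]

-- `B * s ^ (1 - η)` exceeds `s` exactly below the fixed point `B ^ (1 / η) > s₀`.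
lemma eventually_ge_of_rpow_recursion (h : IsStepSize γ N) {s : ℕ → ℝ} {m : ℕ} (hm : N ≤ m)
    {η B s₀ : ℝ} (hη0 : 0 < η) (hη1 : η ≤ 1) (hs : ∀ n, m ≤ n → 0 < s n)
    (hrec : ∀ n, m ≤ n →
      (1 - γ (n + 1)) * s n + γ (n + 1) * (B * s n ^ (1 - η)) ≤ s (n + 1))
    (hs₀ : 0 < s₀) (hB : s₀ ^ η < B) : ∀ᶠ n in atTop, s₀ ≤ s n := by
  have hs₀η : 0 < s₀ ^ η := Real.rpow_pos_of_pos hs₀ _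
  have hsplit : ∀ x : ℝ, 0 < x → x ^ η * x ^ (1 - η) = x := fun x hx ↦ by
    rw [← Real.rpow_add hx, add_sub_cancel, Real.rpow_one]
  have hgrowth : ∀ n, m ≤ n → s n < s₀ →
      s n * (1 + (B / s₀ ^ η - 1) * γ (n + 1)) ≤ s (n + 1) := fun n hn hlt ↦ by
    have hsn := hs n hn
    have hdrift : B / s₀ ^ η * s n ≤ B * s n ^ (1 - η) := by
      rw [div_mul_eq_mul_div, div_le_iff₀ hs₀η, mul_assoc]
      gcongr
      · exact hs₀η.le.trans hB.le
      calc s n = s n ^ (1 - η) * s n ^ η := by rw [mul_comm, hsplit _ hsn]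
        _ ≤ s n ^ (1 - η) * s₀ ^ η := by gcongr
    linarith [hrec n hn, mul_le_mul_of_nonneg_left hdrift (h.pos (n + 1)).le]
  obtain ⟨n₀, hn₀, hhit⟩ := h.exists_ge_of_growth
    (sub_pos.2 ((one_lt_div hs₀η).2 hB)) (hs m le_rfl) hgrowth
  refine eventually_atTop.2 ⟨n₀, fun n hn ↦ ?_⟩
  induction n, hn using Nat.le_induction with
  | base => exact hhit
  | succ n hn ih =>
    have hdrift : s₀ ≤ B * s n ^ (1 - η) := by
      rw [← hsplit s₀ hs₀]
      have hmono : s₀ ^ (1 - η) ≤ s n ^ (1 - η) := Real.rpow_le_rpow hs₀.le ih (by linarith)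
      exact mul_le_mul hB.le hmono (Real.rpow_nonneg hs₀.le _) (hs₀η.le.trans hB.le)
    have hhalf := h.half_le_one_sub (n := n) (by omega)
    calc s₀ = (1 - γ (n + 1)) * s₀ + γ (n + 1) * s₀ := by ring
      _ ≤ (1 - γ (n + 1)) * s n + γ (n + 1) * (B * s n ^ (1 - η)) := by
        have := (h.pos (n + 1)).le
        gcongr
      _ ≤ s (n + 1) := hrec n (hn₀.trans hn)

end IsStepSize

section GeometricMean

variable {η : ℝ}

lemma one_add_mul_half_le_rpow (hη : 0 ≤ η) {u : ℝ} (hu0 : 0 ≤ u) (hu1 : u ≤ 1) :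
    1 + η * u / 2 ≤ (1 + u) ^ η := by
  have hlog : u / 2 ≤ Real.log (1 + u) := by
    refine le_trans ?_ (Real.one_sub_inv_le_log_of_pos (by linarith))
    have hinv : 1 - (1 + u)⁻¹ = u / (1 + u) := by
      field_simp
      ring
    rw [hinv]
    gcongr
    linarith
  rw [Real.rpow_def_of_pos (by linarith)]
  nlinarith [Real.add_one_le_exp (Real.log (1 + u) * η)]

lemma one_add_le_rpow_mul_rpow (hη0 : 0 < η) {t : ℝ} (ht0 : 0 ≤ t)
    (ht : t * (8 / η) ≤ 1) (ht2 : t ≤ 1 / 2) :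
    1 + t ≤ (1 + t * (8 / η)) ^ η * (1 - t) ^ (1 - η) := by
  calc 1 + t ≤ (1 + η * (t * (8 / η)) / 2) * (1 - t) := by
        rw [show η * (t * (8 / η)) / 2 = 4 * t by field_simp; ring]
        nlinarith
    _ ≤ (1 + t * (8 / η)) ^ η * (1 - t) ^ (1 - η) := by
        gcongr
        · linarith
        · exact one_add_mul_half_le_rpow hη0.le (by positivity) ht
        · exact Real.self_le_rpow_of_le_one (by linarith) (by linarith) (by linarith)

lemma mul_le_rpow_mul_rpow (hη0 : 0 ≤ η) (hη1 : η ≤ 1) {u v s m s' m' : ℝ} (hu : 0 ≤ u)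
    (hv : 0 ≤ v) (hs : 0 ≤ s) (hm : 0 ≤ m) (hs' : u * s ≤ s') (hm' : v * m ≤ m') :
    u ^ η * v ^ (1 - η) * (s ^ η * m ^ (1 - η)) ≤ s' ^ η * m' ^ (1 - η) := by
  calc u ^ η * v ^ (1 - η) * (s ^ η * m ^ (1 - η)) = (u * s) ^ η * (v * m) ^ (1 - η) := by
        rw [Real.mul_rpow hu hs, Real.mul_rpow hv hm]
        ring
    _ ≤ s' ^ η * m' ^ (1 - η) := by
        have : 0 ≤ s' := (mul_nonneg hu hs).trans hs'
        have : 0 ≤ 1 - η := by linarith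
        gcongr

lemma div_rpow_one_sub_eq_div {s m : ℝ} (hs : 0 < s) (hm : 0 ≤ m) :
    (s / m) ^ (1 - η) = s / (s ^ η * m ^ (1 - η)) := by
  rw [Real.div_rpow hs.le hm, Real.rpow_sub hs, Real.rpow_one, div_div]

end GeometricMean

-- The geometric mean `p = s ^ η * m ^ (1 - η)` satisfies `(s / m) ^ (1 - η) = s / p`, so `s` is
-- multiplied by `1 + γ * (8 / η)` whenever `p` is small, which outweighs the decay of `m`.
lemma IsStepSize.exists_le_rpow_mul_rpow {γ : ℕ → ℝ} {N : ℕ} (h : IsStepSize γ N)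
    {s m : ℕ → ℝ} {n₀ : ℕ} (hn₀ : N ≤ n₀) {η β : ℝ} (hη0 : 0 < η) (hη1 : η ≤ 1) (hβ : 0 < β)
    (hs : ∀ n, n₀ ≤ n → 0 < s n) (hm : ∀ n, n₀ ≤ n → 0 < m n)
    (hrec : ∀ n, n₀ ≤ n →
      (1 - γ (n + 1)) * s n + γ (n + 1) * (β * (s n / m n) ^ (1 - η)) ≤ s (n + 1))
    (hmrec : ∀ n, n₀ ≤ n → (1 - γ (n + 1)) * m n ≤ m (n + 1)) :
    ∃ p > 0, ∀ᶠ n in atTop, p ≤ s n ^ η * m n ^ (1 - η) := by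
  set p : ℕ → ℝ := fun n ↦ s n ^ η * m n ^ (1 - η)
  set A : ℝ := 8 / η
  have : 0 < A := by positivity
  obtain ⟨n₁, hγA⟩ := eventually_atTop.1
    ((h.tendsto_zero.mul_const A).eventually (ge_mem_nhds (show 0 * A < 1 by simp)))
  have hppos : ∀ n, n₀ ≤ n → 0 < p n := fun n hn ↦
    mul_pos (Real.rpow_pos_of_pos (hs n hn) _) (Real.rpow_pos_of_pos (hm n hn) _)
  refine ⟨β / (1 + A) / 2, by positivity, h.eventually_half_le_of_growth
    (hn₀.trans (le_max_left n₀ n₁)) (by positivity) (hppos _ (le_max_left _ _)) ?_ ?_⟩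
  all_goals
    intro n hn
    obtain ⟨hn, hn'⟩ := max_le_iff.1 hn
    have hhalf := h.half_le_one_sub (hn₀.trans hn)
    have hγ := h.pos (n + 1)
    have hpn := hppos n hn
    have hsn := hs n hn
  · have hsrec : (1 - γ (n + 1)) * s n ≤ s (n + 1) := by
      refine le_trans (le_add_of_nonneg_right ?_) (hrec n hn)
      have := hm n hn
      positivity
    have := mul_le_rpow_mul_rpow hη0.le hη1 (by linarith) (by linarith) hsn.le (hm n hn).le
      hsrec (hmrec n hn)
    rwa [← Real.rpow_add (by linarith), add_sub_cancel, Real.rpow_one] at this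
  · intro hlt
    have hsrec : (1 + γ (n + 1) * A) * s n ≤ s (n + 1) := by
      have hgain : (1 + A) * s n ≤ β * (s n / p n) := by
        rw [mul_div_assoc', le_div_iff₀ hpn]
        rw [lt_div_iff₀ (by positivity)] at hlt
        nlinarith
      have := hrec n hn
      rw [div_rpow_one_sub_eq_div hsn (hm n hn).le] at this
      linarith [mul_le_mul_of_nonneg_left hgain hγ.le]
    calc p n * (1 + γ (n + 1)) = (1 + γ (n + 1)) * p n := mul_comm _ _
      _ ≤ (1 + γ (n + 1) * A) ^ η * (1 - γ (n + 1)) ^ (1 - η) * p n := by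
        gcongr
        exact one_add_le_rpow_mul_rpow hη0 hγ.le (hγA (n + 1) (by omega)) (by linarith)
      _ ≤ p (n + 1) := mul_le_rpow_mul_rpow hη0.le hη1 (by positivity) (by linarith) hsn.le
        (hm n hn).le hsrec (hmrec n hn)

section Pathwise

/-! ### The setting and the typical paths of the algorithm -/

/-- The state space `ℝ^d` of the algorithm. -/
abbrev Space (d : ℕ) := EuclideanSpace ℝ (Fin d)

/-- The target `f`, the exploration density `q₀`, the kernel `K` and the tuning sequences, with the
properties that hold from index `N` on. The constant `c` is half of the one in `c * f ≤ q₀`, which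
leaves room for slightly negative values of the estimates. -/
structure Setting (d : ℕ) where
  /-- The exponent of the importance weights. -/
  η : ℝ
  /-- The target density. -/
  f : Space d → ℝ
  /-- The exploration density. -/
  q₀ : Space d → ℝ
  /-- The smoothing kernel. -/
  K : Space d → ℝ
  /-- The step sizes. -/
  γ : ℕ → ℝ
  /-- The bandwidths. -/
  b : ℕ → ℝ
  /-- The mixture weights of the exploration density. -/
  lam : ℕ → ℝ
  /-- Half of the domination constant between `f` and `q₀`. -/
  c : ℝ
  /-- The index from which on the asymptotic bounds on the tuning sequences hold. -/
  N : ℕ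
  one_le_dim : 1 ≤ d
  η_pos : 0 < η
  η_lt_one : η < 1
  f_nonneg : ∀ x, 0 ≤ f x
  f_bdd : ∃ C, ∀ x, f x ≤ C
  continuous_f : Continuous f
  integral_f : ∫ x, f x = 1
  q₀_nonneg : ∀ x, 0 ≤ q₀ x
  continuous_q₀ : Continuous q₀
  integral_q₀ : ∫ x, q₀ x = 1
  K_nonneg : ∀ x, 0 ≤ K x
  K_bdd : ∃ C, ∀ x, K x ≤ C
  K_lipschitz : ∃ L, LipschitzWith L K
  integral_K : ∫ x, K x = 1
  K_zero_pos : 0 < K 0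
  isStepSize : IsStepSize γ N
  b_pos : ∀ n, 0 < b n
  b_antitone : Antitone b
  tendsto_b : Tendsto b atTop (𝓝 0)
  b_le_one : ∀ n, N ≤ n → b n ≤ 1
  lam_pos : ∀ n, 0 < lam n
  lam_antitone : Antitone lam
  tendsto_lam : Tendsto lam atTop (𝓝 0)
  lam_le_half : ∀ n, N ≤ n → lam n ≤ 1 / 2
  c_pos : 0 < c
  two_mul_c_mul_f_le : ∀ x, 2 * c * f x ≤ q₀ x
  two_le_N : 2 ≤ N
  inv_le : ∀ n : ℕ, N ≤ n → (n : ℝ)⁻¹ ≤ lam n * b n ^ d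
  tendsto_rate : Tendsto (fun n : ℕ ↦ γ n * Real.log n / (lam n * b n ^ d)) atTop (𝓝 0)

variable {d : ℕ}

lemma div_rpow_mul_self {a p η : ℝ} (ha : 0 ≤ a) (hp : 0 < p) :
    (a / p) ^ η * p = a ^ η * p ^ (1 - η) := by
  rw [Real.div_rpow ha hp.le, Real.rpow_sub hp, Real.rpow_one]
  ring

namespace Setting

variable (S : Setting d)

/-- The level at which the `k`-th importance weight is truncated. It is inactive as long as the
proposal `q` satisfies `c * lam k * f ≤ q`. -/
noncomputable def truncLevel (k : ℕ) : ℝ := (S.c * S.lam (k + 1)) ^ (-S.η)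

/-- The truncated importance weight `(f / p) ^ η` of a proposal drawn from `p` at step `k`. -/
noncomputable def weight (p : Space d → ℝ) (k : ℕ) (y : Space d) : ℝ :=
  min ((S.f y / p y) ^ S.η) (S.truncLevel k)

/-- The truncated contribution to the estimate at `x` of a proposal `y` drawn from `p` at step
`k`. -/
noncomputable def bump (p : Space d → ℝ) (k : ℕ) (x y : Space d) : ℝ :=
  S.weight p k y * kb S.K (S.b (k + 1)) (x - y)

/-- The conditional expectation of `bump` when the proposal has density `p`. -/
noncomputable def meanBump (p : Space d → ℝ) (k : ℕ) (x : Space d) : ℝ :=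
  ∫ y, S.bump p k x y * p y

/-- The average at `x` in which every contribution to the estimate is replaced by its conditional
mean, for proposals drawn from the densities `q k`. -/
noncomputable def meanEstimate (q : ℕ → Space d → ℝ) (n : ℕ) (x : Space d) : ℝ :=
  stepAvg S.γ S.N (fun k ↦ S.meanBump (q k) k x) n

lemma meanEstimate_succ (q : ℕ → Space d → ℝ) {n : ℕ} (hn : S.N ≤ n) (x : Space d) :
    S.meanEstimate q (n + 1) x =
      (1 - S.γ (n + 1)) * S.meanEstimate q n x + S.γ (n + 1) * S.meanBump (q n) n x :=
  S.isStepSize.stepAvg_succ _ hn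

lemma continuous_K : Continuous S.K := S.K_lipschitz.elim fun _ hL ↦ hL.continuous

lemma integrable_f : Integrable S.f := .of_integral_ne_zero (by simp [S.integral_f])

lemma integrable_q₀ : Integrable S.q₀ := .of_integral_ne_zero (by simp [S.integral_q₀])

lemma truncLevel_pos (k : ℕ) : 0 < S.truncLevel k :=
  Real.rpow_pos_of_pos (mul_pos S.c_pos (S.lam_pos _)) _

lemma lam_le_rpow {n : ℕ} (hn : S.N ≤ n) : S.lam n ≤ S.lam n ^ (1 - S.η) :=
  Real.self_le_rpow_of_le_one (S.lam_pos n).le (by linarith [S.lam_le_half n hn])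
    (by linarith [S.η_pos])

lemma tendsto_γ_div_lam : Tendsto (fun n ↦ S.γ n / S.lam n) atTop (𝓝 0) := by
  refine squeeze_zero' (.of_forall fun n ↦ (div_pos (S.isStepSize.pos n) (S.lam_pos n)).le) ?_
    S.tendsto_rate
  filter_upwards [eventually_ge_atTop 3, eventually_ge_atTop S.N] with n hn3 hn
  have hγ := S.isStepSize.pos n
  have hlam := S.lam_pos n
  have hb := S.b_pos n
  have hlog : 1 ≤ Real.log n := by
    have : (3 : ℝ) ≤ n := by exact_mod_cast hn3
    rw [Real.le_log_iff_exp_le (by positivity)]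
    linarith [Real.exp_one_lt_d9]
  gcongr
  · exact le_mul_of_one_le_right hγ.le hlog
  · exact mul_le_of_le_one_right hlam.le (pow_le_one₀ hb.le (S.b_le_one n hn))

lemma eventually_decay_le_mul_lam {ε : ℝ} (hε : 0 < ε) :
    ∀ᶠ n in atTop, decay S.γ S.N n ≤ ε * S.lam n := by
  have hlim : Tendsto (fun n ↦ (S.γ S.N)⁻¹ * (S.γ n / S.lam n)) atTop (𝓝 0) := by
    simpa using S.tendsto_γ_div_lam.const_mul (S.γ S.N)⁻¹
  filter_upwards [hlim.eventually (ge_mem_nhds hε), eventually_ge_atTop S.N] with n hn hnN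
  rw [← mul_div_assoc, div_le_iff₀ (S.lam_pos n)] at hn
  exact (S.isStepSize.decay_le hnN).trans hn

variable {S} {p : Space d → ℝ} {k : ℕ}

lemma weight_nonneg (hp : ∀ y, 0 ≤ p y) (k : ℕ) (y : Space d) : 0 ≤ S.weight p k y :=
  le_min (Real.rpow_nonneg (div_nonneg (S.f_nonneg y) (hp y)) _) (S.truncLevel_pos k).le

lemma weight_le_truncLevel (p : Space d → ℝ) (k : ℕ) (y : Space d) :
    S.weight p k y ≤ S.truncLevel k :=
  min_le_right _ _

lemma weight_le_rpow (p : Space d → ℝ) (k : ℕ) (y : Space d) :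
    S.weight p k y ≤ (S.f y / p y) ^ S.η :=
  min_le_left _ _

lemma weight_eq_rpow_of_mul_le {y : Space d} (hfy : 0 < S.f y)
    (hp : S.c * S.lam k * S.f y ≤ p y) : S.weight p k y = (S.f y / p y) ^ S.η := by
  have hclam : 0 < S.c * S.lam (k + 1) := mul_pos S.c_pos (S.lam_pos _)
  have hpy : S.c * S.lam (k + 1) * S.f y ≤ p y := by
    refine le_trans ?_ hp
    have := S.c_pos.le
    gcongr
    exact S.lam_antitone k.le_succ
  have hppos : 0 < p y := (mul_pos hclam hfy).trans_le hpy
  refine min_eq_left ?_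
  rw [truncLevel, Real.rpow_neg hclam.le, ← Real.inv_rpow hclam.le]
  refine Real.rpow_le_rpow (div_pos hfy hppos).le ?_ S.η_pos.le
  rwa [div_le_iff₀ hppos, inv_mul_eq_div, le_div_iff₀' hclam]

lemma aestronglyMeasurable_weight (hp : AEStronglyMeasurable p) (k : ℕ) :
    AEStronglyMeasurable (S.weight p k) := by
  have hf := S.continuous_f.measurable
  have := hp.aemeasurable
  exact AEMeasurable.aestronglyMeasurable
    (AEMeasurable.min (by fun_prop) aemeasurable_const)

lemma bump_nonneg (hp : ∀ y, 0 ≤ p y) (k : ℕ) (x y : Space d) : 0 ≤ S.bump p k x y :=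
  mul_nonneg (weight_nonneg hp k y) (kb_nonneg S.K_nonneg (S.b_pos _).le _)

lemma integrable_bump_mul (hp : Integrable p) (hp0 : ∀ y, 0 ≤ p y) (k : ℕ) (x : Space d) :
    Integrable fun y ↦ S.bump p k x y * p y := by
  obtain ⟨C, hC⟩ := S.K_bdd
  have hkb : Continuous fun y ↦ kb S.K (S.b (k + 1)) (x - y) :=
    (continuous_kb S.continuous_K).comp (continuous_const.sub continuous_id)
  refine hp.bdd_mul (c := S.truncLevel k * ((S.b (k + 1) ^ d)⁻¹ * C))
    ((aestronglyMeasurable_weight hp.1 k).mul hkb.aestronglyMeasurable) (.of_forall fun y ↦ ?_)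
  rw [Real.norm_of_nonneg (bump_nonneg hp0 k x y)]
  exact mul_le_mul (weight_le_truncLevel p k y) (kb_le hC (S.b_pos _).le _)
    (kb_nonneg S.K_nonneg (S.b_pos _).le _) (S.truncLevel_pos k).le

lemma meanBump_nonneg (hp : ∀ y, 0 ≤ p y) (k : ℕ) (x : Space d) : 0 ≤ S.meanBump p k x :=
  integral_nonneg fun y ↦ mul_nonneg (bump_nonneg hp k x y) (hp y)

lemma rpow_mul_tent_rpow_mul_kb_le_bump_mul (hp0 : ∀ y, 0 ≤ p y) {r F θ : ℝ} (hr : 0 < r)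
    (hF : 0 < F) (hθ : 0 ≤ θ) {x z : Space d} (hf : z ∈ closedBall x r → F ≤ S.f z)
    (hpf : z ∈ closedBall x r → S.c * S.lam k * S.f z ≤ p z)
    (hpθ : z ∈ closedBall x r → θ * tent x r z ≤ p z) (y : Space d) :
    F ^ S.η * θ ^ (1 - S.η) * (tent x r z ^ (1 - S.η) * kb S.K (S.b (k + 1)) (y - z)) ≤
      S.bump p k y z * p z := by
  have hη : 0 < 1 - S.η := by linarith [S.η_lt_one]
  have hkb := kb_nonneg S.K_nonneg (S.b_pos (k + 1)).le (y - z)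
  by_cases hz : z ∈ closedBall x r
  · have hfz : 0 < S.f z := hF.trans_le (hf hz)
    have hpz : 0 < p z :=
      (mul_pos (mul_pos S.c_pos (S.lam_pos k)) hfz).trans_le (hpf hz)
    have htent := tent_nonneg x r z
    calc F ^ S.η * θ ^ (1 - S.η) * (tent x r z ^ (1 - S.η) * kb S.K (S.b (k + 1)) (y - z))
        = F ^ S.η * (θ * tent x r z) ^ (1 - S.η) * kb S.K (S.b (k + 1)) (y - z) := by
          rw [Real.mul_rpow hθ htent]
          ring
      _ ≤ S.f z ^ S.η * p z ^ (1 - S.η) * kb S.K (S.b (k + 1)) (y - z) := by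
          have := S.η_pos.le
          gcongr
          exacts [hf hz, hpθ hz]
      _ = S.bump p k y z * p z := by
          rw [bump, weight_eq_rpow_of_mul_le hfz (hpf hz), ← div_rpow_mul_self hfz.le hpz]
          ring
  · rw [tent_eq_zero_of_notMem_closedBall hr hz, Real.zero_rpow hη.ne', zero_mul, mul_zero]
    exact mul_nonneg (bump_nonneg hp0 k y z) (hp0 z)

lemma eventually_rpow_mul_tent_le_meanBump (S : Setting d) {r ε : ℝ} (hr : 0 < r) (hε : 0 < ε)
    (hε1 : ε ≤ 1) :
    ∀ᶠ k in atTop, ∀ p : Space d → ℝ, Integrable p → (∀ y, 0 ≤ p y) →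
      ∀ (x : Space d) (F θ : ℝ), 0 < F → 0 ≤ θ →
      (∀ z ∈ closedBall x r,
        F ≤ S.f z ∧ S.c * S.lam k * S.f z ≤ p z ∧ θ * tent x r z ≤ p z) →
      ∀ y, F ^ S.η * θ ^ (1 - S.η) * ((1 - ε) * tent x r y) ≤ S.meanBump p k y := by
  have hb : Tendsto (fun k ↦ S.b (k + 1)) atTop (𝓝[>] 0) :=
    tendsto_nhdsWithin_iff.2 ⟨(tendsto_add_atTop_iff_nat 1).2 S.tendsto_b,
      .of_forall fun k ↦ S.b_pos (k + 1)⟩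
  filter_upwards [hb.eventually (eventually_one_sub_mul_tent_le_integral S.η_pos S.η_lt_one.le
    S.K_nonneg S.integral_K S.continuous_K.continuousAt S.K_zero_pos hr hε hε1)]
    with k hk p hp hp0 x F θ hF hθ hball y
  have hFθ : 0 ≤ F ^ S.η * θ ^ (1 - S.η) := by positivity
  calc F ^ S.η * θ ^ (1 - S.η) * ((1 - ε) * tent x r y)
      ≤ F ^ S.η * θ ^ (1 - S.η) *
          ∫ z, tent x r z ^ (1 - S.η) * kb S.K (S.b (k + 1)) (y - z) := by
        rw [integral_mul_kb_sub (S.b_pos _)]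
        exact mul_le_mul_of_nonneg_left (hk x y) hFθ
    _ ≤ S.meanBump p k y := by
        rw [← integral_const_mul]
        refine integral_mono_of_nonneg (.of_forall fun z ↦ mul_nonneg hFθ (mul_nonneg
          (tent_rpow_nonneg _ _ _ _) (kb_nonneg S.K_nonneg (S.b_pos _).le _)))
          (integrable_bump_mul hp hp0 k y) (.of_forall fun z ↦ ?_)
        exact rpow_mul_tent_rpow_mul_kb_le_bump_mul hp0 hr hF hθ (fun hz ↦ (hball z hz).1)
          (fun hz ↦ (hball z hz).2.1) (fun hz ↦ (hball z hz).2.2) y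

end Setting

/-- The properties of a realization of the algorithm that hold almost surely from index `N` on.
The estimates `g n` may take negative values, because `γ n > 1` is possible for small `n`. -/
structure IsTypicalPath (S : Setting d) (g q : ℕ → Space d → ℝ) (X : ℕ → Space d) : Prop where
  g_succ : ∀ n, S.N ≤ n → ∀ x, g (n + 1) x = (1 - S.γ (n + 1)) * g n x + S.γ (n + 1) *
    ((S.f (X (n + 1)) / q n (X (n + 1))) ^ S.η * kb S.K (S.b (n + 1)) (x - X (n + 1)))
  q_eq : ∀ n, S.N ≤ n → ∀ x,
    q n x = (1 - S.lam n) * (g n x / ∫ y, g n y) + S.lam n * S.q₀ x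
  q_nonneg : ∀ n, S.N ≤ n → ∀ x, 0 ≤ q n x
  integral_g_ne_zero : ∀ n, S.N ≤ n → ∫ y, g n y ≠ 0
  continuous_g : ∀ n, S.N ≤ n → Continuous (g n)
  integrable_g : ∀ n, S.N ≤ n → Integrable (g n)
  exists_neg_le : ∃ C > 0, ∀ x, -C ≤ g S.N x
  eventually_bump_ge : ∀ R : ℝ, ∀ ε > 0, ∀ᶠ n in atTop, ∀ x, ‖x‖ ≤ R →
    (1 - ε) * S.meanEstimate q n x - ε * S.lam n ^ (1 - S.η) ≤
      stepAvg S.γ S.N (fun k ↦ S.bump (q k) k x (X (k + 1))) n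
  eventually_weight_le : ∀ ε > 0, ∀ᶠ n in atTop,
    stepAvg S.γ S.N (fun k ↦ S.weight (q k) k (X (k + 1))) n ≤
      (1 + ε) * stepAvg S.γ S.N (fun k ↦ ∫ y, S.weight (q k) k y * q k y) n + ε
  exists_f_pos_and_g_nonneg : ∀ n, S.N ≤ n → 0 < ∫ y, g n y →
    ∃ x, 0 < S.f x ∧ ∀ᶠ y in 𝓝 x, 0 ≤ g n y

namespace IsTypicalPath

variable {S : Setting d} {g q : ℕ → Space d → ℝ} {X : ℕ → Space d} {m n : ℕ}

lemma q_eq_fun (P : IsTypicalPath S g q X) (hn : S.N ≤ n) :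
    q n = fun x ↦ (1 - S.lam n) * (g n x / ∫ y, g n y) + S.lam n * S.q₀ x :=
  funext (P.q_eq n hn)

lemma continuous_q (P : IsTypicalPath S g q X) (hn : S.N ≤ n) : Continuous (q n) := by
  have hg := P.continuous_g n hn
  have hq₀ := S.continuous_q₀
  rw [P.q_eq_fun hn]
  fun_prop

lemma integrable_q (P : IsTypicalPath S g q X) (hn : S.N ≤ n) : Integrable (q n) := by
  rw [P.q_eq_fun hn]
  exact (((P.integrable_g n hn).div_const _).const_mul _).add (S.integrable_q₀.const_mul _)

lemma integral_q (P : IsTypicalPath S g q X) (hn : S.N ≤ n) : ∫ x, q n x = 1 := by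
  rw [P.q_eq_fun hn, integral_add (((P.integrable_g n hn).div_const _).const_mul _)
    (S.integrable_q₀.const_mul _), integral_const_mul, integral_const_mul, integral_div,
    div_self (P.integral_g_ne_zero n hn), S.integral_q₀]
  ring

lemma importanceWeight_nonneg (P : IsTypicalPath S g q X) (hn : S.N ≤ n) :
    0 ≤ (S.f (X (n + 1)) / q n (X (n + 1))) ^ S.η :=
  Real.rpow_nonneg (div_nonneg (S.f_nonneg _) (P.q_nonneg n hn _)) _

lemma one_sub_mul_g_le (P : IsTypicalPath S g q X) (hn : S.N ≤ n) (x : Space d) :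
    (1 - S.γ (n + 1)) * g n x ≤ g (n + 1) x := by
  rw [P.g_succ n hn x]
  exact le_add_of_nonneg_right (mul_nonneg (S.isStepSize.pos _).le
    (mul_nonneg (P.importanceWeight_nonneg hn) (kb_nonneg S.K_nonneg (S.b_pos _).le _)))

lemma decay_mul_g_le (P : IsTypicalPath S g q X) (hm : S.N ≤ m) (hmn : m ≤ n) (x : Space d) :
    decay S.γ S.N n * g m x ≤ decay S.γ S.N m * g n x :=
  S.isStepSize.decay_mul_le_of_recursion (u := fun n ↦ g n x) hm hmn
    fun _ hj _ ↦ P.one_sub_mul_g_le (hm.trans hj) x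

lemma g_nonneg_of_le (P : IsTypicalPath S g q X) (hm : S.N ≤ m) (hmn : m ≤ n) {x : Space d}
    (hx : 0 ≤ g m x) : 0 ≤ g n x :=
  nonneg_of_mul_nonneg_right
    ((mul_nonneg (S.isStepSize.decay_pos n).le hx).trans (P.decay_mul_g_le hm hmn x))
    (S.isStepSize.decay_pos m)

lemma integral_g_succ (P : IsTypicalPath S g q X) (hn : S.N ≤ n) :
    ∫ x, g (n + 1) x = (1 - S.γ (n + 1)) * (∫ x, g n x) +
      S.γ (n + 1) * (S.f (X (n + 1)) / q n (X (n + 1))) ^ S.η := by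
  have hkb : Integrable fun x ↦ kb S.K (S.b (n + 1)) (x - X (n + 1)) :=
    (integrable_kb S.integral_K (S.b_pos _)).comp_sub_right _
  rw [funext (P.g_succ n hn), integral_add ((P.integrable_g n hn).const_mul _)
    ((hkb.const_mul _).const_mul _), integral_const_mul, integral_const_mul, integral_const_mul,
    integral_kb_sub S.integral_K (S.b_pos _), mul_one]

lemma one_sub_mul_integral_g_le (P : IsTypicalPath S g q X) (hn : S.N ≤ n) :
    (1 - S.γ (n + 1)) * (∫ x, g n x) ≤ ∫ x, g (n + 1) x := by
  rw [P.integral_g_succ hn]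
  exact le_add_of_nonneg_right
    (mul_nonneg (S.isStepSize.pos _).le (P.importanceWeight_nonneg hn))

lemma decay_mul_integral_g_le (P : IsTypicalPath S g q X) (hm : S.N ≤ m) (hmn : m ≤ n) :
    decay S.γ S.N n * (∫ x, g m x) ≤ decay S.γ S.N m * ∫ x, g n x :=
  S.isStepSize.decay_mul_le_of_recursion (u := fun n ↦ ∫ x, g n x) hm hmn
    fun _ hj _ ↦ P.one_sub_mul_integral_g_le (hm.trans hj)

lemma integral_g_pos_of_le (P : IsTypicalPath S g q X) (hm : S.N ≤ m) (hmn : m ≤ n)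
    (h : 0 < ∫ x, g m x) : 0 < ∫ x, g n x :=
  pos_of_mul_pos_right
    ((mul_pos (S.isStepSize.decay_pos n) h).trans_le (P.decay_mul_integral_g_le hm hmn))
    (S.isStepSize.decay_pos m).le

lemma decay_mul_g_add_stepAvg_bump_le (P : IsTypicalPath S g q X) (hn : S.N ≤ n) (x : Space d) :
    decay S.γ S.N n * g S.N x + stepAvg S.γ S.N (fun k ↦ S.bump (q k) k x (X (k + 1))) n ≤
      g n x := by
  rw [S.isStepSize.eq_decay_mul_add_stepAvg (u := fun n ↦ g n x) (fun n hn ↦ P.g_succ n hn x) hn]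
  gcongr
  exact S.isStepSize.stepAvg_mono fun k _ _ ↦
    mul_le_mul_of_nonneg_right (Setting.weight_le_rpow _ k _)
      (kb_nonneg S.K_nonneg (S.b_pos _).le _)

lemma meanEstimate_nonneg (P : IsTypicalPath S g q X) (n : ℕ) (x : Space d) :
    0 ≤ S.meanEstimate q n x :=
  S.isStepSize.stepAvg_nonneg (fun k hk ↦ Setting.meanBump_nonneg (P.q_nonneg k hk) k x) n

end IsTypicalPath

/-! ### Lower bounds near well explored points -/

lemma exists_pos_seq_of_succ {F : ℕ → ℝ → ℝ} {m : ℕ} (hF : ∀ n, m ≤ n → ∀ t, 0 < t → 0 < F n t)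
    {a : ℝ} (ha : 0 < a) :
    ∃ s : ℕ → ℝ, s m = a ∧ (∀ n, m ≤ n → s (n + 1) = F n (s n)) ∧ ∀ n, m ≤ n → 0 < s n := by
  obtain ⟨s, hsm, hs⟩ : ∃ s : ℕ → ℝ, s m = a ∧ ∀ n, m ≤ n → s (n + 1) = F n (s n) := by
    refine ⟨fun n ↦ Nat.rec a (fun j ↦ F (m + j)) (n - m), by simp, fun n hn ↦ ?_⟩
    obtain ⟨j, rfl⟩ := Nat.exists_eq_add_of_le hn
    simp only [Nat.add_assoc, Nat.add_sub_cancel_left]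
  refine ⟨s, hsm, hs, fun n hn ↦ ?_⟩
  induction n, hn using Nat.le_induction with
  | base => exact hsm ▸ ha
  | succ n hn ih => exact hs n hn ▸ hF n hn _ ih

lemma rpow_mul_mul_rpow_one_sub {a F : ℝ} (ha : 0 ≤ a) (hF : 0 < F) (η : ℝ) :
    F ^ η * (a * F) ^ (1 - η) = F * a ^ (1 - η) := by
  rw [Real.mul_rpow ha hF.le, mul_left_comm, ← Real.rpow_add hF, add_sub_cancel, Real.rpow_one,
    mul_comm]

variable {S : Setting d} {g q : ℕ → Space d → ℝ} {X : ℕ → Space d} {m n : ℕ}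

namespace IsTypicalPath

lemma eventually_meanEstimate_sub_le_g (P : IsTypicalPath S g q X) (R : ℝ) {ε : ℝ} (hε : 0 < ε) :
    ∀ᶠ n in atTop, ∀ y, ‖y‖ ≤ R →
      (1 - ε) * S.meanEstimate q n y - ε * S.lam n ^ (1 - S.η) ≤ g n y := by
  obtain ⟨C, hC, hgC⟩ := P.exists_neg_le
  filter_upwards [P.eventually_bump_ge R (ε / 2) (by positivity), eventually_ge_atTop S.N,
    S.eventually_decay_le_mul_lam (show 0 < ε / 2 / C by positivity)] with n hbump hn hdecay y hy
  have hstart : -(ε / 2 * S.lam n ^ (1 - S.η)) ≤ decay S.γ S.N n * g S.N y :=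
    calc -(ε / 2 * S.lam n ^ (1 - S.η)) ≤ -(ε / 2 * S.lam n) := by
          gcongr
          exact S.lam_le_rpow hn
      _ = -(ε / 2 / C * S.lam n * C) := by field_simp
      _ ≤ -(decay S.γ S.N n * C) := by gcongr
      _ = decay S.γ S.N n * -C := by ring
      _ ≤ decay S.γ S.N n * g S.N y :=
        mul_le_mul_of_nonneg_left (hgC y) (S.isStepSize.decay_pos n).le
  linarith [P.decay_mul_g_add_stepAvg_bump_le hn y, hbump y hy,
    mul_nonneg hε.le (P.meanEstimate_nonneg n y)]

lemma one_sub_mul_div_le_q (P : IsTypicalPath S g q X) (hn : S.N ≤ n) (hpos : 0 < ∫ x, g n x)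
    {ε a : ℝ} (hlam : S.lam n ≤ ε) (ha : 0 ≤ a) {z : Space d} (haz : a ≤ g n z) :
    (1 - ε) * (a / ∫ x, g n x) ≤ q n z := by
  rw [P.q_eq n hn z]
  have hlam_half := S.lam_le_half n hn
  calc (1 - ε) * (a / ∫ x, g n x) ≤ (1 - S.lam n) * (g n z / ∫ x, g n x) := by
        gcongr
        linarith
    _ ≤ _ := le_add_of_nonneg_right (mul_nonneg (S.lam_pos n).le (S.q₀_nonneg z))

end IsTypicalPath

lemma Setting.mul_le_meanEstimate_of_succ_eq (S : Setting d) {s a : ℕ → ℝ} {T : Space d → ℝ}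
    {B : Set (Space d)} {k : ℕ} (hk : S.N ≤ k)
    (hs : ∀ n, k ≤ n → s (n + 1) = (1 - S.γ (n + 1)) * s n + S.γ (n + 1) * a n)
    (hbase : ∀ y ∈ B, s k * T y ≤ S.meanEstimate q k y)
    (hstep : ∀ n, k ≤ n → (∀ y ∈ B, s n * T y ≤ S.meanEstimate q n y) →
      ∀ y ∈ B, a n * T y ≤ S.meanBump (q n) n y)
    (hkn : k ≤ n) : ∀ y ∈ B, s n * T y ≤ S.meanEstimate q n y := by
  induction n, hkn using Nat.le_induction with
  | base => exact hbase
  | succ n hkn ih =>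
    intro y hy
    have hN := hk.trans hkn
    have hγ : 0 ≤ 1 - S.γ (n + 1) := by linarith [S.isStepSize.half_le_one_sub hN]
    rw [S.meanEstimate_succ q hN, hs n hkn]
    linarith [mul_le_mul_of_nonneg_left (hstep n hkn ih y hy) (S.isStepSize.pos (n + 1)).le,
      mul_le_mul_of_nonneg_left (ih y hy) hγ]

/-- From index `m` on, the proposals `q n` explore the balls of radius `2 * r` around the points
`x` of the bounded set `A`, on which the target is at least `F x ≥ F₀ > 0`. -/
structure IsExplored (S : Setting d) (q : ℕ → Space d → ℝ) (A : Set (Space d))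
    (F : Space d → ℝ) (F₀ r : ℝ) (m : ℕ) : Prop where
  N_le : S.N ≤ m
  F₀_pos : 0 < F₀
  r_pos : 0 < r
  isBounded : Bornology.IsBounded A
  le_F : ∀ x ∈ A, F₀ ≤ F x
  F_le_f : ∀ x ∈ A, ∀ z ∈ closedBall x (2 * r), F x ≤ S.f z
  mul_f_le_q : ∀ x ∈ A, ∀ z ∈ closedBall x (2 * r), ∀ n, m ≤ n → S.c * S.lam n * S.f z ≤ q n z

namespace IsExplored

variable {A : Set (Space d)} {F : Space d → ℝ} {F₀ r ε : ℝ}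

lemma F_pos (H : IsExplored S q A F F₀ r m) {x : Space d} (hx : x ∈ A) : 0 < F x :=
  H.F₀_pos.trans_le (H.le_F x hx)

lemma eventually_mul_lam_rpow_le_meanBump (H : IsExplored S q A F F₀ r m)
    (P : IsTypicalPath S g q X) :
    ∀ᶠ k in atTop, ∀ x ∈ A, ∀ y ∈ closedBall x r,
      S.c ^ (1 - S.η) / 4 * F x * S.lam k ^ (1 - S.η) ≤ S.meanBump (q k) k y := by
  filter_upwards [S.eventually_rpow_mul_tent_le_meanBump (mul_pos two_pos H.r_pos) one_half_pos
    one_half_lt_one.le, eventually_ge_atTop m] with k hk hmk x hx y hy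
  have hF := H.F_pos hx
  have hclam : 0 < S.c * S.lam k := mul_pos S.c_pos (S.lam_pos k)
  have hmean := hk (q k) (P.integrable_q (H.N_le.trans hmk)) (P.q_nonneg k (H.N_le.trans hmk)) x
    (F x) (S.c * S.lam k * F x) hF (by positivity) (fun z hz ↦ ?_) y
  · rw [rpow_mul_mul_rpow_one_sub hclam.le hF, Real.mul_rpow S.c_pos.le (S.lam_pos k).le] at hmean
    refine le_trans ?_ hmean
    have hc := Real.rpow_pos_of_pos S.c_pos (1 - S.η)
    have hlam := Real.rpow_pos_of_pos (S.lam_pos k) (1 - S.η)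
    calc S.c ^ (1 - S.η) / 4 * F x * S.lam k ^ (1 - S.η)
        = F x * (S.c ^ (1 - S.η) * S.lam k ^ (1 - S.η)) * ((1 - 1 / 2) * (1 / 2)) := by ring
      _ ≤ _ := by
        gcongr
        exact half_le_tent_two_mul H.r_pos hy
  · refine ⟨H.F_le_f x hx z hz, H.mul_f_le_q x hx z hz k hmk, ?_⟩
    calc S.c * S.lam k * F x * tent x (2 * r) z ≤ S.c * S.lam k * F x :=
          mul_le_of_le_one_right (by positivity)
            (tent_le_one x (mul_pos two_pos H.r_pos).le z)
      _ ≤ S.c * S.lam k * S.f z := by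
        gcongr
        exact H.F_le_f x hx z hz
      _ ≤ q k z := H.mul_f_le_q x hx z hz k hmk

lemma exists_mul_lam_rpow_le_meanEstimate (H : IsExplored S q A F F₀ r m)
    (P : IsTypicalPath S g q X) :
    ∃ e > 0, ∀ᶠ n in atTop, ∀ x ∈ A, ∀ y ∈ closedBall x r,
      e * F x * S.lam n ^ (1 - S.η) ≤ S.meanEstimate q n y := by
  obtain ⟨k, hk⟩ := eventually_atTop.1 ((H.eventually_mul_lam_rpow_le_meanBump P).and
    (eventually_ge_atTop S.N))
  have hNk : S.N ≤ k := (hk k le_rfl).2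
  have hc := Real.rpow_pos_of_pos S.c_pos (1 - S.η)
  refine ⟨1 / 2 * (S.c ^ (1 - S.η) / 4), by positivity, ?_⟩
  filter_upwards [S.isStepSize.eventually_mul_decay_le 2 (S.isStepSize.decay_pos k),
    eventually_ge_atTop k] with n hdecay hkn x hx y hy
  have hF := H.F_pos hx
  have hlam := Real.rpow_pos_of_pos (S.lam_pos n) (1 - S.η)
  have hhalf := S.isStepSize.half_mul_le_stepAvg (v := fun k ↦ S.meanBump (q k) k y)
    (a := S.c ^ (1 - S.η) / 4 * F x * S.lam n ^ (1 - S.η)) hNk hkn hdecay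
    (fun j hj ↦ Setting.meanBump_nonneg (P.q_nonneg j hj) j y) (by positivity)
    fun j hkj hjn ↦ le_trans ?_ ((hk j hkj).1 x hx y hy)
  · simpa only [Setting.meanEstimate, mul_assoc] using hhalf
  · have := (S.lam_pos n).le
    have := S.η_lt_one
    gcongr
    exact S.lam_antitone hjn.le

lemma eventually_one_sub_mul_meanEstimate_le_g (H : IsExplored S q A F F₀ r m)
    (P : IsTypicalPath S g q X) (hε : 0 < ε) :
    ∀ᶠ n in atTop, ∀ x ∈ A, ∀ y ∈ closedBall x r, (1 - ε) * S.meanEstimate q n y ≤ g n y := by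
  obtain ⟨e, he, hmean⟩ := H.exists_mul_lam_rpow_le_meanEstimate P
  obtain ⟨R, hR⟩ := (H.isBounded.cthickening (δ := r)).exists_norm_le
  have hF₀ := H.F₀_pos
  have hδ : 0 < min (ε / 2) (ε / 2 * (e * F₀)) := by positivity
  filter_upwards [P.eventually_meanEstimate_sub_le_g R hδ, hmean] with n hg hmean x hx y hy
  have hlam := Real.rpow_pos_of_pos (S.lam_pos n) (1 - S.η)
  have hrel : min (ε / 2) (ε / 2 * (e * F₀)) * S.meanEstimate q n y ≤
      ε / 2 * S.meanEstimate q n y :=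
    mul_le_mul_of_nonneg_right (min_le_left _ _) (P.meanEstimate_nonneg n y)
  have habs : min (ε / 2) (ε / 2 * (e * F₀)) * S.lam n ^ (1 - S.η) ≤
      ε / 2 * S.meanEstimate q n y :=
    calc min (ε / 2) (ε / 2 * (e * F₀)) * S.lam n ^ (1 - S.η)
        ≤ ε / 2 * (e * F₀) * S.lam n ^ (1 - S.η) := by
          gcongr
          exact min_le_right _ _
      _ = ε / 2 * (e * F₀ * S.lam n ^ (1 - S.η)) := by ring
      _ ≤ ε / 2 * (e * F x * S.lam n ^ (1 - S.η)) := by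
          gcongr
          exact H.le_F x hx
      _ ≤ ε / 2 * S.meanEstimate q n y := by
          gcongr
          exact hmean x hx y hy
  linarith [hg y (hR y (closedBall_subset_cthickening hx r hy))]

lemma eventually_mul_tent_le_meanBump (H : IsExplored S q A F F₀ r m)
    (P : IsTypicalPath S g q X) (hpos : ∀ n, m ≤ n → 0 < ∫ x, g n x) (hε : 0 < ε) (hε1 : ε < 1) :
    ∀ᶠ n in atTop, ∀ x ∈ A, ∀ s, 0 < s →
      (∀ z ∈ closedBall x r, (1 - ε) * (s * F x * tent x r z) ≤ g n z) → ∀ y,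
      (1 - ε) ^ 3 * (s / ∫ x, g n x) ^ (1 - S.η) * F x * tent x r y ≤
        S.meanBump (q n) n y := by
  filter_upwards [S.eventually_rpow_mul_tent_le_meanBump H.r_pos hε hε1.le, eventually_ge_atTop m,
    S.tendsto_lam.eventually (ge_mem_nhds hε)] with n hn hmn hlam x hx s hs hg y
  have hN := H.N_le.trans hmn
  have hF := H.F_pos hx
  have hgn := hpos n hmn
  have hη := S.η_pos
  have := S.η_lt_one
  have : 0 < 1 - ε := by linarith
  have htent := tent_nonneg x r
  have hmean := hn (q n) (P.integrable_q hN) (P.q_nonneg n hN) x (F x)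
    ((1 - ε) ^ 2 * (s / ∫ x, g n x) * F x) hF (by positivity) (fun z hz ↦ ?_) y
  · rw [rpow_mul_mul_rpow_one_sub (by positivity) hF, Real.mul_rpow (by positivity)
      (by positivity)] at hmean
    have hsq : (1 - ε) ^ 2 ≤ ((1 - ε) ^ 2) ^ (1 - S.η) :=
      Real.self_le_rpow_of_le_one (by positivity) (by nlinarith) (by linarith)
    calc (1 - ε) ^ 3 * (s / ∫ x, g n x) ^ (1 - S.η) * F x * tent x r y
        = F x * ((1 - ε) ^ 2 * (s / ∫ x, g n x) ^ (1 - S.η)) * ((1 - ε) * tent x r y) := by ring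
      _ ≤ _ := by
        have := htent y
        gcongr
      _ ≤ S.meanBump (q n) n y := hmean
  · have hz2 : z ∈ closedBall x (2 * r) :=
      closedBall_subset_closedBall (by linarith [H.r_pos]) hz
    refine ⟨H.F_le_f x hx z hz2, H.mul_f_le_q x hx z hz2 n hmn, ?_⟩
    have := htent z
    refine le_trans (le_of_eq ?_)
      (P.one_sub_mul_div_le_q hN hgn hlam (by positivity) (hg z hz))
    ring

lemma exists_recursive_lower_bound (H : IsExplored S q A F F₀ r m) (P : IsTypicalPath S g q X)
    (hpos : ∀ n, m ≤ n → 0 < ∫ x, g n x) (hε : 0 < ε) (hε1 : ε < 1) :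
    ∃ k, m ≤ k ∧ ∃ s : ℕ → ℝ, (∀ n, k ≤ n → 0 < s n) ∧
      (∀ n, k ≤ n → (1 - S.γ (n + 1)) * s n +
        S.γ (n + 1) * ((1 - ε) ^ 3 * (s n / ∫ x, g n x) ^ (1 - S.η)) ≤ s (n + 1)) ∧
      ∀ n, k ≤ n → ∀ x ∈ A, ∀ y ∈ closedBall x r,
        (1 - ε) * (s n * F x * tent x r y) ≤ g n y := by
  obtain ⟨e, he, hmean⟩ := H.exists_mul_lam_rpow_le_meanEstimate P
  obtain ⟨k, hk⟩ := eventually_atTop.1 <| (eventually_ge_atTop m).and <| hmean.and <|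
    (H.eventually_one_sub_mul_meanEstimate_le_g P hε).and
      (H.eventually_mul_tent_le_meanBump P hpos hε hε1)
  have hε1' : 0 < 1 - ε := by linarith
  have hmk : m ≤ k := (hk k le_rfl).1
  have hγ : ∀ n, k ≤ n → 0 < 1 - S.γ (n + 1) := fun n hn ↦ by
    linarith [S.isStepSize.half_le_one_sub (H.N_le.trans (hmk.trans hn))]
  obtain ⟨s, hsk, hs, hspos⟩ := exists_pos_seq_of_succ (m := k) (F := fun n t ↦
    (1 - S.γ (n + 1)) * t + S.γ (n + 1) * ((1 - ε) ^ 3 * (t / ∫ x, g n x) ^ (1 - S.η)))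
    (fun n hn t ht ↦ by
      have := hγ n hn
      have := S.isStepSize.pos (n + 1)
      have := hpos n (hmk.trans hn)
      positivity)
    (mul_pos he (Real.rpow_pos_of_pos (S.lam_pos k) (1 - S.η)))
  have hsmean : ∀ x ∈ A, ∀ n, k ≤ n → ∀ y ∈ closedBall x r,
      s n * (F x * tent x r y) ≤ S.meanEstimate q n y := fun x hx n hn ↦ by
    have hF := H.F_pos hx
    refine S.mul_le_meanEstimate_of_succ_eq (H.N_le.trans hmk) hs (fun y hy ↦ ?_)
      (fun n hn hind y _ ↦ ?_) hn
    · calc s k * (F x * tent x r y) ≤ s k * F x :=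
            mul_le_mul_of_nonneg_left (mul_le_of_le_one_right hF.le (tent_le_one x H.r_pos.le y))
              (hspos k le_rfl).le
        _ = e * F x * S.lam k ^ (1 - S.η) := by rw [hsk]; ring
        _ ≤ S.meanEstimate q k y := (hk k le_rfl).2.1 x hx y hy
    · rw [← mul_assoc]
      refine (hk n hn).2.2.2 x hx (s n) (hspos n hn) (fun z hz ↦ ?_) y
      rw [mul_assoc]
      exact (mul_le_mul_of_nonneg_left (hind z hz) hε1'.le).trans ((hk n hn).2.2.1 x hx z hz)
  refine ⟨k, hmk, s, hspos, fun n hn ↦ (hs n hn).ge, fun n hn x hx y hy ↦ ?_⟩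
  rw [mul_assoc (s n)]
  exact (mul_le_mul_of_nonneg_left (hsmean x hx n hn y hy) hε1'.le).trans
    ((hk n hn).2.2.1 x hx y hy)

end IsExplored

/-! ### The total mass of the estimates -/

lemma Setting.exists_f_pos (S : Setting d) : ∃ x, 0 < S.f x := by
  by_contra! h
  have hf : S.f = 0 := funext fun x ↦ le_antisymm (h x) (S.f_nonneg x)
  have := S.integral_f
  simp [hf] at this

namespace IsTypicalPath

lemma neg_le_g_div_integral (P : IsTypicalPath S g q X) (hn : S.N ≤ n) (x : Space d) :
    -(2 * S.lam n * S.q₀ x) ≤ g n x / ∫ y, g n y := by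
  have hq := P.q_nonneg n hn x
  rw [P.q_eq n hn x] at hq
  by_contra! h
  have hlam := S.lam_le_half n hn
  have := mul_nonneg (S.lam_pos n).le (S.q₀_nonneg x)
  nlinarith

lemma mul_f_le_q_of_neg_le (P : IsTypicalPath S g q X) (hn : S.N ≤ n) {x : Space d}
    (h : -(S.lam n / 2 * S.q₀ x) ≤ g n x / ∫ y, g n y) : S.c * S.lam n * S.f x ≤ q n x := by
  have hlam := S.lam_pos n
  have hlam_half := S.lam_le_half n hn
  have hq₀ := S.q₀_nonneg x
  have hexplore : S.lam n * (2 * S.c * S.f x) ≤ S.lam n * S.q₀ x :=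
    mul_le_mul_of_nonneg_left (S.two_mul_c_mul_f_le x) hlam.le
  have hestimate : (1 - S.lam n) * -(S.lam n / 2 * S.q₀ x) ≤
      (1 - S.lam n) * (g n x / ∫ y, g n y) := mul_le_mul_of_nonneg_left h (by linarith)
  have : 0 ≤ S.lam n * (S.lam n / 2 * S.q₀ x) := by positivity
  rw [P.q_eq n hn x]
  linarith

lemma mul_f_le_q_of_div_nonneg (P : IsTypicalPath S g q X) (hn : S.N ≤ n) {x : Space d}
    (h : 0 ≤ g n x / ∫ y, g n y) : S.c * S.lam n * S.f x ≤ q n x :=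
  P.mul_f_le_q_of_neg_le hn <| le_trans
    (neg_nonpos.2 (mul_nonneg (half_pos (S.lam_pos n)).le (S.q₀_nonneg x))) h

end IsTypicalPath

lemma exists_isExplored_singleton (hm : S.N ≤ m) {x : Space d} (hfx : 0 < S.f x)
    (hq : ∀ᶠ z in 𝓝 x, ∀ n, m ≤ n → S.c * S.lam n * S.f z ≤ q n z) :
    ∃ r, IsExplored S q {x} (fun _ ↦ S.f x / 2) (S.f x / 2) r m := by
  obtain ⟨r, hr, hball⟩ := nhds_basis_closedBall.eventually_iff.1
    ((S.continuous_f.continuousAt.eventually (lt_mem_nhds (half_lt_self hfx))).and hq)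
  refine ⟨r / 2, hm, half_pos hfx, half_pos hr, Bornology.isBounded_singleton, fun _ _ ↦ le_rfl,
    ?_, ?_⟩ <;> rintro _ rfl z hz
  · exact (hball (by rwa [mul_div_cancel₀ r two_ne_zero] at hz)).1.le
  · exact (hball (by rwa [mul_div_cancel₀ r two_ne_zero] at hz)).2

namespace IsTypicalPath

lemma g_nonpos_of_integral_g_neg (P : IsTypicalPath S g q X)
    (hneg : ∀ n, S.N ≤ n → ∫ x, g n x < 0) (hm : S.N ≤ m) (x : Space d) : g m x ≤ 0 := by
  have hbound : ∀ n, m ≤ n → g m x ≤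
      decay S.γ S.N m * -(∫ y, g S.N y) * (2 * S.lam n * S.q₀ x) := fun n hmn ↦ by
    have hn := hm.trans hmn
    have hdecay := S.isStepSize.decay_pos m
    have hlam := mul_nonneg (mul_pos two_pos (S.lam_pos n)).le (S.q₀_nonneg x)
    have hg : g n x ≤ -(∫ y, g n y) * (2 * S.lam n * S.q₀ x) := by
      have := (le_div_iff_of_neg (hneg n hn)).1 (P.neg_le_g_div_integral hn x)
      linarith
    have hmass : -(∫ y, g n y) ≤ decay S.γ S.N n * -(∫ y, g S.N y) := by
      have := P.decay_mul_integral_g_le le_rfl hn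
      rw [decay_self, one_mul] at this
      linarith
    refine le_of_mul_le_mul_left ?_ (S.isStepSize.decay_pos n)
    calc decay S.γ S.N n * g m x ≤ decay S.γ S.N m * g n x := P.decay_mul_g_le hm hmn x
      _ ≤ decay S.γ S.N m *
          (decay S.γ S.N n * -(∫ y, g S.N y) * (2 * S.lam n * S.q₀ x)) := by
        gcongr
        exact hg.trans (mul_le_mul_of_nonneg_right hmass hlam)
      _ = _ := by ring
  have hlim : Tendsto (fun n ↦ decay S.γ S.N m * -(∫ y, g S.N y) * (2 * S.lam n * S.q₀ x)) atTop
      (𝓝 0) := by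
    simpa using ((S.tendsto_lam.const_mul 2).mul_const (S.q₀ x)).const_mul
      (decay S.γ S.N m * -(∫ y, g S.N y))
  exact ge_of_tendsto hlim (eventually_atTop.2 ⟨m, hbound⟩)

-- If the mass stayed negative, then `g n ≤ 0`, so `q n` would dominate `c * lam n * f` everywhere
-- and `g n` would become positive where `f` is.
lemma exists_integral_g_pos (P : IsTypicalPath S g q X) : ∃ n, S.N ≤ n ∧ 0 < ∫ x, g n x := by
  by_contra! hcon
  have hneg : ∀ n, S.N ≤ n → ∫ x, g n x < 0 := fun n hn ↦
    (hcon n hn).lt_of_ne (P.integral_g_ne_zero n hn)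
  obtain ⟨x, hfx⟩ := S.exists_f_pos
  obtain ⟨r, hr⟩ := exists_isExplored_singleton (q := q) le_rfl hfx <| .of_forall fun z n hn ↦
    P.mul_f_le_q_of_div_nonneg hn <| div_nonneg_of_nonpos
      (P.g_nonpos_of_integral_g_neg hneg hn z) (hneg n hn).le
  obtain ⟨e, he, hmean⟩ := hr.exists_mul_lam_rpow_le_meanEstimate P
  obtain ⟨n, ⟨hmean, hg⟩, hn⟩ := ((hmean.and
    (hr.eventually_one_sub_mul_meanEstimate_le_g P one_half_pos)).and
    (eventually_ge_atTop S.N)).exists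
  have hx := mem_closedBall_self (x := x) hr.r_pos.le
  have := mul_pos (mul_pos he (half_pos hfx)) (Real.rpow_pos_of_pos (S.lam_pos n) (1 - S.η))
  linarith [hmean x rfl x hx, hg x rfl x hx, P.g_nonpos_of_integral_g_neg hneg hn x]

lemma exists_neg_mul_decay_mul_q₀_le_g (P : IsTypicalPath S g q X) (hm : S.N ≤ m)
    (hpos : 0 < ∫ x, g m x) :
    ∃ C > 0, ∀ n, m ≤ n → ∀ x, -(C * decay S.γ S.N n * S.q₀ x) ≤ g n x := by
  have hdecay := S.isStepSize.decay_pos m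
  have hlam := S.lam_pos m
  refine ⟨(∫ x, g m x) * (2 * S.lam m) / decay S.γ S.N m, by positivity, fun n hmn x ↦ ?_⟩
  have hg : -((∫ y, g m y) * (2 * S.lam m) * S.q₀ x) ≤ g m x := by
    have := (le_div_iff₀ hpos).1 (P.neg_le_g_div_integral hm x)
    linarith
  refine le_of_mul_le_mul_left ?_ hdecay
  calc decay S.γ S.N m *
      -((∫ x, g m x) * (2 * S.lam m) / decay S.γ S.N m * decay S.γ S.N n * S.q₀ x)
      = decay S.γ S.N n * -((∫ y, g m y) * (2 * S.lam m) * S.q₀ x) := by field_simp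
    _ ≤ decay S.γ S.N n * g m x :=
      mul_le_mul_of_nonneg_left hg (S.isStepSize.decay_pos n).le
    _ ≤ decay S.γ S.N m * g n x := P.decay_mul_g_le hm hmn x

lemma mul_integral_tent_le_integral_g_add (P : IsTypicalPath S g q X) (hn : S.N ≤ n)
    {x : Space d} {r a C : ℝ} (hr : 0 < r) (hC : 0 ≤ C)
    (htent : ∀ z ∈ closedBall x r, a * tent x r z ≤ g n z)
    (hlow : ∀ z, -(C * S.q₀ z) ≤ g n z) :
    a * ∫ z, tent x r z ≤ (∫ z, g n z) + C := by
  have hint : ∫ z, a * tent x r z ≤ ∫ z, (g n z + C * S.q₀ z) :=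
    integral_mono ((integrable_tent volume x hr).const_mul a)
      ((P.integrable_g n hn).add (S.integrable_q₀.const_mul C)) fun z ↦ ?_
  · rwa [integral_add (P.integrable_g n hn) (S.integrable_q₀.const_mul C), integral_const_mul,
      integral_const_mul, S.integral_q₀, mul_one] at hint
  · have := mul_nonneg hC (S.q₀_nonneg z)
    by_cases hz : z ∈ closedBall x r
    · linarith [htent z hz]
    · rw [tent_eq_zero_of_notMem_closedBall hr hz, mul_zero]
      linarith [hlow z]

end IsTypicalPath

lemma exists_pos_le_of_rpow_mul_rpow {s u v : ℕ → ℝ} {η a p : ℝ} (hη : 0 < η) (hη1 : η ≤ 1)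
    (ha : 0 < a) (hp : 0 < p) (hs : ∀ᶠ n in atTop, 0 < s n) (hu : ∀ᶠ n in atTop, 0 < u n)
    (hv : Tendsto v atTop (𝓝 0)) (hsu : ∀ᶠ n in atTop, a * s n ≤ u n + v n)
    (hpsu : ∀ᶠ n in atTop, p ≤ s n ^ η * u n ^ (1 - η)) :
    ∃ ε > 0, ∀ᶠ n in atTop, ε ≤ u n := by
  have : 0 < (2 / a) ^ η := by positivity
  refine ⟨p / (2 / a) ^ η / 2, by positivity, ?_⟩
  set ε := p / (2 / a) ^ η / 2 with hε_def
  have hε : 0 < ε := by positivity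
  filter_upwards [hs, hu, hv.eventually (ge_mem_nhds hε), hsu, hpsu] with n hs hu hv hsu hpsu
  by_contra! hlt
  have hsε : s n ≤ 2 / a * ε := by
    rw [div_mul_eq_mul_div, le_div_iff₀ ha]
    linarith
  have : p ≤ p / 2 :=
    calc p ≤ s n ^ η * u n ^ (1 - η) := hpsu
      _ ≤ (2 / a * ε) ^ η * ε ^ (1 - η) := by gcongr
      _ = (2 / a) ^ η * ε := by
        rw [Real.mul_rpow (by positivity) hε.le, mul_assoc, ← Real.rpow_add hε, add_sub_cancel,
          Real.rpow_one]
      _ = p / 2 := by rw [hε_def]; field_simp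
  linarith

namespace IsTypicalPath

lemma exists_pos_le_integral_g (P : IsTypicalPath S g q X) :
    ∃ ε > 0, ∀ᶠ n in atTop, ε ≤ ∫ x, g n x := by
  obtain ⟨m, hm, hpos_m⟩ := P.exists_integral_g_pos
  have hpos : ∀ n, m ≤ n → 0 < ∫ x, g n x := fun n hn ↦ P.integral_g_pos_of_le hm hn hpos_m
  obtain ⟨x, hfx, hgx⟩ := P.exists_f_pos_and_g_nonneg m hm hpos_m
  obtain ⟨r, hr⟩ := exists_isExplored_singleton (q := q) hm hfx <| hgx.mono fun z hz n hn ↦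
    P.mul_f_le_q_of_div_nonneg (hm.trans hn) <| div_nonneg (P.g_nonneg_of_le hm hn hz)
      (hpos n hn).le
  obtain ⟨k, hk, s, hs, hrec, htent⟩ :=
    hr.exists_recursive_lower_bound P hpos one_half_pos one_half_lt_one
  obtain ⟨p, hp, hps⟩ := S.isStepSize.exists_le_rpow_mul_rpow (hm.trans hk) S.η_pos
    S.η_lt_one.le (by norm_num) hs (fun n hn ↦ hpos n (hk.trans hn)) hrec
    fun n hn ↦ P.one_sub_mul_integral_g_le (hm.trans (hk.trans hn))
  obtain ⟨C, hC, hlow⟩ := P.exists_neg_mul_decay_mul_q₀_le_g hm hpos_m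
  have htent_pos := integral_tent_pos volume x hr.r_pos
  refine exists_pos_le_of_rpow_mul_rpow (a := 1 / 2 * (S.f x / 2) * ∫ z, tent x r z) S.η_pos
    S.η_lt_one.le (by positivity) hp (eventually_atTop.2 ⟨k, hs⟩) (eventually_atTop.2 ⟨m, hpos⟩)
    (v := fun n ↦ C * decay S.γ S.N n) (by simpa using S.isStepSize.tendsto_decay.const_mul C)
    (eventually_atTop.2 ⟨k, fun n hn ↦ ?_⟩) hps
  have hmass := P.mul_integral_tent_le_integral_g_add (hm.trans (hk.trans hn)) hr.r_pos
    (a := (1 - 1 / 2) * (s n * (S.f x / 2)))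
    (mul_pos hC (S.isStepSize.decay_pos n)).le
    (fun z hz ↦ by simpa only [mul_assoc] using htent n hn x rfl z hz) (hlow n (hk.trans hn))
  linarith

lemma exists_integral_g_pos_and_mul_f_le_q (P : IsTypicalPath S g q X) :
    ∃ m, S.N ≤ m ∧ (∀ n, m ≤ n → 0 < ∫ x, g n x) ∧
      ∀ n, m ≤ n → ∀ x, S.c * S.lam n * S.f x ≤ q n x := by
  obtain ⟨m, hm, hpos⟩ := P.exists_integral_g_pos
  obtain ⟨C, hC, hlow⟩ := P.exists_neg_mul_decay_mul_q₀_le_g hm hpos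
  obtain ⟨ε, hε, hmass⟩ := P.exists_pos_le_integral_g
  obtain ⟨k, hk⟩ := eventually_atTop.1 <| (eventually_ge_atTop m).and <| hmass.and <|
    S.eventually_decay_le_mul_lam (show 0 < ε / 2 / C by positivity)
  have hmk : m ≤ k := (hk k le_rfl).1
  refine ⟨k, hm.trans hmk, fun n hn ↦ hε.trans_le (hk n hn).2.1, fun n hn x ↦
    P.mul_f_le_q_of_neg_le (hm.trans (hmk.trans hn)) ?_⟩
  obtain ⟨hmn, hmass, hdecay⟩ := hk n hn
  have hq₀ := S.q₀_nonneg x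
  have hlam := S.lam_pos n
  rw [le_div_iff₀ (hε.trans_le hmass)]
  calc -(S.lam n / 2 * S.q₀ x) * ∫ y, g n y ≤ -(S.lam n / 2 * S.q₀ x) * ε := by
        rw [neg_mul, neg_mul]
        gcongr
    _ = -(C * (ε / 2 / C * S.lam n) * S.q₀ x) := by field_simp
    _ ≤ -(C * decay S.γ S.N n * S.q₀ x) := by gcongr
    _ ≤ g n x := hlow n hmn x

lemma integral_weight_mul_le_one (P : IsTypicalPath S g q X) (hn : S.N ≤ n) :
    ∫ y, S.weight (q n) n y * q n y ≤ 1 := by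
  have hq := P.q_nonneg n hn
  have hf := S.integrable_f.const_mul S.η
  have hint := (P.integrable_q hn).const_mul (1 - S.η)
  have hyoung : ∀ y, S.weight (q n) n y * q n y ≤ S.η * S.f y + (1 - S.η) * q n y := fun y ↦ by
    rcases (hq y).eq_or_lt with hy | hy
    · rw [← hy, mul_zero, mul_zero, add_zero]
      exact mul_nonneg S.η_pos.le (S.f_nonneg y)
    · calc S.weight (q n) n y * q n y ≤ (S.f y / q n y) ^ S.η * q n y :=
            mul_le_mul_of_nonneg_right (Setting.weight_le_rpow _ _ _) hy.le
        _ = S.f y ^ S.η * q n y ^ (1 - S.η) := div_rpow_mul_self (S.f_nonneg y) hy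
        _ ≤ _ := Real.geom_mean_le_arith_mean2_weighted S.η_pos.le
          (sub_nonneg.2 S.η_lt_one.le) (S.f_nonneg y) hy.le (add_sub_cancel _ _)
  calc ∫ y, S.weight (q n) n y * q n y ≤ ∫ y, (S.η * S.f y + (1 - S.η) * q n y) :=
        integral_mono_of_nonneg
          (.of_forall fun y ↦ mul_nonneg (Setting.weight_nonneg hq n y) (hq y))
          (hf.add hint) (.of_forall hyoung)
    _ = 1 := by
      rw [integral_add hf hint, integral_const_mul, integral_const_mul, S.integral_f,
        P.integral_q hn]
      ring

lemma importanceWeight_eq_weight (P : IsTypicalPath S g q X) (hn : S.N ≤ n) {y : Space d}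
    (hq : S.c * S.lam n * S.f y ≤ q n y) : (S.f y / q n y) ^ S.η = S.weight (q n) n y := by
  rcases (S.f_nonneg y).eq_or_lt with hy | hy
  · have := Setting.weight_nonneg (S := S) (P.q_nonneg n hn) n y
    have := Setting.weight_le_rpow (S := S) (q n) n y
    rw [← hy, zero_div, Real.zero_rpow S.η_pos.ne'] at this ⊢
    linarith
  · exact (Setting.weight_eq_rpow_of_mul_le hy hq).symm

lemma eventually_integral_g_le_one_add (P : IsTypicalPath S g q X) (hm : S.N ≤ m)
    (hq : ∀ n, m ≤ n → ∀ x, S.c * S.lam n * S.f x ≤ q n x) {ε : ℝ} (hε : 0 < ε) :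
    ∀ᶠ n in atTop, ∫ x, g n x ≤ 1 + ε := by
  set w : ℕ → ℝ := fun k ↦ S.weight (q k) k (X (k + 1))
  have hmass := S.isStepSize.eventually_le_of_recursion hm
    (u := fun n ↦ (∫ x, g n x) - stepAvg S.γ S.N w n) (fun n hn ↦ by
      rw [P.integral_g_succ (hm.trans hn), S.isStepSize.stepAvg_succ w (hm.trans hn),
        P.importanceWeight_eq_weight (hm.trans hn) (hq n hn _)]
      exact le_of_eq (by ring)) (show 0 < ε / 4 by positivity)
  filter_upwards [hmass, P.eventually_weight_le (ε / 4) (by positivity),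
    eventually_ge_atTop S.N] with n hmass hweight hn
  have hmean : stepAvg S.γ S.N (fun k ↦ ∫ y, S.weight (q k) k y * q k y) n ≤ 1 :=
    calc _ ≤ stepAvg S.γ S.N (fun _ ↦ 1) n :=
          S.isStepSize.stepAvg_mono fun k hk _ ↦ P.integral_weight_mul_le_one hk
      _ ≤ 1 := by
        rw [S.isStepSize.stepAvg_const 1 hn]
        linarith [S.isStepSize.decay_pos n]
  linarith [mul_le_mul_of_nonneg_left hmean (show 0 ≤ 1 + ε / 4 by positivity)]

end IsTypicalPath

/-! ### Pathwise lower bound -/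

lemma exists_rpow_lt_and_sub_le_mul {η : ℝ} (hη : 0 < η) (C : ℝ) {ε : ℝ} (hε : 0 < ε) :
    ∃ s > 0, ∃ e > 0, e < 1 ∧ s ^ η < (1 - e) ^ 3 / (1 + e) ∧
      ∀ a ∈ Set.Icc 0 C, a - ε ≤ (1 - e) * (s * a) := by
  have hlim_s : Tendsto (fun s : ℝ ↦ (1 - s) * C) (𝓝[<] 1) (𝓝 0) :=
    (Continuous.tendsto' (by fun_prop) 1 0 (by simp)).mono_left nhdsWithin_le_nhds
  obtain ⟨s, hsC, hs0, hs1⟩ := ((hlim_s.eventually (gt_mem_nhds hε)).and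
    (Ioo_mem_nhdsLT (zero_lt_one (α := ℝ)))).exists
  have hlim_pow : Tendsto (fun e : ℝ ↦ (1 - e) ^ 3 / (1 + e)) (𝓝[>] 0) (𝓝 1) := by
    have : ContinuousAt (fun e : ℝ ↦ (1 - e) ^ 3 / (1 + e)) 0 := by
      fun_prop (disch := norm_num)
    simpa using this.tendsto.mono_left nhdsWithin_le_nhds
  have hlim_e : Tendsto (fun e : ℝ ↦ (1 - (1 - e) * s) * C) (𝓝[>] 0) (𝓝 ((1 - s) * C)) :=
    (Continuous.tendsto' (by fun_prop) 0 _ (by simp)).mono_left nhdsWithin_le_nhds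
  obtain ⟨e, hpow, heC, he0, he1⟩ := ((hlim_pow.eventually
    (lt_mem_nhds (Real.rpow_lt_one hs0.le hs1 hη))).and ((hlim_e.eventually
    (gt_mem_nhds hsC)).and (Ioo_mem_nhdsGT (zero_lt_one (α := ℝ))))).exists
  refine ⟨s, hs0, e, he0, he1, hpow, fun a ha ↦ ?_⟩
  have : 0 ≤ 1 - (1 - e) * s := by nlinarith
  linarith [mul_le_mul_of_nonneg_left ha.2 this]

lemma div_mul_rpow_le_mul_div_rpow {η e B s u : ℝ} (hη : 0 ≤ η) (hη1 : η ≤ 1) (he : 0 ≤ e)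
    (hB : 0 ≤ B) (hs : 0 ≤ s) (hu : 0 < u) (hue : u ≤ 1 + e) :
    B / (1 + e) * s ^ (1 - η) ≤ B * (s / u) ^ (1 - η) := by
  have hpow : u ^ (1 - η) ≤ 1 + e :=
    calc u ^ (1 - η) ≤ (1 + e) ^ (1 - η) := by gcongr
      _ ≤ 1 + e := Real.rpow_le_self_of_one_le (by linarith) (by linarith)
  rw [Real.div_rpow hs hu.le, div_mul_eq_mul_div, ← mul_div_assoc]
  gcongr

lemma exists_forall_mem_closedBall_sub_le {E : Type*} [PseudoMetricSpace E] {f : E → ℝ}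
    (hf : Continuous f) {A : Set E} (hA : IsCompact A) {ε : ℝ} (hε : 0 < ε) :
    ∃ r > 0, ∀ x ∈ A, ∀ z ∈ closedBall x (2 * r), f x - ε ≤ f z := by
  obtain ⟨r, hr, hclose⟩ := mem_uniformity_dist.1 <|
    hA.uniformContinuousAt_of_continuousAt f (fun _ _ ↦ hf.continuousAt) (dist_mem_uniformity hε)
  refine ⟨r / 4, by positivity, fun x hx z hz ↦ ?_⟩
  rw [mem_closedBall, dist_comm] at hz
  have hdist : dist (f x) (f z) < ε := hclose (hz.trans_lt (by linarith)) hx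
  rw [Real.dist_eq, abs_lt] at hdist
  linarith

namespace IsExplored

variable {A : Set (Space d)} {F : Space d → ℝ} {F₀ r : ℝ}

lemma eventually_mul_le_g (H : IsExplored S q A F F₀ r m) (P : IsTypicalPath S g q X)
    (hpos : ∀ n, m ≤ n → 0 < ∫ x, g n x)
    (hq : ∀ n, m ≤ n → ∀ x, S.c * S.lam n * S.f x ≤ q n x) {e s₀ : ℝ} (he : 0 < e) (he1 : e < 1)
    (hs₀ : 0 < s₀) (hs₀e : s₀ ^ S.η < (1 - e) ^ 3 / (1 + e)) :
    ∀ᶠ n in atTop, ∀ x ∈ A, (1 - e) * (s₀ * F x) ≤ g n x := by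
  obtain ⟨k, hk, s, hs, hrec, htent⟩ := H.exists_recursive_lower_bound P hpos he he1
  obtain ⟨l, hl⟩ := eventually_atTop.1 ((eventually_ge_atTop k).and
    (P.eventually_integral_g_le_one_add H.N_le hq he))
  have hkl : k ≤ l := (hl l le_rfl).1
  have hgrowth := S.isStepSize.eventually_ge_of_rpow_recursion (H.N_le.trans (hk.trans hkl))
    S.η_pos S.η_lt_one.le (fun n hn ↦ hs n (hkl.trans hn)) (fun n hn ↦ ?_) hs₀ hs₀e
  · filter_upwards [hgrowth, eventually_ge_atTop k] with n hsn hn x hx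
    have hg := htent n hn x hx x (mem_closedBall_self H.r_pos.le)
    rw [tent_self, mul_one] at hg
    have := H.F_pos hx
    refine le_trans ?_ hg
    gcongr
  · refine le_trans ?_ (hrec n (hkl.trans hn))
    refine add_le_add_right (mul_le_mul_of_nonneg_left ?_ (S.isStepSize.pos (n + 1)).le) _
    exact div_mul_rpow_le_mul_div_rpow S.η_pos.le S.η_lt_one.le he.le
      (pow_nonneg (by linarith) 3) (hs n (hkl.trans hn)).le (hpos n (hk.trans (hkl.trans hn)))
      (hl n hn).2

end IsExplored

lemma IsTypicalPath.eventually_neg_le_g (P : IsTypicalPath S g q X) {ε : ℝ} (hε : 0 < ε) :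
    ∀ᶠ n in atTop, ∀ x, -ε ≤ g n x := by
  obtain ⟨C, -, hC⟩ := P.exists_neg_le
  filter_upwards [S.isStepSize.eventually_mul_decay_le C hε, eventually_ge_atTop S.N]
    with n hdecay hn x
  have hg := P.decay_mul_g_le le_rfl hn x
  rw [decay_self, one_mul] at hg
  linarith [mul_le_mul_of_nonneg_left (hC x) (S.isStepSize.decay_pos n).le]

theorem IsTypicalPath.eventually_f_sub_le_g (P : IsTypicalPath S g q X) {A : Set (Space d)}
    (hA : IsCompact A) {ε : ℝ} (hε : 0 < ε) : ∀ᶠ n in atTop, ∀ x ∈ A, S.f x - 3 * ε ≤ g n x := by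
  obtain ⟨m, hm, hpos, hq⟩ := P.exists_integral_g_pos_and_mul_f_le_q
  obtain ⟨r, hr, hunif⟩ := exists_forall_mem_closedBall_sub_le S.continuous_f hA hε
  obtain ⟨C, hC⟩ := S.f_bdd
  obtain ⟨s₀, hs₀, e, he, he1, hs₀e, hsC⟩ := exists_rpow_lt_and_sub_le_mul S.η_pos C hε
  have hexplored : IsExplored S q {x ∈ A | 2 * ε ≤ S.f x} (fun x ↦ S.f x - ε) ε r m :=
    { N_le := hm
      F₀_pos := hε
      r_pos := hr
      isBounded := hA.isBounded.subset (Set.sep_subset _ _)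
      le_F := fun x hx ↦ by linarith [hx.2]
      F_le_f := fun x hx ↦ hunif x hx.1
      mul_f_le_q := fun _ _ z _ n hn ↦ hq n hn z }
  filter_upwards [hexplored.eventually_mul_le_g P hpos hq he he1 hs₀ hs₀e,
    P.eventually_neg_le_g hε] with n hhigh hlow x hx
  rcases le_total (2 * ε) (S.f x) with hfx | hfx
  · linarith [hhigh x ⟨hx, hfx⟩, hsC (S.f x - ε) ⟨by linarith, by linarith [hC x]⟩]
  · linarith [hlow x]

end Pathwise

/-! ### Adaptive sampling -/

section JointLaw

variable {Ω Ω' E : Type*} [MeasurableSpace Ω] [MeasurableSpace Ω'] [TopologicalSpace E]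
  [HasOuterApproxClosed E] [MeasurableSpace E] [BorelSpace E] {μ : Measure Ω} [IsFiniteMeasure μ]
  {ν : Measure E} [SFinite ν] {π : Ω → Ω'} {Y : Ω → E} {p : Ω' → E → ℝ≥0∞}

lemma map_prodMk_eq_withDensity (hπ : Measurable π) (hY : Measurable Y)
    (hp : Measurable (Function.uncurry p))
    (h : ∀ s, MeasurableSet s → ∀ φ : BoundedContinuousFunction E ℝ≥0,
      ∫⁻ ω in π ⁻¹' s, φ (Y ω) ∂μ = ∫⁻ ω in π ⁻¹' s, (∫⁻ y, φ y * p (π ω) y ∂ν) ∂μ) :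
    μ.map (fun ω ↦ (π ω, Y ω)) = ((μ.map π).prod ν).withDensity (Function.uncurry p) := by
  refine Measure.ext_prod fun {s t} hs ht ↦ ?_
  have hslice : (μ.restrict (π ⁻¹' s)).map Y =
      ((((μ.map π).prod ν).withDensity (Function.uncurry p)).restrict
        (s ×ˢ Set.univ)).map Prod.snd := by
    refine ext_of_forall_lintegral_eq_of_IsFiniteMeasure fun φ ↦ ?_
    have hφ : Measurable fun y ↦ (φ y : ℝ≥0∞) :=
      measurable_coe_nnreal_ennreal.comp φ.continuous.measurable
    have hφsnd : Measurable fun z : Ω' × E ↦ (φ z.2 : ℝ≥0∞) := hφ.comp measurable_snd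
    rw [lintegral_map hφ hY, h s hs φ, lintegral_map hφ measurable_snd,
      restrict_withDensity (hs.prod MeasurableSet.univ),
      lintegral_withDensity_eq_lintegral_mul _ hp hφsnd, ← Measure.prod_restrict,
      Measure.restrict_univ, lintegral_prod _ (hp.mul hφsnd).aemeasurable,
      setLIntegral_map hs (hp.mul hφsnd).lintegral_prod_right' hπ]
    simp only [Pi.mul_apply, Function.uncurry_apply_pair, mul_comm]
  have hst := congrArg (fun m ↦ m t) hslice
  rw [Measure.map_apply hY ht, Measure.restrict_apply (hY ht), Measure.map_apply measurable_snd ht,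
    Measure.restrict_apply (measurable_snd ht)] at hst
  rw [Measure.map_apply (hπ.prodMk hY) (hs.prod ht), Set.mk_preimage_prod, Set.inter_comm, hst,
    Set.prod_eq, Set.preimage_univ, Set.inter_univ, Set.inter_comm, ← Set.prod_eq]

lemma lintegral_comp_prodMk_eq (hπ : Measurable π) (hY : Measurable Y)
    (hp : Measurable (Function.uncurry p))
    (h : ∀ s, MeasurableSet s → ∀ φ : BoundedContinuousFunction E ℝ≥0,
      ∫⁻ ω in π ⁻¹' s, φ (Y ω) ∂μ = ∫⁻ ω in π ⁻¹' s, (∫⁻ y, φ y * p (π ω) y ∂ν) ∂μ)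
    {Φ : Ω' × E → ℝ≥0∞} (hΦ : Measurable Φ) :
    ∫⁻ ω, Φ (π ω, Y ω) ∂μ = ∫⁻ ω, (∫⁻ y, Φ (π ω, y) * p (π ω) y ∂ν) ∂μ := by
  rw [← lintegral_map hΦ (hπ.prodMk hY), map_prodMk_eq_withDensity hπ hY hp h,
    lintegral_withDensity_eq_lintegral_mul _ hp hΦ, lintegral_prod _ (hp.mul hΦ).aemeasurable,
    lintegral_map (hp.mul hΦ).lintegral_prod_right' hπ]
  simp only [Pi.mul_apply, Function.uncurry_apply_pair, mul_comm]

end JointLaw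

section ExponentialBounds

variable {E : Type*} [MeasurableSpace E] {ν : Measure E}

lemma exp_le_one_add_mul {ε u : ℝ} (hε : ε ≤ 1) (hu : 0 ≤ u) (hue : u ≤ ε) :
    Real.exp (1 * u) ≤ 1 + (1 + ε) * u := by
  have h := (abs_le.1 (Real.abs_exp_sub_one_sub_id_le (abs_le.2 ⟨by linarith, hue.trans hε⟩))).2
  rw [one_mul]
  nlinarith

lemma exp_neg_le_one_sub_mul {ε u : ℝ} (hε : ε ≤ 1) (hu : 0 ≤ u) (hue : u ≤ ε) :
    Real.exp (-1 * u) ≤ 1 + -(1 - ε) * u := by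
  have h := (abs_le.1 (Real.abs_exp_sub_one_sub_id_le (x := -u)
    (abs_le.2 ⟨by linarith, by linarith⟩))).2
  rw [neg_one_mul]
  nlinarith

lemma measurable_integral_mul {Ω : Type*} {_ : MeasurableSpace Ω} [SFinite ν] {u v : Ω → E → ℝ}
    (hu : Measurable (Function.uncurry u)) (hv : Measurable (Function.uncurry v)) :
    Measurable fun ω ↦ ∫ y, u ω y * v ω y ∂ν :=
  (hu.mul hv).stronglyMeasurable.integral_prod_right'.measurable

lemma lintegral_exp_mul_density_le_one {p v : E → ℝ} {ε σ κ : ℝ} (hp : ∀ y, 0 ≤ p y)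
    (hp1 : ∫ y, p y ∂ν = 1) (hv : Measurable v) (hv0 : ∀ y, 0 ≤ v y) (hvε : ∀ y, v y ≤ ε)
    (hexp : ∀ u, 0 ≤ u → u ≤ ε → Real.exp (σ * u) ≤ 1 + κ * u) :
    ∫⁻ y, ENNReal.ofReal (Real.exp (σ * v y - κ * ∫ z, v z * p z ∂ν)) * ENNReal.ofReal (p y) ∂ν
      ≤ 1 := by
  set e := ∫ z, v z * p z ∂ν
  have hpint : Integrable p ν := .of_integral_ne_zero (by simp [hp1])
  have hvp : Integrable (fun y ↦ v y * p y) ν :=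
    hpint.bdd_mul hv.aestronglyMeasurable (.of_forall fun y ↦ by
      rw [Real.norm_of_nonneg (hv0 y)]; exact hvε y)
  have hle : ∀ y, Real.exp (σ * v y - κ * e) * p y ≤
      Real.exp (-(κ * e)) * (p y + κ * (v y * p y)) := fun y ↦ by
    rw [sub_eq_neg_add, Real.exp_add, mul_assoc]
    gcongr
    linarith [mul_le_mul_of_nonneg_right (hexp _ (hv0 y) (hvε y)) (hp y)]
  have hbound : Integrable (fun y ↦ Real.exp (-(κ * e)) * (p y + κ * (v y * p y))) ν :=
    (hpint.add (hvp.const_mul κ)).const_mul _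
  calc ∫⁻ y, ENNReal.ofReal (Real.exp (σ * v y - κ * e)) * ENNReal.ofReal (p y) ∂ν
      ≤ ∫⁻ y, ENNReal.ofReal (Real.exp (-(κ * e)) * (p y + κ * (v y * p y))) ∂ν := by
        refine lintegral_mono fun y ↦ ?_
        rw [← ENNReal.ofReal_mul (Real.exp_pos _).le]
        exact ENNReal.ofReal_le_ofReal (hle y)
    _ = ENNReal.ofReal (Real.exp (-(κ * e)) * (1 + κ * e)) := by
        rw [← ofReal_integral_eq_lintegral_ofReal hbound (.of_forall fun y ↦
          (mul_nonneg (Real.exp_pos _).le (hp y)).trans (hle y)), integral_const_mul,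
          integral_add hpint (hvp.const_mul κ), hp1, integral_const_mul]
    _ ≤ ENNReal.ofReal (Real.exp (-(κ * e)) * Real.exp (κ * e)) := by
        gcongr
        linarith [Real.add_one_le_exp (κ * e)]
    _ = 1 := by rw [← Real.exp_add, neg_add_cancel, Real.exp_zero, ENNReal.ofReal_one]

end ExponentialBounds

/-- Adaptive sampling from index `N` on: given the past `F n`, the point `X (n + 1)` has density
`q n` with respect to `ν`. The field `lintegral_eq` expresses this through expectations of functions
of the past and the new point. -/
structure IsAdaptiveSampling {Ω E : Type*} [mΩ : MeasurableSpace Ω] [MeasurableSpace E]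
    (μ : Measure Ω) (ν : Measure E) (F : Filtration ℕ mΩ) (X : ℕ → Ω → E) (q : ℕ → Ω → E → ℝ)
    (N : ℕ) : Prop where
  measurable_sample : ∀ n, Measurable[F (n + 1)] (X (n + 1))
  measurable_density : ∀ n, N ≤ n →
    Measurable[(F n).prod inferInstance] (Function.uncurry (q n))
  density_nonneg : ∀ n ω y, 0 ≤ q n ω y
  integral_density : ∀ n, N ≤ n → ∀ᵐ ω ∂μ, ∫ y, q n ω y ∂ν = 1
  lintegral_eq : ∀ n, N ≤ n → ∀ Φ : Ω × E → ℝ≥0∞, Measurable[(F n).prod inferInstance] Φ →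
    ∫⁻ ω, Φ (ω, X (n + 1) ω) ∂μ = ∫⁻ ω, (∫⁻ y, Φ (ω, y) * ENNReal.ofReal (q n ω y) ∂ν) ∂μ

namespace IsAdaptiveSampling

section Concentration

variable {Ω E : Type*} [mΩ : MeasurableSpace Ω] [MeasurableSpace E] {μ : Measure Ω}
  {ν : Measure E} [SFinite ν] {F : Filtration ℕ mΩ} {X : ℕ → Ω → E} {q : ℕ → Ω → E → ℝ} {N n : ℕ}
  {v : ℕ → Ω → E → ℝ} {ε σ κ : ℝ}

lemma measurable_compensated_sum (H : IsAdaptiveSampling μ ν F X q N)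
    (hv : ∀ k, N ≤ k → Measurable[(F k).prod inferInstance] (Function.uncurry (v k)))
    (σ κ : ℝ) (n : ℕ) :
    Measurable[F n] fun ω ↦ ∑ k ∈ Finset.Ico N n,
      (σ * v k ω (X (k + 1) ω) - κ * ∫ y, v k ω y * q k ω y ∂ν) := by
  refine Finset.measurable_fun_sum _ fun k hk ↦ ?_
  obtain ⟨hNk, hkn⟩ := Finset.mem_Ico.1 hk
  have hsample : Measurable[F n] fun ω ↦ v k ω (X (k + 1) ω) :=
    (hv k hNk).comp (Measurable.prodMk (measurable_id'' (F.mono hkn.le))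
      ((H.measurable_sample k).mono (F.mono hkn) le_rfl))
  have hmean : Measurable[F k] fun ω ↦ ∫ y, v k ω y * q k ω y ∂ν :=
    measurable_integral_mul (hv k hNk) (H.measurable_density k hNk)
  exact (hsample.const_mul σ).sub ((hmean.mono (F.mono hkn.le) le_rfl).const_mul κ)

lemma lintegral_exp_compensated_sum_le_one [IsProbabilityMeasure μ]
    (H : IsAdaptiveSampling μ ν F X q N)
    (hv : ∀ k, N ≤ k → Measurable[(F k).prod inferInstance] (Function.uncurry (v k)))
    (hexp : ∀ u, 0 ≤ u → u ≤ ε → Real.exp (σ * u) ≤ 1 + κ * u) (hn : N ≤ n)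
    (hv0 : ∀ k, N ≤ k → k < n → ∀ ω y, 0 ≤ v k ω y)
    (hvε : ∀ k, N ≤ k → k < n → ∀ ω y, v k ω y ≤ ε) :
    ∫⁻ ω, ENNReal.ofReal (Real.exp (∑ k ∈ Finset.Ico N n,
      (σ * v k ω (X (k + 1) ω) - κ * ∫ y, v k ω y * q k ω y ∂ν))) ∂μ ≤ 1 := by
  induction n, hn using Nat.le_induction with
  | base => simp
  | succ n hn ih =>
    refine le_trans ?_ (ih (fun k hk hkn ↦ hv0 k hk (by omega)) fun k hk hkn ↦ hvε k hk (by omega))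
    have hsum := H.measurable_compensated_sum hv σ κ n
    have hmean : Measurable[F n] fun ω ↦ ∫ y, v n ω y * q n ω y ∂ν :=
      measurable_integral_mul (hv n hn) (H.measurable_density n hn)
    have hlast := H.lintegral_eq n hn (fun z ↦ ENNReal.ofReal (Real.exp (∑ k ∈ Finset.Ico N n,
        (σ * v k z.1 (X (k + 1) z.1) - κ * ∫ y, v k z.1 y * q k z.1 y ∂ν))) *
        ENNReal.ofReal (Real.exp (σ * v n z.1 z.2 - κ * ∫ y, v n z.1 y * q n z.1 y ∂ν)))
      ((hsum.comp measurable_fst).exp.ennreal_ofReal.mul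
        (((hv n hn).const_mul σ).sub
          ((hmean.comp measurable_fst).const_mul κ)).exp.ennreal_ofReal)
    simp only [Finset.sum_Ico_succ_top hn, Real.exp_add, ENNReal.ofReal_mul (Real.exp_pos _).le]
    rw [hlast]
    refine lintegral_mono_ae ?_
    filter_upwards [H.integral_density n hn] with ω hω
    have hvω : Measurable (v n ω) := (hv n hn).comp (@measurable_prodMk_left Ω E (F n) _ ω)
    simp only [mul_assoc]
    rw [lintegral_const_mul' _ _ ENNReal.ofReal_ne_top]
    exact mul_le_of_le_one_right' (lintegral_exp_mul_density_le_one (H.density_nonneg n ω) hω hvω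
      (hv0 n hn n.lt_succ_self ω) (hvε n hn n.lt_succ_self ω) hexp)

lemma measure_compensated_sum_ge_le [IsProbabilityMeasure μ] (H : IsAdaptiveSampling μ ν F X q N)
    (hv : ∀ k, N ≤ k → Measurable[(F k).prod inferInstance] (Function.uncurry (v k)))
    (hexp : ∀ u, 0 ≤ u → u ≤ ε → Real.exp (σ * u) ≤ 1 + κ * u) (hn : N ≤ n)
    (hv0 : ∀ k, N ≤ k → k < n → ∀ ω y, 0 ≤ v k ω y)
    (hvε : ∀ k, N ≤ k → k < n → ∀ ω y, v k ω y ≤ ε) (a : ℝ) :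
    μ {ω | a ≤ ∑ k ∈ Finset.Ico N n,
      (σ * v k ω (X (k + 1) ω) - κ * ∫ y, v k ω y * q k ω y ∂ν)} ≤
      ENNReal.ofReal (Real.exp (-a)) := by
  have hsum := (H.measurable_compensated_sum hv σ κ n).mono (F.le n) le_rfl
  calc μ {ω | a ≤ _}
      ≤ _ := measure_mono fun ω hω ↦ ENNReal.ofReal_le_ofReal (Real.exp_le_exp.2 hω)
    _ ≤ _ := meas_ge_le_lintegral_div hsum.exp.ennreal_ofReal.aemeasurable
          (ENNReal.ofReal_pos.2 (Real.exp_pos a)).ne' ENNReal.ofReal_ne_top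
    _ ≤ 1 / ENNReal.ofReal (Real.exp a) :=
        ENNReal.div_le_div_right (H.lintegral_exp_compensated_sum_le_one hv hexp hn hv0 hvε) _
    _ = ENNReal.ofReal (Real.exp (-a)) := by
        rw [one_div, Real.exp_neg, ENNReal.ofReal_inv_of_pos (Real.exp_pos a)]

-- The weights in `stepAvg γ N · n` are at most `γ n`, so the terms of the average, multiplied by
-- `ε / (γ n * B)`, are at most `ε`.
lemma measure_stepAvg_ge_le [IsProbabilityMeasure μ] (H : IsAdaptiveSampling μ ν F X q N)
    {γ : ℕ → ℝ} (hγ : IsStepSize γ N)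
    (hv : ∀ k, N ≤ k → Measurable[(F k).prod inferInstance] (Function.uncurry (v k)))
    {B : ℝ} (hε : 0 < ε) (hB : 0 < B)
    (hexp : ∀ u, 0 ≤ u → u ≤ ε → Real.exp (σ * u) ≤ 1 + κ * u) (hn : N ≤ n)
    (hv0 : ∀ k, N ≤ k → k < n → ∀ ω y, 0 ≤ v k ω y)
    (hvB : ∀ k, N ≤ k → k < n → ∀ ω y, v k ω y ≤ B) {s a : ℝ} (ha : a * (γ n * B) ≤ ε * s) :
    μ {ω | s ≤ σ * stepAvg γ N (fun k ↦ v k ω (X (k + 1) ω)) n -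
      κ * stepAvg γ N (fun k ↦ ∫ y, v k ω y * q k ω y ∂ν) n} ≤ ENNReal.ofReal (Real.exp (-a)) := by
  have hγn := hγ.pos n
  set θ : ℝ := ε / (γ n * B)
  have hθ : 0 < θ := by positivity
  have hdecay := hγ.decay_pos n
  have hweight := hγ.inputWeight_pos
  have htail := H.measure_compensated_sum_ge_le
    (v := fun k ω y ↦ θ * (decay γ N n * inputWeight γ N k) * v k ω y)
    (fun k hk ↦ (hv k hk).const_mul _) hexp hn
    (fun k hk hkn ω y ↦ mul_nonneg (mul_pos hθ (mul_pos hdecay (hweight k))).le (hv0 k hk hkn ω y))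
    (fun k hk hkn ω y ↦ by
      calc θ * (decay γ N n * inputWeight γ N k) * v k ω y ≤ θ * γ n * B := by
            have := hv0 k hk hkn ω y
            gcongr
            exacts [hγ.decay_mul_inputWeight_le hk hkn, hvB k hk hkn ω y]
        _ = ε := by simp only [θ]; field_simp) a
  refine (measure_mono fun ω hω ↦ ?_).trans htail
  calc a ≤ θ * s := by
        rw [div_mul_eq_mul_div, le_div_iff₀ (by positivity)]
        exact ha
    _ ≤ θ * (σ * stepAvg γ N (fun k ↦ v k ω (X (k + 1) ω)) n -
          κ * stepAvg γ N (fun k ↦ ∫ y, v k ω y * q k ω y ∂ν) n) :=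
        mul_le_mul_of_nonneg_left hω hθ.le
    _ = _ := by
        simp only [stepAvg, Finset.mul_sum, ← Finset.sum_sub_distrib, mul_assoc,
          integral_const_mul]
        exact Finset.sum_congr rfl fun k _ ↦ by ring

end Concentration

end IsAdaptiveSampling

/-! ### Concentration of the estimates -/

lemma ae_eventually_notMem_of_le_inv_sq {Ω : Type*} [MeasurableSpace Ω] {μ : Measure Ω}
    {s : ℕ → Set Ω} {C : ℝ}
    (h : ∀ᶠ n : ℕ in atTop, μ (s n) ≤ ENNReal.ofReal (C * ((n : ℝ) ^ 2)⁻¹)) :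
    ∀ᵐ ω ∂μ, ∀ᶠ n in atTop, ω ∉ s n := by
  obtain ⟨m, hm⟩ := eventually_atTop.1 h
  have hsum : Summable fun n : ℕ ↦ C * (((n + m : ℕ) : ℝ) ^ 2)⁻¹ :=
    ((summable_nat_add_iff m).2 (Real.summable_nat_pow_inv.2 one_lt_two)).mul_left C
  filter_upwards [ae_eventually_notMem (s := fun n ↦ s (n + m)) (ne_top_of_le_ne_top
    hsum.tsum_ofReal_ne_top (ENNReal.tsum_le_tsum fun n ↦ hm _ (by omega)))] with ω hω
  obtain ⟨j, hj⟩ := eventually_atTop.1 hω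
  filter_upwards [eventually_ge_atTop (j + m)] with n hn
  simpa only [Nat.sub_add_cancel (le_of_add_le_right hn)] using hj (n - m) (by omega)

lemma exp_neg_mul_log {n : ℕ} (hn : n ≠ 0) (p : ℕ) :
    Real.exp (-(p * Real.log n)) = ((n : ℝ) ^ p)⁻¹ := by
  rw [Real.exp_neg, Real.exp_nat_mul, Real.exp_log (by positivity)]

section Grid

lemma norm_le_sum_abs {d : ℕ} (x : Space d) : ‖x‖ ≤ ∑ i, |x i| := by
  rw [EuclideanSpace.norm_eq]
  refine Real.sqrt_le_iff.2 ⟨Finset.sum_nonneg fun _ _ ↦ abs_nonneg _, ?_⟩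
  exact Finset.sum_sq_le_sq_sum_of_nonneg fun _ _ ↦ abs_nonneg _

lemma exists_finset_card_le_forall_norm_sub_le (d R : ℕ) {m : ℕ} (hm : m ≠ 0) :
    ∃ G : Finset (Space d), G.card ≤ ((2 * R + 3) * m) ^ d ∧
      ∀ x : Space d, ‖x‖ ≤ R → ∃ z ∈ G, ‖x - z‖ ≤ d / m := by
  classical
  have hm1 : 1 ≤ m := Nat.one_le_iff_ne_zero.2 hm
  have hmpos : (0 : ℝ) < m := by positivity
  let gridPoint (j : Fin d → ℤ) : Space d := WithLp.toLp 2 fun i ↦ (j i : ℝ) / m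
  let M : ℤ := R * m + 1
  refine ⟨(Fintype.piFinset fun _ : Fin d ↦ Finset.Icc (-M) M).image gridPoint, ?_,
    fun x hx ↦ ⟨gridPoint fun i ↦ ⌊x i * m⌋, Finset.mem_image_of_mem _ ?_, ?_⟩⟩
  · refine Finset.card_image_le.trans ?_
    rw [Fintype.card_piFinset, Finset.prod_const, Finset.card_univ, Fintype.card_fin, Int.card_Icc]
    refine Nat.pow_le_pow_left (Int.toNat_le.2 ?_) d
    push_cast [M]
    nlinarith
  · refine Fintype.mem_piFinset.2 fun i ↦ Finset.mem_Icc.2 ?_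
    obtain ⟨hlo, hhi⟩ := abs_le.1 ((PiLp.norm_apply_le x i).trans hx)
    refine ⟨Int.le_floor.2 ?_, Int.floor_le_iff.2 ?_⟩ <;> push_cast [M] <;> nlinarith
  · calc ‖x - gridPoint fun i ↦ ⌊x i * m⌋‖ ≤ ∑ i, |x i - ⌊x i * m⌋ / m| := norm_le_sum_abs _
      _ ≤ ∑ _i : Fin d, 1 / (m : ℝ) := Finset.sum_le_sum fun i _ ↦ by
          rw [← mul_div_cancel_right₀ (x i) hmpos.ne', ← sub_div, abs_div, abs_of_pos hmpos,
            mul_div_cancel_right₀ _ hmpos.ne', Int.self_sub_floor, Int.abs_fract]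
          gcongr
          exact (Int.fract_lt_one _).le
      _ = d / m := by simp [div_eq_mul_inv]

end Grid

lemma IsStepSize.abs_stepAvg_sub_le {γ : ℕ → ℝ} {N n : ℕ} (h : IsStepSize γ N) {u v : ℕ → ℝ}
    {D : ℝ} (hD : 0 ≤ D) (hn : N ≤ n) (huv : ∀ k, N ≤ k → k < n → |u k - v k| ≤ D) :
    |stepAvg γ N u n - stepAvg γ N v n| ≤ D := by
  have hweight := fun k ↦ (h.inputWeight_pos k).le
  calc |stepAvg γ N u n - stepAvg γ N v n|
      = decay γ N n * |∑ k ∈ Finset.Ico N n, inputWeight γ N k * (u k - v k)| := by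
        simp only [stepAvg, ← mul_sub, ← Finset.sum_sub_distrib, abs_mul,
          abs_of_pos (h.decay_pos n)]
    _ ≤ stepAvg γ N (fun _ ↦ D) n := by
        refine mul_le_mul_of_nonneg_left ((Finset.abs_sum_le_sum_abs _ _).trans
          (Finset.sum_le_sum fun k hk ↦ ?_)) (h.decay_pos n).le
        obtain ⟨hNk, hkn⟩ := Finset.mem_Ico.1 hk
        rw [abs_mul, abs_of_nonneg (hweight k)]
        exact mul_le_mul_of_nonneg_left (huv k hNk hkn) (hweight k)
    _ ≤ D := by
        rw [h.stepAvg_const D hn]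
        exact mul_le_of_le_one_right hD (by linarith [h.decay_pos n])

namespace Setting

variable {d : ℕ} {S : Setting d} {k n : ℕ}

section Measurability

variable {Ω : Type*} {_ : MeasurableSpace Ω} {p : Ω → Space d → ℝ}

lemma measurable_uncurry_weight (hp : Measurable (Function.uncurry p)) (k : ℕ) :
    Measurable (Function.uncurry fun ω ↦ S.weight (p ω) k) :=
  (((S.continuous_f.measurable.comp measurable_snd).div hp).pow_const S.η).min measurable_const

lemma measurable_uncurry_bump (hp : Measurable (Function.uncurry p)) (k : ℕ) (x : Space d) :
    Measurable (Function.uncurry fun ω ↦ S.bump (p ω) k x) :=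
  (measurable_uncurry_weight hp k).mul (((continuous_kb S.continuous_K).comp
    (continuous_const.sub continuous_id)).measurable.comp measurable_snd)

end Measurability

section Bounds

lemma inv_natCast_le_lam (hn : S.N ≤ n) : (n : ℝ)⁻¹ ≤ S.lam n :=
  (S.inv_le n hn).trans <| mul_le_of_le_one_right (S.lam_pos n).le <|
    pow_le_one₀ (S.b_pos n).le (S.b_le_one n hn)

lemma natCast_pos (hn : S.N ≤ n) : (0 : ℝ) < n := by
  have := S.two_le_N
  exact_mod_cast (by omega : 0 < n)

lemma inv_b_pow_le (hn : S.N ≤ n) : (S.b n ^ d)⁻¹ ≤ (n : ℝ) :=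
  inv_le_of_inv_le₀ (natCast_pos hn) <| (S.inv_le n hn).trans <|
    mul_le_of_le_one_left (pow_nonneg (S.b_pos n).le d) (by linarith [S.lam_le_half n hn])

lemma inv_b_le (hn : S.N ≤ n) : (S.b n)⁻¹ ≤ (n : ℝ) :=
  (inv_anti₀ (pow_pos (S.b_pos n) d) (pow_le_of_le_one (S.b_pos n).le (S.b_le_one n hn)
    (Nat.one_le_iff_ne_zero.1 S.one_le_dim))).trans (inv_b_pow_le hn)

lemma truncLevel_le (hkn : k < n) : S.truncLevel k ≤ S.c ^ (-S.η) * S.lam n ^ (-S.η) := by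
  have hc := S.c_pos
  have hlam := S.lam_pos n
  rw [← Real.mul_rpow hc.le hlam.le]
  refine Real.rpow_le_rpow_of_nonpos (by positivity) ?_ (by linarith [S.η_pos])
  gcongr
  exact S.lam_antitone hkn

lemma lam_rpow_neg_le (hn : S.N ≤ n) : S.lam n ^ (-S.η) ≤ n := by
  rw [Real.rpow_neg (S.lam_pos n).le]
  refine inv_le_of_inv_le₀ (natCast_pos hn) ((inv_natCast_le_lam hn).trans ?_)
  exact Real.self_le_rpow_of_le_one (S.lam_pos n).le (by linarith [S.lam_le_half n hn])
    S.η_lt_one.le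

lemma eventually_mul_log_mul_le (S : Setting d) (A : ℝ) :
    ∀ᶠ n : ℕ in atTop, A * Real.log n * S.γ n ≤ S.lam n * S.b n ^ d := by
  have hlim := S.tendsto_rate.const_mul A
  rw [mul_zero] at hlim
  filter_upwards [hlim.eventually (ge_mem_nhds one_pos)] with n hn
  have hlam := S.lam_pos n
  have hb := S.b_pos n
  rw [← mul_div_assoc, div_le_one (by positivity)] at hn
  linarith

lemma lam_rpow_one_sub (S : Setting d) (n : ℕ) :
    S.lam n ^ (1 - S.η) = S.lam n * S.lam n ^ (-S.η) := by
  rw [sub_eq_add_neg, Real.rpow_add (S.lam_pos n), Real.rpow_one]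

lemma bump_le {C : ℝ} (hC : ∀ x, S.K x ≤ C) (hkn : k < n) {p : Space d → ℝ} (x y : Space d) :
    S.bump p k x y ≤ S.c ^ (-S.η) * S.lam n ^ (-S.η) * ((S.b n ^ d)⁻¹ * C) := by
  have hb := S.b_pos n
  have hC0 : 0 ≤ C := (S.K_nonneg 0).trans (hC 0)
  calc S.bump p k x y ≤ S.truncLevel k * ((S.b (k + 1) ^ d)⁻¹ * C) :=
        mul_le_mul (weight_le_truncLevel p k y) (kb_le hC (S.b_pos _).le _)
          (kb_nonneg S.K_nonneg (S.b_pos _).le _) (S.truncLevel_pos k).le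
    _ ≤ S.c ^ (-S.η) * S.lam n ^ (-S.η) * ((S.b n ^ d)⁻¹ * C) := by
        have htrunc := truncLevel_le (S := S) hkn
        have := S.b_pos (k + 1)
        refine mul_le_mul htrunc ?_ (by positivity) ((S.truncLevel_pos k).le.trans htrunc)
        gcongr
        exact S.b_antitone hkn

lemma abs_bump_sub_bump_le {L : ℝ≥0} (hL : LipschitzWith L S.K) (hn : S.N ≤ n) (hkn : k < n)
    {p : Space d → ℝ} (hp : ∀ y, 0 ≤ p y) (x z y : Space d) :
    |S.bump p k x y - S.bump p k z y| ≤ S.c ^ (-S.η) * L * n ^ 3 * ‖x - z‖ := by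
  have hb := S.b_pos n
  have hbk : S.b n ≤ S.b (k + 1) := S.b_antitone hkn
  have hcη := Real.rpow_pos_of_pos S.c_pos (-S.η)
  have hweight : S.weight p k y ≤ S.c ^ (-S.η) * n :=
    (weight_le_truncLevel p k y).trans ((truncLevel_le hkn).trans (by
      gcongr
      exact lam_rpow_neg_le hn))
  have hkb : |kb S.K (S.b (k + 1)) (x - y) - kb S.K (S.b (k + 1)) (z - y)| ≤
      n * (L * (n * ‖x - z‖)) := by
    refine (abs_kb_sub_kb_le hL (S.b_pos _).le _ _).trans ?_
    rw [sub_sub_sub_cancel_right]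
    have := S.b_pos (k + 1)
    gcongr
    · exact (inv_anti₀ (by positivity) (by gcongr)).trans (inv_b_pow_le hn)
    · exact (inv_anti₀ hb hbk).trans (inv_b_le hn)
  calc |S.bump p k x y - S.bump p k z y|
      = S.weight p k y * |kb S.K (S.b (k + 1)) (x - y) - kb S.K (S.b (k + 1)) (z - y)| := by
        rw [bump, bump, ← mul_sub, abs_mul, abs_of_nonneg (weight_nonneg hp k y)]
    _ ≤ S.c ^ (-S.η) * n * (n * (L * (n * ‖x - z‖))) := by gcongr
    _ = S.c ^ (-S.η) * L * n ^ 3 * ‖x - z‖ := by ring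

lemma abs_meanBump_sub_meanBump_le {L : ℝ≥0} (hL : LipschitzWith L S.K) (hn : S.N ≤ n)
    (hkn : k < n) {p : Space d → ℝ} (hp : ∀ y, 0 ≤ p y) (hp1 : ∫ y, p y = 1) (x z : Space d) :
    |S.meanBump p k x - S.meanBump p k z| ≤ S.c ^ (-S.η) * L * n ^ 3 * ‖x - z‖ := by
  have hint : Integrable p := .of_integral_ne_zero (by simp [hp1])
  rw [meanBump, meanBump, ← integral_sub (integrable_bump_mul hint hp k x)
    (integrable_bump_mul hint hp k z), ← Real.norm_eq_abs]
  refine (norm_integral_le_of_norm_le (hint.const_mul (S.c ^ (-S.η) * L * n ^ 3 * ‖x - z‖))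
    (.of_forall fun y ↦ ?_)).trans_eq (by rw [integral_const_mul, hp1, mul_one])
  rw [← sub_mul, norm_mul, Real.norm_eq_abs, Real.norm_of_nonneg (hp y)]
  exact mul_le_mul_of_nonneg_right (abs_bump_sub_bump_le hL hn hkn hp x z y) (hp y)

end Bounds

end Setting

lemma ae_forall_pos_of_forall_le_one {Ω : Type*} [MeasurableSpace Ω] {μ : Measure Ω}
    {P : ℝ → Ω → Prop} (hP : ∀ ω ε δ, ε ≤ δ → P ε ω → P δ ω)
    (h : ∀ ε > 0, ε ≤ 1 → ∀ᵐ ω ∂μ, P ε ω) : ∀ᵐ ω ∂μ, ∀ ε > 0, P ε ω := by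
  have hcount : ∀ᵐ ω ∂μ, ∀ j : ℕ, P (1 / (j + 1)) ω := ae_all_iff.2 fun j ↦
    h _ Nat.one_div_pos_of_nat (by simpa using Nat.one_div_le_one_div (α := ℝ) j.zero_le)
  filter_upwards [hcount] with ω hω ε hε
  obtain ⟨j, hj⟩ := exists_nat_one_div_lt hε
  exact hP ω _ _ hj.le (hω j)

namespace IsAdaptiveSampling

variable {d : ℕ} {S : Setting d} {Ω : Type*} [mΩ : MeasurableSpace Ω] {μ : Measure Ω}
  [IsProbabilityMeasure μ] {F : Filtration ℕ mΩ} {X : ℕ → Ω → Space d}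
  {q : ℕ → Ω → Space d → ℝ} {ε : ℝ}

lemma ae_eventually_weight_le_of_le_one (H : IsAdaptiveSampling μ volume F X q S.N) (hε : 0 < ε)
    (hε1 : ε ≤ 1) : ∀ᵐ ω ∂μ, ∀ᶠ n in atTop,
      stepAvg S.γ S.N (fun k ↦ S.weight (q k ω) k (X (k + 1) ω)) n ≤
        (1 + ε) * stepAvg S.γ S.N (fun k ↦ ∫ y, S.weight (q k ω) k y * q k ω y) n + ε := by
  have hcη := Real.rpow_pos_of_pos S.c_pos (-S.η)
  have hbad := ae_eventually_notMem_of_le_inv_sq (μ := μ) (C := 1) (s := fun n ↦ {ω | ε ≤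
    1 * stepAvg S.γ S.N (fun k ↦ S.weight (q k ω) k (X (k + 1) ω)) n -
    (1 + ε) * stepAvg S.γ S.N (fun k ↦ ∫ y, S.weight (q k ω) k y * q k ω y) n}) ?_
  · filter_upwards [hbad] with ω hω
    filter_upwards [hω] with n hn
    linarith [not_le.1 hn]
  filter_upwards [eventually_ge_atTop S.N,
    S.eventually_mul_log_mul_le (2 * S.c ^ (-S.η) / ε ^ 2)] with n hn hlog
  have hlam := S.lam_pos n
  have hlamη := Real.rpow_pos_of_pos hlam (-S.η)
  rw [one_mul, ← exp_neg_mul_log (by have := S.two_le_N; omega)]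
  refine H.measure_stepAvg_ge_le S.isStepSize
    (fun k hk ↦ Setting.measurable_uncurry_weight (H.measurable_density k hk) k) hε
    (mul_pos hcη hlamη) (fun u ↦ exp_le_one_add_mul hε1) hn
    (fun k _ _ ω ↦ Setting.weight_nonneg (H.density_nonneg k ω) k)
    (fun k _ hkn ω y ↦ (Setting.weight_le_truncLevel _ k y).trans (Setting.truncLevel_le hkn)) ?_
  have hlam1 : S.lam n * S.b n ^ d * S.lam n ^ (-S.η) ≤ 1 := by
    rw [mul_right_comm, ← S.lam_rpow_one_sub]
    exact mul_le_one₀ (Real.rpow_le_one hlam.le (by linarith [S.lam_le_half n hn])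
      (by linarith [S.η_lt_one])) (pow_nonneg (S.b_pos n).le d)
      (pow_le_one₀ (S.b_pos n).le (S.b_le_one n hn))
  calc ((2 : ℕ) : ℝ) * Real.log n * (S.γ n * (S.c ^ (-S.η) * S.lam n ^ (-S.η)))
      = ε ^ 2 * (2 * S.c ^ (-S.η) / ε ^ 2 * Real.log n * S.γ n * S.lam n ^ (-S.η)) := by
        push_cast
        field_simp
    _ ≤ ε ^ 2 * (S.lam n * S.b n ^ d * S.lam n ^ (-S.η)) := by gcongr
    _ ≤ ε ^ 2 * 1 := by gcongr
    _ = ε * ε := by ring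

lemma ae_eventually_weight_le (H : IsAdaptiveSampling μ volume F X q S.N) :
    ∀ᵐ ω ∂μ, ∀ ε > 0, ∀ᶠ n in atTop,
      stepAvg S.γ S.N (fun k ↦ S.weight (q k ω) k (X (k + 1) ω)) n ≤
        (1 + ε) * stepAvg S.γ S.N (fun k ↦ ∫ y, S.weight (q k ω) k y * q k ω y) n + ε := by
  refine ae_forall_pos_of_forall_le_one (fun ω ε δ hεδ hω ↦ ?_)
    fun ε hε hε1 ↦ H.ae_eventually_weight_le_of_le_one hε hε1
  filter_upwards [hω] with n hn
  have hmean : 0 ≤ stepAvg S.γ S.N (fun k ↦ ∫ y, S.weight (q k ω) k y * q k ω y) n :=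
    S.isStepSize.stepAvg_nonneg (fun k _ ↦ integral_nonneg fun y ↦ mul_nonneg
      (Setting.weight_nonneg (H.density_nonneg k ω) k y) (H.density_nonneg k ω y)) n
  exact hn.trans (by gcongr)

lemma eventually_forall_measure_bump_lt_le (H : IsAdaptiveSampling μ volume F X q S.N) (hε : 0 < ε)
    (hε1 : ε ≤ 1) (p : ℕ) : ∀ᶠ n : ℕ in atTop, ∀ x : Space d,
      μ {ω | ε / 2 * S.lam n ^ (1 - S.η) ≤
        -1 * stepAvg S.γ S.N (fun k ↦ S.bump (q k ω) k x (X (k + 1) ω)) n -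
        -(1 - ε) * S.meanEstimate (q · ω) n x} ≤ ENNReal.ofReal ((n : ℝ) ^ p)⁻¹ := by
  obtain ⟨C, hC⟩ := S.K_bdd
  have hC0 : 0 < C := S.K_zero_pos.trans_le (hC 0)
  have hcη := Real.rpow_pos_of_pos S.c_pos (-S.η)
  filter_upwards [eventually_ge_atTop S.N,
    S.eventually_mul_log_mul_le (2 * p * S.c ^ (-S.η) * C / ε ^ 2)] with n hn hlog x
  have hlam := S.lam_pos n
  have := Real.rpow_pos_of_pos hlam (-S.η)
  have hb := S.b_pos n
  rw [← exp_neg_mul_log (by have := S.two_le_N; omega)]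
  refine H.measure_stepAvg_ge_le S.isStepSize
    (fun k hk ↦ Setting.measurable_uncurry_bump (H.measurable_density k hk) k x) hε
    (by positivity) (fun u ↦ exp_neg_le_one_sub_mul hε1) hn
    (fun k _ _ ω ↦ Setting.bump_nonneg (H.density_nonneg k ω) k x)
    (fun k _ hkn ω ↦ Setting.bump_le hC hkn x) ?_
  rw [S.lam_rpow_one_sub]
  calc (p : ℝ) * Real.log n *
        (S.γ n * (S.c ^ (-S.η) * S.lam n ^ (-S.η) * ((S.b n ^ d)⁻¹ * C)))
      = ε ^ 2 / 2 * (S.lam n ^ (-S.η) * (S.b n ^ d)⁻¹) *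
          (2 * p * S.c ^ (-S.η) * C / ε ^ 2 * Real.log n * S.γ n) := by
        field_simp
    _ ≤ ε ^ 2 / 2 * (S.lam n ^ (-S.η) * (S.b n ^ d)⁻¹) * (S.lam n * S.b n ^ d) := by gcongr
    _ = ε * (ε / 2 * (S.lam n * S.lam n ^ (-S.η))) := by field_simp

lemma eventually_measure_exists_bump_lt_le (H : IsAdaptiveSampling μ volume F X q S.N)
    (hε : 0 < ε) (hε1 : ε ≤ 1) {C : ℝ} {p : ℕ} {G : ℕ → Finset (Space d)}
    (hG : ∀ n ≠ 0, ((G n).card : ℝ) ≤ C * n ^ p) : ∀ᶠ n : ℕ in atTop,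
      μ (⋃ x ∈ G n, {ω | ε / 2 * S.lam n ^ (1 - S.η) ≤
        -1 * stepAvg S.γ S.N (fun k ↦ S.bump (q k ω) k x (X (k + 1) ω)) n -
        -(1 - ε) * S.meanEstimate (q · ω) n x}) ≤ ENNReal.ofReal (C * ((n : ℝ) ^ 2)⁻¹) := by
  filter_upwards [H.eventually_forall_measure_bump_lt_le hε hε1 (p + 2), eventually_ne_atTop 0]
    with n hn hn0
  have : (0 : ℝ) < n := by positivity
  calc _ ≤ ∑ _x ∈ G n, ENNReal.ofReal ((n : ℝ) ^ (p + 2))⁻¹ :=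
        (measure_biUnion_finset_le _ _).trans (Finset.sum_le_sum fun x _ ↦ hn x)
    _ = ENNReal.ofReal ((G n).card * ((n : ℝ) ^ (p + 2))⁻¹) := by
        rw [Finset.sum_const, nsmul_eq_mul, ENNReal.ofReal_mul (by positivity),
          ENNReal.ofReal_natCast]
    _ ≤ ENNReal.ofReal (C * ((n : ℝ) ^ 2)⁻¹) := by
        refine ENNReal.ofReal_le_ofReal ?_
        calc ((G n).card : ℝ) * ((n : ℝ) ^ (p + 2))⁻¹ ≤ C * n ^ p * ((n : ℝ) ^ (p + 2))⁻¹ := by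
              gcongr
              exact hG n hn0
          _ = C * ((n : ℝ) ^ 2)⁻¹ := by
              rw [pow_add]
              field_simp

end IsAdaptiveSampling

-- The two averages are Lipschitz with constant `O(n³)`, so an `n⁻⁵`-fine grid suffices.
lemma Setting.eventually_bump_ge_of_grid {d : ℕ} (S : Setting d) {ε R : ℝ} (hε : 0 < ε)
    (hε1 : ε ≤ 1) {G : ℕ → Finset (Space d)}
    (hG : ∀ n ≠ 0, ∀ x : Space d, ‖x‖ ≤ R → ∃ z ∈ G n, ‖x - z‖ ≤ d / ((n ^ 5 : ℕ) : ℝ)) :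
    ∀ᶠ n : ℕ in atTop, ∀ (q : ℕ → Space d → ℝ) (Y : ℕ → Space d),
      (∀ k y, 0 ≤ q k y) → (∀ k, S.N ≤ k → ∫ y, q k y = 1) →
      (∀ z ∈ G n, (1 - ε) * S.meanEstimate q n z - ε / 2 * S.lam n ^ (1 - S.η) ≤
        stepAvg S.γ S.N (fun k ↦ S.bump (q k) k z (Y k)) n) →
      ∀ x, ‖x‖ ≤ R → (1 - ε) * S.meanEstimate q n x - ε * S.lam n ^ (1 - S.η) ≤
        stepAvg S.γ S.N (fun k ↦ S.bump (q k) k x (Y k)) n := by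
  obtain ⟨L, hL⟩ := S.K_lipschitz
  have hcη := Real.rpow_pos_of_pos S.c_pos (-S.η)
  filter_upwards [eventually_ge_atTop S.N,
    tendsto_natCast_atTop_atTop.eventually_ge_atTop (4 / ε * (S.c ^ (-S.η) * L * d))]
    with n hn hnε q Y hq0 hq1 hgrid x hx
  have hnpos := Setting.natCast_pos (S := S) hn
  obtain ⟨z, hz, hxz⟩ := hG n (by exact_mod_cast hnpos.ne') x hx
  set D := S.c ^ (-S.η) * L * n ^ 3 * ‖x - z‖ with hD
  have hD0 : 0 ≤ D := by positivity
  have hDle : 2 * D ≤ ε / 2 * S.lam n ^ (1 - S.η) := calc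
    2 * D ≤ 2 * (S.c ^ (-S.η) * L * n ^ 3 * (d / ((n ^ 5 : ℕ) : ℝ))) := by
        rw [hD]
        gcongr
    _ = ε / 2 * ((n : ℝ)⁻¹ * (4 / ε * (S.c ^ (-S.η) * L * d) * (n : ℝ)⁻¹)) := by
        push_cast
        field_simp
        ring
    _ ≤ ε / 2 * ((n : ℝ)⁻¹ * 1) := by
        gcongr
        rwa [← div_eq_mul_inv, div_le_one hnpos]
    _ ≤ ε / 2 * S.lam n ^ (1 - S.η) := by
        rw [mul_one]
        gcongr
        exact (Setting.inv_natCast_le_lam hn).trans (S.lam_le_rpow hn)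
  have hbump := (abs_le.1 (S.isStepSize.abs_stepAvg_sub_le hD0 hn fun k _ hkn ↦
    Setting.abs_bump_sub_bump_le hL hn hkn (hq0 k) x z (Y k))).1
  have hmean := (abs_le.1 (S.isStepSize.abs_stepAvg_sub_le hD0 hn fun k hk hkn ↦
    Setting.abs_meanBump_sub_meanBump_le hL hn hkn (hq0 k) (hq1 k hk) x z)).2
  have hmeanε : (1 - ε) * (S.meanEstimate q n x - S.meanEstimate q n z) ≤ D :=
    (mul_le_mul_of_nonneg_left hmean (sub_nonneg.2 hε1)).trans
      (mul_le_of_le_one_left hD0 (by linarith))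
  linarith [hgrid z hz]

namespace IsAdaptiveSampling

variable {d : ℕ} {S : Setting d} {Ω : Type*} [mΩ : MeasurableSpace Ω] {μ : Measure Ω}
  [IsProbabilityMeasure μ] {F : Filtration ℕ mΩ} {X : ℕ → Ω → Space d}
  {q : ℕ → Ω → Space d → ℝ} {ε : ℝ}

lemma ae_eventually_bump_ge_of_le_one (H : IsAdaptiveSampling μ volume F X q S.N) (R : ℕ)
    (hε : 0 < ε) (hε1 : ε ≤ 1) : ∀ᵐ ω ∂μ, ∀ᶠ n in atTop, ∀ x, ‖x‖ ≤ R →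
      (1 - ε) * S.meanEstimate (q · ω) n x - ε * S.lam n ^ (1 - S.η) ≤
        stepAvg S.γ S.N (fun k ↦ S.bump (q k ω) k x (X (k + 1) ω)) n := by
  have hexists : ∀ n : ℕ, ∃ G : Finset (Space d), n ≠ 0 →
      G.card ≤ ((2 * R + 3) * n ^ 5) ^ d ∧
      ∀ x : Space d, ‖x‖ ≤ R → ∃ z ∈ G, ‖x - z‖ ≤ d / ((n ^ 5 : ℕ) : ℝ) := fun n ↦ by
    by_cases hn : n = 0
    · exact ⟨∅, fun h ↦ absurd hn h⟩
    · obtain ⟨G, hG⟩ := exists_finset_card_le_forall_norm_sub_le d R (pow_ne_zero 5 hn)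
      exact ⟨G, fun _ ↦ hG⟩
  choose G hG using hexists
  have hcard : ∀ n ≠ 0, ((G n).card : ℝ) ≤ (2 * R + 3) ^ d * (n : ℝ) ^ (5 * d) := fun n hn ↦ by
    rw [pow_mul, ← mul_pow]
    exact_mod_cast (hG n hn).1
  have hq1 : ∀ᵐ ω ∂μ, ∀ k, S.N ≤ k → ∫ y, q k ω y = 1 :=
    ae_all_iff.2 fun k ↦ eventually_imp_distrib_left.2 (H.integral_density k)
  filter_upwards [hq1, ae_eventually_notMem_of_le_inv_sq
    (H.eventually_measure_exists_bump_lt_le hε hε1 hcard)] with ω hq1 hω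
  filter_upwards [hω, S.eventually_bump_ge_of_grid hε hε1 fun n hn ↦ (hG n hn).2] with n hn hLip
  refine hLip (q · ω) (fun k ↦ X (k + 1) ω) (H.density_nonneg · ω) hq1 fun z hz ↦ ?_
  by_contra! hlt
  refine hn (Set.mem_biUnion hz ?_)
  rw [Set.mem_ofPred_eq]
  linarith

lemma ae_eventually_bump_ge (H : IsAdaptiveSampling μ volume F X q S.N) :
    ∀ᵐ ω ∂μ, ∀ R : ℝ, ∀ ε > 0, ∀ᶠ n in atTop, ∀ x, ‖x‖ ≤ R →
      (1 - ε) * S.meanEstimate (q · ω) n x - ε * S.lam n ^ (1 - S.η) ≤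
        stepAvg S.γ S.N (fun k ↦ S.bump (q k ω) k x (X (k + 1) ω)) n := by
  have hcount : ∀ᵐ ω ∂μ, ∀ R : ℕ, ∀ ε > 0, ∀ᶠ n in atTop, ∀ x, ‖x‖ ≤ R →
      (1 - ε) * S.meanEstimate (q · ω) n x - ε * S.lam n ^ (1 - S.η) ≤
        stepAvg S.γ S.N (fun k ↦ S.bump (q k ω) k x (X (k + 1) ω)) n := by
    refine ae_all_iff.2 fun R ↦ ae_forall_pos_of_forall_le_one (fun ω ε δ hεδ hω ↦ ?_)
      fun ε hε hε1 ↦ H.ae_eventually_bump_ge_of_le_one R hε hε1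
    filter_upwards [hω] with n hn x hx
    have hmean : 0 ≤ S.meanEstimate (q · ω) n x := S.isStepSize.stepAvg_nonneg
      (fun k _ ↦ Setting.meanBump_nonneg (H.density_nonneg k ω) k x) n
    have := Real.rpow_nonneg (S.lam_pos n).le (1 - S.η)
    refine le_trans ?_ (hn x hx)
    gcongr
  filter_upwards [hcount] with ω hω R ε hε
  filter_upwards [hω ⌈R⌉₊ ε hε] with n hn x hx
  exact hn x (hx.trans (Nat.le_ceil R))

end IsAdaptiveSampling

section Run

/-! ### The algorithm almost surely follows a typical path -/

lemma forall_nonneg_of_forall_integral_tent_mul_nonneg {d : ℕ} {u : ℕ → Space d}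
    (hu : DenseRange u) {h : Space d → ℝ} (hh : Continuous h)
    (hint : ∀ i j : ℕ, 0 ≤ ∫ y, tent (u i) (1 / ((j : ℝ) + 1)) y * h y) (x : Space d) :
    0 ≤ h x := by
  by_contra! hx
  obtain ⟨r, hr, hball⟩ := Metric.isOpen_iff.1 (isOpen_lt hh continuous_const) x hx
  obtain ⟨j, hj⟩ := exists_nat_one_div_lt (half_pos hr)
  obtain ⟨i, hi⟩ := hu.exists_dist_lt x (half_pos hr)
  have hρ : (0 : ℝ) < 1 / ((j : ℝ) + 1) := by positivity
  set ρ : ℝ := 1 / ((j : ℝ) + 1)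
  have hneg : ∀ y ∈ closedBall (u i) ρ, h y < 0 := fun y hy ↦ hball <| by
    rw [mem_ball]
    linarith [dist_triangle y (u i) x, mem_closedBall.1 hy, dist_comm x (u i)]
  have hnonneg : ∀ y, 0 ≤ tent (u i) ρ y * -h y := fun y ↦ by
    by_cases hy : y ∈ closedBall (u i) ρ
    · exact mul_nonneg (tent_nonneg _ _ _) (by linarith [hneg y hy])
    · rw [tent_eq_zero_of_notMem_closedBall hρ hy, zero_mul]
  have hcont : Continuous fun y ↦ tent (u i) ρ y * -h y := (continuous_tent _ _).mul hh.neg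
  have hpos : 0 < ∫ y, tent (u i) ρ y * -h y :=
    hcont.integral_pos_of_hasCompactSupport_nonneg_nonzero
      (hasCompactSupport_tent (u i) hρ).mul_right hnonneg (x := u i) (by
        simpa [tent_self] using (hneg _ (mem_closedBall_self hρ.le)).ne)
  simp only [mul_neg, integral_neg] at hpos
  linarith [hint i j]

lemma measurableSet_forall_mem_nonpos {Ω E : Type*} {_ : MeasurableSpace Ω} [TopologicalSpace E]
    [TopologicalSpace.SeparableSpace E] {U : Set E} (hU : IsOpen U) {h : Ω → E → ℝ}
    (hc : ∀ ω, Continuous (h ω)) (hm : ∀ y, Measurable fun ω ↦ h ω y) :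
    MeasurableSet {ω | ∀ y ∈ U, h ω y ≤ 0} := by
  obtain ⟨s, hs, hsd⟩ := TopologicalSpace.exists_countable_dense E
  have heq : {ω | ∀ y ∈ U, h ω y ≤ 0} = ⋂ y ∈ U ∩ s, {ω | h ω y ≤ 0} := by
    ext ω
    refine ⟨fun hω ↦ Set.mem_iInter₂.2 fun y hy ↦ hω y hy.1, fun hω y hy ↦ ?_⟩
    by_contra! hpos
    obtain ⟨z, hzs, hz⟩ := hsd.exists_mem_open (hU.inter (isOpen_lt continuous_const (hc ω)))
      ⟨y, hy, hpos⟩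
    have hle : h ω z ≤ 0 := Set.mem_iInter₂.1 hω z ⟨hz.1, hzs⟩
    exact hle.not_gt hz.2
  rw [heq]
  exact .biInter (hs.mono Set.inter_subset_right) fun y _ ↦ measurableSet_le (hm y) measurable_const

lemma setLIntegral_comp_eq_of_condExp_ae_eq {Ω E : Type*} {m mΩ : MeasurableSpace Ω}
    [TopologicalSpace E] [MeasurableSpace E] [BorelSpace E] {μ : Measure Ω} [IsFiniteMeasure μ]
    {ν : Measure E} {Y : Ω → E} {p : Ω → E → ℝ} (hm : m ≤ mΩ) (hY : Measurable Y)
    (hp0 : ∀ᵐ ω ∂μ, ∀ y, 0 ≤ p ω y) (hp : ∀ᵐ ω ∂μ, Integrable (p ω) ν)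
    {φ : BoundedContinuousFunction E ℝ≥0}
    (hφ : μ[fun ω ↦ (φ (Y ω) : ℝ) | m] =ᵐ[μ] fun ω ↦ ∫ y, φ y * p ω y ∂ν)
    {s : Set Ω} (hs : MeasurableSet[m] s) :
    ∫⁻ ω in s, φ (Y ω) ∂μ = ∫⁻ ω in s, (∫⁻ y, φ y * ENNReal.ofReal (p ω y) ∂ν) ∂μ := by
  have hφm : Measurable fun y ↦ (φ y : ℝ) :=
    measurable_coe_nnreal_real.comp φ.continuous.measurable
  have hφC : ∀ y, ‖(φ y : ℝ)‖ ≤ nndist φ 0 := fun y ↦ by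
    rw [Real.norm_of_nonneg (NNReal.coe_nonneg _)]
    exact_mod_cast BoundedContinuousFunction.NNReal.upper_bound φ y
  have hφY : Integrable (fun ω ↦ (φ (Y ω) : ℝ)) μ :=
    .of_bound (hφm.comp hY).aestronglyMeasurable _ (.of_forall fun _ ↦ hφC _)
  have hmean : Integrable (fun ω ↦ ∫ y, φ y * p ω y ∂ν) μ := integrable_condExp.congr hφ
  calc ∫⁻ ω in s, φ (Y ω) ∂μ = ENNReal.ofReal (∫ ω in s, (φ (Y ω) : ℝ) ∂μ) := by
        rw [ofReal_integral_eq_lintegral_ofReal hφY.integrableOn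
          (.of_forall fun _ ↦ NNReal.coe_nonneg _)]
        simp only [ENNReal.ofReal_coe_nnreal]
    _ = ENNReal.ofReal (∫ ω in s, (∫ y, φ y * p ω y ∂ν) ∂μ) := by
        rw [← setIntegral_condExp hm hφY hs, integral_congr_ae (ae_restrict_of_ae hφ)]
    _ = ∫⁻ ω in s, ENNReal.ofReal (∫ y, φ y * p ω y ∂ν) ∂μ := by
        refine ofReal_integral_eq_lintegral_ofReal hmean.integrableOn (ae_restrict_of_ae ?_)
        filter_upwards [hp0] with ω hω
        exact integral_nonneg fun y ↦ mul_nonneg (NNReal.coe_nonneg _) (hω y)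
    _ = _ := by
        refine lintegral_congr_ae (ae_restrict_of_ae ?_)
        filter_upwards [hp0, hp] with ω hω hωp
        rw [ofReal_integral_eq_lintegral_ofReal
          (hωp.bdd_mul hφm.aestronglyMeasurable (.of_forall hφC))
          (.of_forall fun y ↦ mul_nonneg (NNReal.coe_nonneg _) (hω y))]
        simp only [ENNReal.ofReal_mul (NNReal.coe_nonneg _), ENNReal.ofReal_coe_nnreal]

lemma IsAdaptiveSampling.ae_eq_zero_of_measure_inter_preimage_eq_zero {Ω E : Type*}
    [mΩ : MeasurableSpace Ω] [MeasurableSpace E] {μ : Measure Ω} {ν : Measure E} [SFinite ν]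
    {F : Filtration ℕ mΩ} {X : ℕ → Ω → E} {q : ℕ → Ω → E → ℝ} {N n : ℕ}
    (H : IsAdaptiveSampling μ ν F X q N) (hn : N ≤ n) {D : Set Ω} (hD : MeasurableSet[F n] D)
    {B : Set E} (hB : MeasurableSet B) (h0 : μ (D ∩ X (n + 1) ⁻¹' B) = 0) :
    ∀ᵐ ω ∂μ, ω ∈ D → ∀ᵐ y ∂ν, y ∈ B → q n ω y = 0 := by
  set Φ : Ω × E → ℝ≥0∞ := (D ×ˢ B).indicator 1
  have hΦ : Measurable[(F n).prod inferInstance] Φ :=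
    Measurable.indicator (@measurable_const _ _ _ ((F n).prod inferInstance) _)
      (@MeasurableSet.prod _ _ (F n) _ _ _ hD hB)
  have hzero : ∫⁻ ω, (∫⁻ y, Φ (ω, y) * ENNReal.ofReal (q n ω y) ∂ν) ∂μ = 0 := by
    rw [← H.lintegral_eq n hn Φ hΦ]
    have : ∀ᵐ ω ∂μ, Φ (ω, X (n + 1) ω) = 0 := by
      filter_upwards [measure_eq_zero_iff_ae_notMem.1 h0] with ω hω
      exact Set.indicator_of_notMem (s := D ×ˢ B) hω (1 : Ω × E → ℝ≥0∞)
    rw [lintegral_congr_ae this, lintegral_zero]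
  have hmeas : Measurable[(F n).prod inferInstance] fun z : Ω × E ↦
      Φ z * ENNReal.ofReal (q n z.1 z.2) :=
    hΦ.mul (H.measurable_density n hn).ennreal_ofReal
  have hsection := (@Measurable.lintegral_prod_right' Ω E (F n) _ ν _ _ hmeas).mono (F.le n) le_rfl
  filter_upwards [(lintegral_eq_zero_iff hsection).1 hzero] with ω hω hωD
  have hsec := (lintegral_eq_zero_iff
    (hmeas.comp (@measurable_prodMk_left Ω E (F n) _ ω))).1 hω
  filter_upwards [hsec] with y hy hyB
  have hyΦ : Φ (ω, y) = 1 := Set.indicator_of_mem (Set.mk_mem_prod hωD hyB) _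
  simp only [Function.comp_apply, hyΦ, one_mul, Pi.zero_apply, ENNReal.ofReal_eq_zero] at hy
  exact le_antisymm hy (H.density_nonneg n ω y)

lemma stepAvg_congr {γ : ℕ → ℝ} {N : ℕ} {u v : ℕ → ℝ} (h : ∀ k, N ≤ k → u k = v k) (n : ℕ) :
    stepAvg γ N u n = stepAvg γ N v n := by
  rw [stepAvg, stepAvg, Finset.sum_congr rfl fun k hk ↦ by rw [h k (Finset.mem_Ico.1 hk).1]]

/-- `natFilt X` bundled as a `Filtration`. -/
abbrev natFiltration {Ω : Type*} [mΩ : MeasurableSpace Ω] {d : ℕ} {X : ℕ → Ω → Space d}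
    (hX : ∀ n, Measurable (X n)) : Filtration ℕ mΩ where
  seq := natFilt X
  mono' _ _ hmn := iSup₂_le fun i hi ↦ le_iSup₂_of_le i
    (Finset.Icc_subset_Icc_right hmn hi) le_rfl
  le' _ := iSup₂_le fun i _ ↦ (hX i).comap_le

lemma measurable_natFilt_succ {Ω : Type*} {d : ℕ} (X : ℕ → Ω → Space d) (n : ℕ) :
    Measurable[natFilt X (n + 1)] (X (n + 1)) :=
  measurable_iff_comap_le.2 (le_iSup₂_of_le (n + 1) (by simp) le_rfl)

variable {d k n : ℕ}

/-- A run of the algorithm: the samples `X n`, the unnormalized estimates `g n` and the proposal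
densities `q n`. -/
structure IsRun {Ω : Type*} [MeasurableSpace Ω] (S : Setting d) (μ : Measure Ω)
    (X : ℕ → Ω → Space d) (g q : ℕ → Ω → Space d → ℝ) : Prop where
  measurable_sample : ∀ n, Measurable (X n)
  g_zero : ∀ ω x, g 0 ω x = 0
  g_succ : ∀ n ω x, g (n + 1) ω x = (1 - S.γ (n + 1)) * g n ω x + S.γ (n + 1) *
    ((S.f (X (n + 1) ω) / q n ω (X (n + 1) ω)) ^ S.η * kb S.K (S.b (n + 1)) (x - X (n + 1) ω))
  q_succ : ∀ n ω x, q (n + 1) ω x =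
    (1 - S.lam (n + 1)) * (g (n + 1) ω x / ∫ y, g (n + 1) ω y) + S.lam (n + 1) * S.q₀ x
  condExp_sample : ∀ n (φ : Space d → ℝ), Continuous φ → (∃ C, ∀ x, |φ x| ≤ C) →
    μ[fun ω ↦ φ (X (n + 1) ω) | natFilt X n] =ᵐ[μ] fun ω ↦ ∫ y, φ y * q n ω y
  measurable_density : ∀ n x, Measurable[natFilt X n] fun ω ↦ q n ω x

namespace Setting

variable (S : Setting d)

lemma one_sub_lam_pos (hn : S.N ≤ n) : 0 < 1 - S.lam n := by
  linarith [S.lam_le_half n hn]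

lemma one_le_of_N_le (hn : S.N ≤ n) : 1 ≤ n := by
  have := S.two_le_N
  omega

end Setting

/-- The function `g` normalized to have integral one (identically zero if `g` has integral zero). -/
noncomputable def normalized (g : Space d → ℝ) (x : Space d) : ℝ := g x / ∫ y, g y

/-- The event that none of the points `X (n + 1), …, X k` hits the support of `f`. -/
def missEvent {Ω : Type*} (f : Space d → ℝ) (X : ℕ → Ω → Space d) (n k : ℕ) : Set Ω :=
  {ω | ∀ j ∈ Finset.Ico n k, f (X (j + 1) ω) = 0}

lemma missEvent_self {Ω : Type*} (f : Space d → ℝ) (X : ℕ → Ω → Space d) (n : ℕ) :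
    missEvent f X n n = Set.univ := by
  simp [missEvent]

lemma missEvent_succ {Ω : Type*} (f : Space d → ℝ) (X : ℕ → Ω → Space d) (hnk : n ≤ k) :
    missEvent f X n (k + 1) = missEvent f X n k ∩ X (k + 1) ⁻¹' (f ⁻¹' {0}) := by
  ext ω
  simp only [missEvent, ← Finset.insert_Ico_right_eq_Ico_add_one hnk, Finset.forall_mem_insert,
    Set.mem_inter_iff, Set.mem_ofPred_eq, Set.mem_preimage, Set.mem_singleton_iff, and_comm]

namespace IsRun

variable {S : Setting d} {Ω : Type*} [mΩ : MeasurableSpace Ω] {μ : Measure Ω}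
  {X : ℕ → Ω → Space d} {g q : ℕ → Ω → Space d → ℝ} {ω : Ω}

section Regularity

lemma continuous_g (R : IsRun S μ X g q) (n : ℕ) (ω : Ω) : Continuous (g n ω) := by
  induction n with
  | zero => simpa only [funext (R.g_zero ω)] using continuous_const
  | succ n ih =>
    have hkb : Continuous fun x ↦ kb S.K (S.b (n + 1)) (x - X (n + 1) ω) :=
      (continuous_kb S.continuous_K).comp (continuous_id.sub continuous_const)
    rw [funext (R.g_succ n ω)]
    fun_prop

lemma integrable_g (R : IsRun S μ X g q) (n : ℕ) (ω : Ω) : Integrable (g n ω) := by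
  induction n with
  | zero => exact (integrable_zero _ _ _).congr (.of_forall fun x ↦ (R.g_zero ω x).symm)
  | succ n ih =>
    have hkb : Integrable fun x ↦ kb S.K (S.b (n + 1)) (x - X (n + 1) ω) :=
      (integrable_kb S.integral_K (S.b_pos _)).comp_sub_right _
    rw [funext (R.g_succ n ω)]
    exact (ih.const_mul _).add ((hkb.const_mul _).const_mul _)

lemma exists_abs_g_le (R : IsRun S μ X g q) (n : ℕ) (ω : Ω) : ∃ C, ∀ x, |g n ω x| ≤ C := by
  induction n with
  | zero => exact ⟨0, fun x ↦ by rw [R.g_zero, abs_zero]⟩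
  | succ n ih =>
    obtain ⟨C, hC⟩ := ih
    obtain ⟨CK, hCK⟩ := S.K_bdd
    refine ⟨|1 - S.γ (n + 1)| * C + |S.γ (n + 1)| *
      (|(S.f (X (n + 1) ω) / q n ω (X (n + 1) ω)) ^ S.η| * ((S.b (n + 1) ^ d)⁻¹ * CK)),
      fun x ↦ ?_⟩
    rw [R.g_succ]
    refine (abs_add_le _ _).trans ?_
    simp only [abs_mul, abs_of_nonneg (kb_nonneg S.K_nonneg (S.b_pos (n + 1)).le _)]
    gcongr
    exacts [hC x, kb_le hCK (S.b_pos _).le _]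

lemma q_eq (R : IsRun S μ X g q) (hn : 1 ≤ n) (ω : Ω) (x : Space d) :
    q n ω x = (1 - S.lam n) * (g n ω x / ∫ y, g n ω y) + S.lam n * S.q₀ x := by
  obtain ⟨n, rfl⟩ := Nat.exists_eq_add_of_le' hn
  exact R.q_succ n ω x

lemma continuous_q (R : IsRun S μ X g q) (hn : 1 ≤ n) (ω : Ω) : Continuous (q n ω) := by
  have hg := R.continuous_g n ω
  have hq₀ := S.continuous_q₀
  rw [funext (R.q_eq hn ω)]
  fun_prop

lemma measurable_uncurry_q (R : IsRun S μ X g q) (hn : 1 ≤ n) :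
    Measurable[(natFilt X n).prod inferInstance] (Function.uncurry (q n)) :=
  (@measurable_uncurry_of_continuous_of_measurable Ω ℝ (Space d) _ _ _ _ _ _ _ _ _ (natFilt X n)
    (fun x ω ↦ q n ω x) (fun ω ↦ R.continuous_q hn ω) (R.measurable_density n)).comp
    (@measurable_swap Ω (Space d) (natFilt X n) _)

end Regularity

section Proposals

lemma ae_integral_q [IsProbabilityMeasure μ] (R : IsRun S μ X g q) (n : ℕ) :
    ∀ᵐ ω ∂μ, ∫ y, q n ω y = 1 := by
  have h := R.condExp_sample n (fun _ ↦ 1) continuous_const ⟨1, by simp⟩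
  rw [condExp_const ((natFiltration R.measurable_sample).le n)] at h
  filter_upwards [h] with ω hω
  simpa using hω.symm

lemma ae_forall_q_nonneg (R : IsRun S μ X g q) (hn : 1 ≤ n) : ∀ᵐ ω ∂μ, ∀ x, 0 ≤ q n ω x := by
  have h : ∀ᵐ ω ∂μ, ∀ i j : ℕ,
      0 ≤ ∫ y, tent (TopologicalSpace.denseSeq (Space d) i) (1 / ((j : ℝ) + 1)) y * q n ω y := by
    refine ae_all_iff.2 fun i ↦ ae_all_iff.2 fun j ↦ ?_
    set φ := tent (TopologicalSpace.denseSeq (Space d) i) (1 / ((j : ℝ) + 1))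
    have hφ : ∀ y, 0 ≤ φ y := tent_nonneg _ _
    filter_upwards [R.condExp_sample n φ (continuous_tent _ _)
      ⟨1, fun y ↦ by rw [abs_of_nonneg (hφ y)]; exact tent_le_one _ (by positivity) y⟩,
      condExp_nonneg (m := natFilt X n) (μ := μ) (f := fun ω ↦ φ (X (n + 1) ω))
        (.of_forall fun ω ↦ hφ _)] with ω hω hω0
    exact hω ▸ hω0
  filter_upwards [h] with ω hω
  exact forall_nonneg_of_forall_integral_tent_mul_nonneg
    (TopologicalSpace.denseRange_denseSeq _) (R.continuous_q hn ω) hω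

lemma isAdaptiveSampling [IsProbabilityMeasure μ] (R : IsRun S μ X g q) :
    IsAdaptiveSampling μ volume (natFiltration R.measurable_sample) X
      (fun n ω y ↦ max (q n ω y) 0) S.N where
  measurable_sample := measurable_natFilt_succ X
  measurable_density n hn := (R.measurable_uncurry_q (S.one_le_of_N_le hn)).max measurable_const
  density_nonneg _ _ _ := le_max_right _ _
  integral_density n hn := by
    filter_upwards [R.ae_integral_q n, R.ae_forall_q_nonneg (S.one_le_of_N_le hn)] with ω hω hω0
    simpa only [max_eq_left (hω0 _)] using hω
  lintegral_eq n hn Φ hΦ := by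
    have hle := (natFiltration R.measurable_sample).le n
    simp only [ENNReal.ofReal_max, ENNReal.ofReal_zero, zero_le, sup_of_le_left]
    refine @lintegral_comp_prodMk_eq Ω Ω (Space d) mΩ (natFilt X n) _ _ _ _ μ _ volume _ id
      (X (n + 1)) (fun ω y ↦ ENNReal.ofReal (q n ω y)) (measurable_id'' hle)
      (R.measurable_sample _) (R.measurable_uncurry_q (S.one_le_of_N_le hn)).ennreal_ofReal ?_ Φ hΦ
    intro s hs φ
    refine setLIntegral_comp_eq_of_condExp_ae_eq hle (R.measurable_sample _)
      (R.ae_forall_q_nonneg (S.one_le_of_N_le hn)) ?_ ?_ hs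
    · filter_upwards [R.ae_integral_q n] with ω hω
      exact .of_integral_ne_zero (by simp [hω])
    · refine R.condExp_sample n (fun y ↦ (φ y : ℝ)) (by fun_prop) ⟨nndist φ 0, fun y ↦ ?_⟩
      rw [abs_of_nonneg (NNReal.coe_nonneg _)]
      exact_mod_cast BoundedContinuousFunction.NNReal.upper_bound φ y

end Proposals

section Misses

lemma q_eq_normalized (R : IsRun S μ X g q) (hn : S.N ≤ n) (ω : Ω) (x : Space d) :
    q n ω x = (1 - S.lam n) * normalized (g n ω) x + S.lam n * S.q₀ x :=
  R.q_eq (S.one_le_of_N_le hn) ω x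

lemma measurable_normalized_g (R : IsRun S μ X g q) (hn : S.N ≤ n) (x : Space d) :
    Measurable[natFilt X n] fun ω ↦ normalized (g n ω) x := by
  have hpos := S.one_sub_lam_pos hn
  have heq : (fun ω ↦ normalized (g n ω) x) =
      fun ω ↦ (q n ω x - S.lam n * S.q₀ x) / (1 - S.lam n) := by
    ext ω
    rw [R.q_eq_normalized hn, add_sub_cancel_right, mul_div_cancel_left₀ _ hpos.ne']
  rw [heq]
  exact ((R.measurable_density n x).sub_const _).div_const _

lemma continuous_normalized_g (R : IsRun S μ X g q) (n : ℕ) (ω : Ω) :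
    Continuous (normalized (g n ω)) :=
  (R.continuous_g n ω).div_const _

lemma measurableSet_missEvent (R : IsRun S μ X g q) (hnk : n ≤ k) :
    MeasurableSet[natFilt X k] (missEvent S.f X n k) := by
  induction k, hnk using Nat.le_induction with
  | base => rw [missEvent_self]; exact MeasurableSet.univ
  | succ k hnk ih =>
    rw [missEvent_succ _ _ hnk]
    exact ((natFiltration R.measurable_sample).mono k.le_succ _ ih).inter
      (measurable_natFilt_succ X k (S.continuous_f.measurable (measurableSet_singleton 0)))

lemma normalized_g_of_mem_missEvent (R : IsRun S μ X g q) (hn : S.N ≤ n) (hnk : n ≤ k)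
    (hω : ω ∈ missEvent S.f X n k) : normalized (g k ω) = normalized (g n ω) := by
  induction k, hnk using Nat.le_induction with
  | base => rfl
  | succ k hnk ih =>
    rw [missEvent_succ _ _ hnk] at hω
    have hg : g (k + 1) ω = fun x ↦ (1 - S.γ (k + 1)) * g k ω x := by
      ext x
      rw [R.g_succ, show S.f (X (k + 1) ω) = 0 from hω.2, zero_div,
        Real.zero_rpow S.η_pos.ne', zero_mul, mul_zero, add_zero]
    have hγ : 1 - S.γ (k + 1) ≠ 0 := by linarith [S.isStepSize.half_le_one_sub (hn.trans hnk)]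
    rw [← ih hω.1]
    ext x
    rw [normalized, hg, integral_const_mul, mul_div_mul_left _ _ hγ, normalized]

variable [IsProbabilityMeasure μ]

lemma measure_inter_missEvent_eq_zero (R : IsRun S μ X g q) (hn : S.N ≤ n) (hnk : n ≤ k)
    {D : Set Ω} (hD : MeasurableSet[natFilt X n] D)
    (hle : ∀ ω ∈ D, ∀ y, 0 < S.f y → normalized (g n ω) y ≤ 0)
    (h0 : μ (D ∩ missEvent S.f X n (k + 1)) = 0) : μ (D ∩ missEvent S.f X n k) = 0 := by
  have hk := hn.trans hnk
  rw [missEvent_succ _ _ hnk, ← Set.inter_assoc] at h0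
  have hzero := R.isAdaptiveSampling.ae_eq_zero_of_measure_inter_preimage_eq_zero hk
    (((natFiltration R.measurable_sample).mono hnk _ hD).inter (R.measurableSet_missEvent hnk))
    (S.continuous_f.measurable (measurableSet_singleton 0)) h0
  rw [measure_eq_zero_iff_ae_notMem]
  filter_upwards [hzero, R.ae_integral_q k] with ω hω hint hmem
  have hq : ∀ᵐ y, q k ω y ≤ S.lam k * S.q₀ y := by
    filter_upwards [hω hmem] with y hy
    rcases (S.f_nonneg y).eq_or_lt with hf | hf
    · exact (max_eq_right_iff.1 (hy hf.symm)).trans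
        (mul_nonneg (S.lam_pos k).le (S.q₀_nonneg y))
    · rw [R.q_eq_normalized hk, R.normalized_g_of_mem_missEvent hn hnk hmem.2]
      linarith [mul_nonpos_of_nonneg_of_nonpos (S.one_sub_lam_pos hk).le (hle ω hmem.1 y hf)]
  have h1 := integral_mono_ae (.of_integral_ne_zero (by simp [hint]))
    (S.integrable_q₀.const_mul _) hq
  rw [hint, integral_const_mul, S.integral_q₀] at h1
  linarith [S.one_sub_lam_pos hk]

lemma measure_eq_zero_of_inter_missEvent (R : IsRun S μ X g q) (hn : S.N ≤ n) (hnk : n ≤ k)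
    {D : Set Ω} (hD : MeasurableSet[natFilt X n] D)
    (hle : ∀ ω ∈ D, ∀ y, 0 < S.f y → normalized (g n ω) y ≤ 0)
    (h0 : μ (D ∩ missEvent S.f X n k) = 0) : μ D = 0 := by
  induction k, hnk using Nat.le_induction with
  | base => rwa [missEvent_self, Set.inter_univ] at h0
  | succ k hnk ih => exact ih (R.measure_inter_missEvent_eq_zero hn hnk hD hle h0)

-- As long as the samples miss the support of `f`, the estimate is only rescaled, so that
-- `q k ≥ 0` is an inequality for `g n`. Such a run of misses has positive probability when `g n` is
-- nonpositive on the support of `f`, since then at least half of the mass of `q` lies outside it.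
lemma ae_mixture_nonneg (R : IsRun S μ X g q) (hn : S.N ≤ n) (hnk : n ≤ k) (x : Space d) :
    ∀ᵐ ω ∂μ, (∀ y, 0 < S.f y → normalized (g n ω) y ≤ 0) →
      0 ≤ (1 - S.lam k) * normalized (g n ω) x + S.lam k * S.q₀ x := by
  set D : Set Ω := {ω | ∀ y ∈ {y | 0 < S.f y}, normalized (g n ω) y ≤ 0} ∩
    {ω | (1 - S.lam k) * normalized (g n ω) x + S.lam k * S.q₀ x < 0}
  have hD : MeasurableSet[natFilt X n] D := by
    refine (measurableSet_forall_mem_nonpos (isOpen_lt continuous_const S.continuous_f)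
      (R.continuous_normalized_g n) (R.measurable_normalized_g hn)).inter
      ((((R.measurable_normalized_g hn x).const_mul _).add_const _) measurableSet_Iio)
  have hmiss : μ (D ∩ missEvent S.f X n k) = 0 := by
    rw [measure_eq_zero_iff_ae_notMem]
    filter_upwards [R.ae_forall_q_nonneg (S.one_le_of_N_le (hn.trans hnk))] with ω hω hmem
    have hx := hω x
    rw [R.q_eq_normalized (hn.trans hnk), R.normalized_g_of_mem_missEvent hn hnk hmem.2] at hx
    exact hx.not_gt hmem.1.2
  filter_upwards [measure_eq_zero_iff_ae_notMem.1 (R.measure_eq_zero_of_inter_missEvent hn hnk hD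
    (fun ω hω ↦ hω.1) hmiss)] with ω hω hle
  by_contra! hlt
  exact hω ⟨hle, hlt⟩

lemma ae_normalized_g_nonneg (R : IsRun S μ X g q) (hn : S.N ≤ n) :
    ∀ᵐ ω ∂μ, (∀ y, 0 < S.f y → normalized (g n ω) y ≤ 0) → ∀ x, 0 ≤ normalized (g n ω) x := by
  have h : ∀ᵐ ω ∂μ, ∀ i k, n ≤ k → (∀ y, 0 < S.f y → normalized (g n ω) y ≤ 0) →
      0 ≤ (1 - S.lam k) * normalized (g n ω) (TopologicalSpace.denseSeq (Space d) i) +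
        S.lam k * S.q₀ (TopologicalSpace.denseSeq (Space d) i) :=
    ae_all_iff.2 fun i ↦ ae_all_iff.2 fun k ↦ eventually_imp_distrib_left.2 fun hnk ↦
      R.ae_mixture_nonneg hn hnk _
  filter_upwards [h] with ω hω hle x
  refine (TopologicalSpace.denseRange_denseSeq (Space d)).induction_on x
    (isClosed_le continuous_const (R.continuous_normalized_g n ω)) fun i ↦ ?_
  set z := TopologicalSpace.denseSeq (Space d) i
  have hlim : Tendsto (fun k ↦ (1 - S.lam k) * normalized (g n ω) z + S.lam k * S.q₀ z) atTop
      (𝓝 (normalized (g n ω) z)) := by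
    simpa using (((tendsto_const_nhds (x := (1 : ℝ))).sub S.tendsto_lam).mul_const
      (normalized (g n ω) z)).add (S.tendsto_lam.mul_const (S.q₀ z))
  exact ge_of_tendsto hlim (eventually_atTop.2 ⟨n, fun k hk ↦ hω i k hk hle⟩)

lemma ae_exists_f_pos_and_g_nonneg (R : IsRun S μ X g q) (hn : S.N ≤ n) :
    ∀ᵐ ω ∂μ, 0 < ∫ y, g n ω y → ∃ x, 0 < S.f x ∧ ∀ᶠ y in 𝓝 x, 0 ≤ g n ω y := by
  filter_upwards [R.ae_normalized_g_nonneg hn] with ω hω hint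
  have hg : ∀ x, normalized (g n ω) x * (∫ y, g n ω y) = g n ω x := fun x ↦
    div_mul_cancel₀ _ hint.ne'
  by_cases hle : ∀ y, 0 < S.f y → normalized (g n ω) y ≤ 0
  · obtain ⟨x, hx⟩ := S.exists_f_pos
    exact ⟨x, hx, .of_forall fun y ↦ hg y ▸ mul_nonneg (hω hle y) hint.le⟩
  · push Not at hle
    obtain ⟨x, hx, hpos⟩ := hle
    have hgx : 0 < g n ω x := hg x ▸ mul_pos hpos hint
    exact ⟨x, hx, ((R.continuous_g n ω).tendsto x).eventually (le_mem_nhds hgx)⟩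

lemma ae_integral_g_ne_zero (R : IsRun S μ X g q) (hn : S.N ≤ n) :
    ∀ᵐ ω ∂μ, ∫ y, g n ω y ≠ 0 := by
  filter_upwards [R.ae_integral_q n] with ω hω hzero
  have hq : q n ω = fun y ↦ S.lam n * S.q₀ y := by
    ext y
    rw [R.q_eq (S.one_le_of_N_le hn), hzero, div_zero, mul_zero, zero_add]
  rw [hq, integral_const_mul, S.integral_q₀, mul_one] at hω
  linarith [S.one_sub_lam_pos hn]

end Misses

theorem ae_isTypicalPath [IsProbabilityMeasure μ] (R : IsRun S μ X g q) :
    ∀ᵐ ω ∂μ, IsTypicalPath S (fun n ↦ g n ω) (fun n ↦ q n ω) (fun n ↦ X n ω) := by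
  have hq : ∀ᵐ ω ∂μ, ∀ n, S.N ≤ n → ∀ x, 0 ≤ q n ω x :=
    ae_all_iff.2 fun n ↦ eventually_imp_distrib_left.2 fun hn ↦
      R.ae_forall_q_nonneg (S.one_le_of_N_le hn)
  have hint : ∀ᵐ ω ∂μ, ∀ n, S.N ≤ n → ∫ y, g n ω y ≠ 0 :=
    ae_all_iff.2 fun n ↦ eventually_imp_distrib_left.2 R.ae_integral_g_ne_zero
  have hpos : ∀ᵐ ω ∂μ, ∀ n, S.N ≤ n → 0 < ∫ y, g n ω y →
      ∃ x, 0 < S.f x ∧ ∀ᶠ y in 𝓝 x, 0 ≤ g n ω y :=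
    ae_all_iff.2 fun n ↦ eventually_imp_distrib_left.2 R.ae_exists_f_pos_and_g_nonneg
  filter_upwards [hq, hint, hpos, R.isAdaptiveSampling.ae_eventually_weight_le,
    R.isAdaptiveSampling.ae_eventually_bump_ge] with ω hq hint hpos hweight hbump
  have hcongr : ∀ (Φ : ℕ → (Space d → ℝ) → ℝ) (n : ℕ),
      stepAvg S.γ S.N (fun k ↦ Φ k fun y ↦ max (q k ω y) 0) n =
        stepAvg S.γ S.N (fun k ↦ Φ k (q k ω)) n := fun Φ ↦
    stepAvg_congr fun k hk ↦ congrArg (Φ k) (funext fun y ↦ max_eq_left (hq k hk y))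
  obtain ⟨C, hC⟩ := R.exists_abs_g_le S.N ω
  exact
    { g_succ := fun n _ x ↦ R.g_succ n ω x
      q_eq := fun n hn x ↦ R.q_eq (S.one_le_of_N_le hn) ω x
      q_nonneg := hq
      integral_g_ne_zero := hint
      continuous_g := fun n _ ↦ R.continuous_g n ω
      integrable_g := fun n _ ↦ R.integrable_g n ω
      exists_neg_le := ⟨max C 1, by positivity, fun x ↦
        (neg_le_neg (le_max_left C 1)).trans (neg_le_of_abs_le (hC x))⟩
      exists_f_pos_and_g_nonneg := hpos
      eventually_weight_le := fun ε hε ↦ (hweight ε hε).mono fun n hn ↦ by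
        have hsample := hcongr (fun k p ↦ S.weight p k (X (k + 1) ω)) n
        have hmean := hcongr (fun k p ↦ ∫ y, S.weight p k y * p y) n
        rwa [hsample, hmean] at hn
      eventually_bump_ge := fun r ε hε ↦ (hbump r ε hε).mono fun n hn x hx ↦ by
        have hsample := hcongr (fun k p ↦ S.bump p k x (X (k + 1) ω)) n
        have hmean := hcongr (fun k p ↦ S.meanBump p k x) n
        have := hn x hx
        rwa [Setting.meanEstimate, hsample, hmean] at this }

end IsRun

end Run

/-! ### Rates, and infima over compact sets -/

section Rates

variable {d : ℕ} {η Cγ : ℝ} {γ b lam : ℕ → ℝ}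

lemma tendsto_mul_sq_mul_log_div (hη : η < 1 / 2) (hb : ∀ n, 0 < b n) (hlam : ∀ n, 0 < lam n)
    (hb0 : Tendsto b atTop (𝓝 0)) (hlam0 : Tendsto lam atTop (𝓝 0))
    (h : Tendsto (fun n : ℕ ↦ (n : ℝ) * γ n ^ 2 * Real.log n /
      (lam n ^ (2 * (1 - η)) * b n ^ (2 * (d : ℝ) * (1 - η)))) atTop (𝓝 0)) :
    Tendsto (fun n : ℕ ↦ (n : ℝ) * γ n ^ 2 * Real.log n / (lam n * b n ^ d)) atTop (𝓝 0) := by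
  refine squeeze_zero' (.of_forall fun n ↦ ?_) ?_ h
  · have := hlam n
    have := hb n
    have := Real.log_natCast_nonneg n
    positivity
  · filter_upwards [hb0.eventually (ge_mem_nhds one_pos), hlam0.eventually (ge_mem_nhds one_pos)]
      with n hb1 hlam1
    have hlamn := hlam n
    have hbn := hb n
    have := Real.log_natCast_nonneg n
    have := d.cast_nonneg (α := ℝ)
    gcongr
    · exact Real.rpow_le_self_of_le_one hlamn.le hlam1 (by linarith)
    · rw [← Real.rpow_natCast]
      exact Real.rpow_le_rpow_of_exponent_ge hbn hb1 (by nlinarith)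

lemma tendsto_mul_log_div (hγ : ∀ n, 0 < γ n) (hb : ∀ n, 0 < b n) (hlam : ∀ n, 0 < lam n)
    (hinv : ∀ n : ℕ, 1 ≤ n → (n : ℝ)⁻¹ ≤ Cγ * γ n)
    (h : Tendsto (fun n : ℕ ↦ (n : ℝ) * γ n ^ 2 * Real.log n / (lam n * b n ^ d)) atTop (𝓝 0)) :
    Tendsto (fun n : ℕ ↦ γ n * Real.log n / (lam n * b n ^ d)) atTop (𝓝 0) := by
  have hlim := h.const_mul Cγ
  rw [mul_zero] at hlim
  have hγlog : ∀ n : ℕ, 0 ≤ γ n * Real.log n := fun n ↦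
    mul_nonneg (hγ n).le (Real.log_natCast_nonneg n)
  have hden : ∀ n, 0 < lam n * b n ^ d := fun n ↦ mul_pos (hlam n) (pow_pos (hb n) d)
  refine squeeze_zero' (.of_forall fun n ↦ div_nonneg (hγlog n) (hden n).le) ?_ hlim
  filter_upwards [eventually_ge_atTop 1] with n hn
  have hone : 1 ≤ n * (Cγ * γ n) :=
    (inv_le_iff_one_le_mul₀' (by exact_mod_cast hn)).1 (hinv n hn)
  rw [← mul_div_assoc]
  refine div_le_div_of_nonneg_right ?_ (hden n).le
  calc γ n * Real.log n ≤ γ n * Real.log n * (n * (Cγ * γ n)) :=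
        le_mul_of_one_le_right (hγlog n) hone
    _ = Cγ * (n * γ n ^ 2 * Real.log n) := by ring

lemma eventually_inv_natCast_le (hγ : ∀ n, 0 < γ n) (hb : ∀ n, 0 < b n) (hlam : ∀ n, 0 < lam n)
    (hinv : ∀ n : ℕ, 1 ≤ n → (n : ℝ)⁻¹ ≤ Cγ * γ n)
    (h : Tendsto (fun n : ℕ ↦ γ n * Real.log n / (lam n * b n ^ d)) atTop (𝓝 0)) :
    ∀ᶠ n : ℕ in atTop, (n : ℝ)⁻¹ ≤ lam n * b n ^ d := by
  have hlog : Tendsto (fun n : ℕ ↦ Real.log n) atTop atTop :=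
    Real.tendsto_log_atTop.comp tendsto_natCast_atTop_atTop
  filter_upwards [h.eventually (ge_mem_nhds one_pos), eventually_ge_atTop 1,
    hlog.eventually_ge_atTop Cγ] with n hrate hn hCγ
  rw [div_le_one (mul_pos (hlam n) (pow_pos (hb n) d))] at hrate
  calc (n : ℝ)⁻¹ ≤ Cγ * γ n := hinv n hn
    _ ≤ Real.log n * γ n := mul_le_mul_of_nonneg_right hCγ (hγ n).le
    _ ≤ lam n * b n ^ d := by rwa [mul_comm]

lemma not_summable_of_inv_natCast_le (hinv : ∀ n : ℕ, 1 ≤ n → (n : ℝ)⁻¹ ≤ Cγ * γ n) :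
    ¬ Summable γ := fun h ↦
  Real.not_summable_natCast_inv <| .of_norm_bounded_eventually_nat (h.mul_left Cγ) <| by
    filter_upwards [eventually_ge_atTop 1] with n hn
    rw [Real.norm_of_nonneg (by positivity)]
    exact hinv n hn

lemma exists_isStepSize (hγ : ∀ n, 0 < γ n) (hγ0 : Tendsto γ atTop (𝓝 0))
    (hb : ∀ n, 0 < b n) (hb0 : Tendsto b atTop (𝓝 0))
    (hlam : ∀ n, 0 < lam n) (hlam0 : Tendsto lam atTop (𝓝 0))
    (hinv : ∃ Cγ, ∀ n : ℕ, 1 ≤ n → (n : ℝ)⁻¹ ≤ Cγ * γ n)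
    (hsub : ∀ᶠ n in atTop, γ n - γ (n + 1) ≤ γ n * γ (n + 1))
    (h : Tendsto (fun n : ℕ ↦ γ n * Real.log n / (lam n * b n ^ d)) atTop (𝓝 0)) :
    ∃ N, 2 ≤ N ∧ IsStepSize γ N ∧ (∀ n, N ≤ n → b n ≤ 1) ∧ (∀ n, N ≤ n → lam n ≤ 1 / 2) ∧
      ∀ n : ℕ, N ≤ n → (n : ℝ)⁻¹ ≤ lam n * b n ^ d := by
  obtain ⟨Cγ, hinv⟩ := hinv
  obtain ⟨N, hN⟩ := eventually_atTop.1 <| (eventually_ge_atTop 2).and <|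
    (hγ0.eventually (ge_mem_nhds one_half_pos)).and <| hsub.and <|
    (hb0.eventually (ge_mem_nhds one_pos)).and <|
    (hlam0.eventually (ge_mem_nhds one_half_pos)).and <|
    eventually_inv_natCast_le hγ hb hlam hinv h
  choose h2 hhalf hsub' hb1 hlam1 hlow using hN
  exact ⟨N, h2 N le_rfl, ⟨hγ, hhalf, hsub', hγ0, not_summable_of_inv_natCast_le hinv⟩,
    hb1, hlam1, hlow⟩

end Rates

-- For `x ∉ A` the infimum over the empty type of proofs of `x ∈ A` is `0` by convention, so the
-- iterated infimum is nonpositive and the limit inferior is not a junk value.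
lemma liminf_biInf_nonneg {α ι : Type*} {l : Filter ι} [l.NeBot] {A : Set α} (hA : A ≠ Set.univ)
    {u : ι → α → ℝ} (h : ∀ ε > 0, ∀ᶠ n in l, ∀ x ∈ A, -ε ≤ u n x) :
    0 ≤ liminf (fun n ↦ ⨅ x ∈ A, u n x) l := by
  obtain ⟨x, hx⟩ := (Set.ne_univ_iff_exists_notMem A).1 hA
  have hupper : ∀ n, ⨅ x ∈ A, u n x ≤ 0 := fun n ↦ by
    by_cases hbdd : BddBelow (Set.range fun x ↦ ⨅ _ : x ∈ A, u n x)
    · have : IsEmpty (x ∈ A) := ⟨hx⟩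
      exact (ciInf_le hbdd x).trans_eq (Real.iInf_of_isEmpty _)
    · exact (Real.iInf_of_not_bddBelow hbdd).le
  have hcobdd : IsCoboundedUnder (· ≥ ·) l fun n ↦ ⨅ x ∈ A, u n x :=
    (isBoundedUnder_of ⟨0, hupper⟩ : IsBoundedUnder (· ≤ ·) l _).isCoboundedUnder_ge
  refine le_of_forall_pos_le_add fun ε hε ↦ ?_
  have hlower : ∀ᶠ n in l, -ε ≤ ⨅ x ∈ A, u n x := by
    filter_upwards [h ε hε] with n hn
    exact Real.le_iInf (fun x ↦ Real.le_iInf (fun hx ↦ hn x hx) (by linarith)) (by linarith)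
  linarith [le_liminf_of_le hcobdd hlower]

end Midas

theorem midas_g_liminf_lower_bound_general
    {Ω : Type*} [MeasurableSpace Ω] (μ : Measure Ω) [IsProbabilityMeasure μ]
    {d : ℕ} (hd : 1 ≤ d) {η : ℝ} (hη : 0 < η) (hη1 : η < 1)
    (f q0 K : EuclideanSpace ℝ (Fin d) → ℝ)
    (γ b lam : ℕ → ℝ)
    (X : ℕ → Ω → EuclideanSpace ℝ (Fin d))
    (w : ℕ → Ω → ℝ)
    (g q : ℕ → Ω → EuclideanSpace ℝ (Fin d) → ℝ)
    (hf0 : ∀ x, 0 ≤ f x) (hfint1 : ∫ x, f x = 1)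
    (hK0 : ∀ x, 0 ≤ K x) (hKint1 : ∫ x, K x = 1)
    (hγpos : ∀ n, 0 < γ n) (hbpos : ∀ n, 0 < b n) (hlampos : ∀ n, 0 < lam n)
    (hX : ∀ n, Measurable (X n))
    (hg0 : ∀ ω x, g 0 ω x = 0)
    (hw : ∀ n ω, w (n + 1) ω = f (X (n + 1) ω) / q n ω (X (n + 1) ω))
    (hgrec : ∀ n ω x, g (n + 1) ω x =
      (1 - γ (n + 1)) * g n ω x
        + γ (n + 1) * w (n + 1) ω ^ η * kb K (b (n + 1)) (x - X (n + 1) ω))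
    (hqrec : ∀ n ω x, q (n + 1) ω x =
      (1 - lam (n + 1)) * (g (n + 1) ω x / ∫ y, g (n + 1) ω y) + lam (n + 1) * q0 x)
    (hpolicy : ∀ n (φ : EuclideanSpace ℝ (Fin d) → ℝ), Continuous φ → (∃ C, ∀ x, |φ x| ≤ C) →
      μ[fun ω ↦ φ (X (n + 1) ω) | natFilt X n] =ᵐ[μ] fun ω ↦ ∫ y, φ y * q n ω y)
    (hadapt : ∀ n x, Measurable[natFilt X n] fun ω ↦ q n ω x)
    (hfbdd : ∃ C, ∀ x, f x ≤ C) (hfcont : Continuous f)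
    (hq00 : ∀ x, 0 ≤ q0 x) (hq0cont : Continuous q0) (hq0int1 : ∫ x, q0 x = 1)
    (hfq0 : ∃ c > (0 : ℝ), ∀ x, c * f x ≤ q0 x)
    (hKbdd : ∃ C, ∀ x, K x ≤ C) (hKlip : ∃ L : ℝ≥0, LipschitzWith L K) (hKpos : 0 < K 0)
    (hγ0 : Tendsto γ atTop (𝓝 0))
    (hbanti : Antitone b) (hb0 : Tendsto b atTop (𝓝 0))
    (hlamanti : Antitone lam) (hlam0 : Tendsto lam atTop (𝓝 0))
    (hinv : ∃ Cγ, ∀ n : ℕ, 1 ≤ n → (n : ℝ)⁻¹ ≤ Cγ * γ n)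
    (hsub : ∀ᶠ n in atTop, γ n - γ (n + 1) ≤ γ n * γ (n + 1))
    (hrate : Tendsto (fun n : ℕ ↦ γ n * Real.log n / (lam n * b n ^ d)) atTop (𝓝 0)) :
    ∀ᵐ ω ∂μ, ∀ A, IsCompact A → ∀ ε > 0, ∀ᶠ n in atTop, ∀ x ∈ A, -ε ≤ g n ω x - f x := by
  obtain ⟨c, hc, hcf⟩ := hfq0
  obtain ⟨N, hN, hγN, hbN, hlamN, hlow⟩ :=
    Midas.exists_isStepSize hγpos hγ0 hbpos hb0 hlampos hlam0 hinv hsub hrate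
  let S : Midas.Setting d :=
    { η, f, q₀ := q0, K, γ, b, lam, c := c / 2, N
      one_le_dim := hd, η_pos := hη, η_lt_one := hη1
      f_nonneg := hf0, f_bdd := hfbdd, continuous_f := hfcont, integral_f := hfint1
      q₀_nonneg := hq00, continuous_q₀ := hq0cont, integral_q₀ := hq0int1
      K_nonneg := hK0, K_bdd := hKbdd, K_lipschitz := hKlip, integral_K := hKint1
      K_zero_pos := hKpos, isStepSize := hγN
      b_pos := hbpos, b_antitone := hbanti, tendsto_b := hb0, b_le_one := hbN
      lam_pos := hlampos, lam_antitone := hlamanti, tendsto_lam := hlam0, lam_le_half := hlamN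
      c_pos := half_pos hc, two_mul_c_mul_f_le := fun x ↦ by linarith [hcf x]
      two_le_N := hN, inv_le := hlow, tendsto_rate := hrate }
  have R : Midas.IsRun S μ X g q :=
    { measurable_sample := hX, g_zero := hg0, q_succ := hqrec, condExp_sample := hpolicy
      measurable_density := hadapt
      g_succ := fun n ω x ↦ by rw [hgrec, hw, mul_assoc] }
  filter_upwards [R.ae_isTypicalPath] with ω P A hA ε hε
  filter_upwards [P.eventually_f_sub_le_g hA (ε := ε / 3) (by positivity)] with n hn x hx
  linarith [hn x hx]

theorem midas_g_liminf_lower_bound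
    {Ω : Type*} [MeasurableSpace Ω] (μ : Measure Ω) [IsProbabilityMeasure μ]
    {d : ℕ} (hd : 1 ≤ d) {η : ℝ} (hη : 0 < η) (hη1 : η < 1)
    (f q0 K : EuclideanSpace ℝ (Fin d) → ℝ)
    (γ b lam : ℕ → ℝ)
    (X : ℕ → Ω → EuclideanSpace ℝ (Fin d))
    (w : ℕ → Ω → ℝ)
    (g q : ℕ → Ω → EuclideanSpace ℝ (Fin d) → ℝ)
    (hf0 : ∀ x, 0 ≤ f x) (hfint1 : (∫ x, f x) = 1)
    (hK0 : ∀ x, 0 ≤ K x) (hKint1 : (∫ x, K x) = 1)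
    (hγpos : ∀ n, 0 < γ n) (hbpos : ∀ n, 0 < b n) (hlampos : ∀ n, 0 < lam n)
    (hX : ∀ n, Measurable (X n))
    (hqmeas : ∀ n, Measurable (Function.uncurry (q n)))
    (hg0 : ∀ (ω : Ω) x, g 0 ω x = 0)
    (hw : ∀ n (ω : Ω), w (n+1) ω = f (X (n+1) ω) / q n ω (X (n+1) ω))
    (hgrec : ∀ n (ω : Ω) x, g (n+1) ω x
      = (1 - γ (n+1)) * g n ω x
        + γ (n+1) * w (n+1) ω ^ η * kb K (b (n+1)) (x - X (n+1) ω))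
    (hqrec : ∀ n (ω : Ω) x, q (n+1) ω x
      = (1 - lam (n+1)) * (g (n+1) ω x / (∫ y, g (n+1) ω y)) + lam (n+1) * q0 x)
    (hpolicy : ∀ n (φ : EuclideanSpace ℝ (Fin d) → ℝ), Continuous φ →
      (∃ C, ∀ x, |φ x| ≤ C) →
      (μ[fun ω => φ (X (n+1) ω) | natFilt X n]) =ᵐ[μ] (fun ω => ∫ y, φ y * q n ω y))
    (hadapt : ∀ n x, Measurable[natFilt X n] fun ω => q n ω x)
    (hfbdd : ∃ C, ∀ x, f x ≤ C) (hfcont : Continuous f)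
    (hfInt : Integrable f)
    (hq00 : ∀ x, 0 ≤ q0 x) (hq0bdd : ∃ C, ∀ x, q0 x ≤ C) (hq0cont : Continuous q0)
    (hq0Int : Integrable q0) (hq0int1 : (∫ x, q0 x) = 1)
    (hftail : ∃ r > (0:ℝ), ∃ Cf > (0:ℝ), ∀ t : ℝ, 0 < t →
      (∫ x in {x : EuclideanSpace ℝ (Fin d) | t < ‖x‖}, f x) ≤ Cf * t ^ (-r))
    (hfq0 : ∃ c > (0:ℝ), ∀ x, c * f x ≤ q0 x)
    (hKbdd : ∃ C, ∀ x, K x ≤ C) (hKlip : ∃ L : NNReal, LipschitzWith L K)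
    (hKpos : 0 < K 0)
    (hKtail : ∃ rK > (0:ℝ), ∃ CK > (0:ℝ), ∀ x,
      (1 + ‖x‖ ^ ((d : ℝ) + rK)) * K x ≤ CK)
    (hγanti : Antitone γ) (hγ0 : Tendsto γ atTop (nhds 0))
    (hbanti : Antitone b) (hb0 : Tendsto b atTop (nhds 0))
    (hlamanti : Antitone lam) (hlam0 : Tendsto lam atTop (nhds 0))
    (hγrate : ∃ Cγ > (0:ℝ), ∃ nγ : ℕ, 1 ≤ nγ ∧
      (∀ n : ℕ, 1 ≤ n → ((n : ℝ))⁻¹ ≤ Cγ * γ n) ∧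
      (∀ n : ℕ, nγ ≤ n → γ n - γ (n+1) ≤ γ n * γ (n+1)))
    (hγsq : Summable fun n => γ n ^ 2)
    (hrate1 : 1/2 ≤ η → Tendsto
      (fun n : ℕ => (n : ℝ) * γ n ^ 2 * Real.log n / (lam n * b n ^ d))
      atTop (nhds 0))
    (hrate2 : η < 1/2 → Tendsto
      (fun n : ℕ => (n : ℝ) * γ n ^ 2 * Real.log n
        / (lam n ^ (2 * (1 - η)) * b n ^ (2 * (d : ℝ) * (1 - η))))
      atTop (nhds 0))
    :
    ∀ A : Set (EuclideanSpace ℝ (Fin d)), IsCompact A →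
      ∀ᵐ ω ∂μ, 0 ≤ Filter.liminf (fun n : ℕ => ⨅ x ∈ A, (g n ω x - f x)) atTop := by
  obtain ⟨Cγ, -, nγ, -, hinv, hsub⟩ := hγrate
  have hrate := Midas.tendsto_mul_log_div hγpos hbpos hlampos hinv <|
    (le_or_gt (1 / 2) η).elim hrate1 fun h ↦
      Midas.tendsto_mul_sq_mul_log_div h hbpos hlampos hb0 hlam0 (hrate2 h)
  have : Nonempty (Fin d) := ⟨⟨0, hd⟩⟩
  exact fun A hA ↦ (midas_g_liminf_lower_bound_general μ hd hη hη1 f q0 K γ b lam X w g q hf0 hfint1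
    hK0 hKint1 hγpos hbpos hlampos hX hg0 hw hgrec hqrec hpolicy hadapt hfbdd hfcont hq00 hq0cont
    hq0int1 hfq0 hKbdd hKlip hKpos hγ0 hbanti hb0 hlamanti hlam0 ⟨Cγ, hinv⟩
    (eventually_atTop.2 ⟨nγ, hsub⟩) hrate).mono fun ω h ↦
      Midas.liminf_biInf_nonneg hA.ne_univ (h A hA)
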